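/- arXiv:2211.09341 — 3 statements merged into one kernel-verified Lean document; each statement's English description precedes it below -/
import Mathlib

section
/- With a family (g_{x,σ}) as in the context, for (x, y) a uniformly random ordered pair of distinct points of F_q^n, E_{x,y}[ Σ_{σ,τ ∈ F_q, (x,σ) and (y,τ) excellent} μ_{x,y}(ℱ_{x,σ} ∩ ℱ_{y,τ})² ] ≥ ε/4 − 1/q. -/
/-!
The proof counts accepting plane pairs `(C₁, C₂)` together with ordered pairs `x ≠ y` of points of
the plane `C₁ ∩ C₂`. Every two points of `F^n` lie on the same number `nPairs` of plane pairs, so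
the accepting ones make up a fraction `ε` of the total. Call an accepting pair *explained* at `x`
if, for `σ = T C₁ x`, the pair `(x, σ)` is excellent and both cubes belong to `ℱ_{x,σ}`.

*Explained at both points.* Such pairs are plane pairs inside one of the sets
`ℱ_{x,σ} ∩ ℱ_{y,τ}`. The planes and the cubes through a line form a 2-design, so the incidences
between them expand (`design_variance`) and a set of cubes of density `μ` on the line `xy` spans
at most `nPairs * (μ² + μ / q)` plane pairs (`pairsD_bounds`). For fixed `x, y` these sets are
disjoint, so the errors add up to at most `nPairs / q` (`card_good`); this is the term `1/q` of the
theorem.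

*Unexplained at one point.* Two accepting cubes have the same value at `x`, so the number of pairs
not explained at `x` is at most the sum over `σ` of `energy 𝒞_{x,σ} - energy ℱ_{x,σ}`, the second
term being present only if `(x, σ)` is excellent; here `energy` counts plane pairs with a second
point (`sum_unexpl`). Lines and cubes through `x` form a 2-design as well, so a set of density `m`
has normalized energy `m² + O(m / q)` (`energy_bounds`). This leaves three cases (`loss_le`).

* If `m < ε / 5`, the energy is about `m² ≤ (ε / 5) m`, and the densities `m` sum to `1`.
* If (ii) fails, then a pair of cubes through a random line at `x` lies in `𝒞_{x,σ}` and disagrees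
  on the line with probability at least about `γ m² / 2` (`not_sharp`). Entries that differ on a
  line coincide in at most `d` of its points, so these probabilities, averaged over `x` and summed
  over `σ`, are at most `d / q` (`sum_disag`), and this case costs `O(d⁴ / q)`.
* If `(x, σ)` is excellent, then `ℱ_{x,σ}` is so large in `𝒞_{x,σ}` that the loss is at most `14%`
  of its energy. Plane pairs inside `ℱ_{x,σ}` accept, so these energies sum to at most a fraction
  `ε` of the total (`sum_energy_polyF`).

Since `d⁴ / q ≤ 10⁻⁷ ε`, the three cases together amount to at most `(3/8) ε` (`total_unexpl`).
Discarding the pairs unexplained at `x` or at `y` leaves at least `(1 - 2 * 3/8) ε = ε / 4`.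
-/

open MvPolynomial

/-- A cube: a 3-dimensional affine subspace of `F^n`. -/
def IsCube (F : Type) [Field F] [Fintype F] (n : ℕ) (C : AffineSubspace F (Fin n → F)) : Prop :=
  (C : Set (Fin n → F)).Nonempty ∧ Module.finrank F C.direction = 3

/-- A line: a 1-dimensional affine subspace of `F^n`. -/
def IsLine (F : Type) [Field F] [Fintype F] (n : ℕ) (ℓ : AffineSubspace F (Fin n → F)) : Prop :=
  (ℓ : Set (Fin n → F)).Nonempty ∧ Module.finrank F ℓ.direction = 1

/-- `𝒞_x`: cubes containing the point `x`. -/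
def cubesOn (F : Type) [Field F] [Fintype F] (n : ℕ) (x : Fin n → F) :
    Set (AffineSubspace F (Fin n → F)) :=
  {C | IsCube F n C ∧ x ∈ C}

/-- `𝒞_{x,y}`: cubes containing the points `x` and `y`. -/
def cubesOn2 (F : Type) [Field F] [Fintype F] (n : ℕ) (x y : Fin n → F) :
    Set (AffineSubspace F (Fin n → F)) :=
  {C | IsCube F n C ∧ x ∈ C ∧ y ∈ C}

/-- `𝒞_{x,σ}`: cubes containing `x` on which the table `T` gives `x` the value `σ`. -/
def cubesVal (F : Type) [Field F] [Fintype F] (n : ℕ)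
    (T : AffineSubspace F (Fin n → F) → (Fin n → F) → F) (x : Fin n → F) (σ : F) :
    Set (AffineSubspace F (Fin n → F)) :=
  {C | IsCube F n C ∧ x ∈ C ∧ T C x = σ}

/-- `μ_x(A)`: measure of `A` relative to all cubes containing `x`. -/
noncomputable def muX (F : Type) [Field F] [Fintype F] (n : ℕ) (x : Fin n → F)
    (A : Set (AffineSubspace F (Fin n → F))) : ℝ :=
  (A.ncard : ℝ) / ((cubesOn F n x).ncard : ℝ)

/-- `μ_{x,y}(A)`: measure of `A` relative to all cubes containing `x` and `y`. -/
noncomputable def muXY (F : Type) [Field F] [Fintype F] (n : ℕ) (x y : Fin n → F)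
    (A : Set (AffineSubspace F (Fin n → F))) : ℝ :=
  (A.ncard : ℝ) / ((cubesOn2 F n x y).ncard : ℝ)

/-- Two cubes intersecting in a plane (a 2-dimensional affine subspace). -/
def PlanePair (F : Type) [Field F] [Fintype F] (n : ℕ)
    (C₁ C₂ : AffineSubspace F (Fin n → F)) : Prop :=
  IsCube F n C₁ ∧ IsCube F n C₂ ∧
    ((C₁ ⊓ C₂ : AffineSubspace F (Fin n → F)) : Set (Fin n → F)).Nonempty ∧
    Module.finrank F (C₁ ⊓ C₂ : AffineSubspace F (Fin n → F)).direction = 2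

/-- `T(C₁)` and `T(C₂)` agree on `C₁ ∩ C₂`. -/
def Agrees (F : Type) [Field F] [Fintype F] (n : ℕ)
    (T : AffineSubspace F (Fin n → F) → (Fin n → F) → F)
    (C₁ C₂ : AffineSubspace F (Fin n → F)) : Prop :=
  ∀ z : Fin n → F, z ∈ C₁ → z ∈ C₂ → T C₁ z = T C₂ z

/-- `ε(T)`: the acceptance probability of the cube versus cube test. -/
noncomputable def epsT (F : Type) [Field F] [Fintype F] (n : ℕ)
    (T : AffineSubspace F (Fin n → F) → (Fin n → F) → F) : ℝ :=
  (({p : AffineSubspace F (Fin n → F) × AffineSubspace F (Fin n → F) |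
      PlanePair F n p.1 p.2 ∧ Agrees F n T p.1 p.2}).ncard : ℝ) /
  (({p : AffineSubspace F (Fin n → F) × AffineSubspace F (Fin n → F) |
      PlanePair F n p.1 p.2}).ncard : ℝ)

/-- A degree-`d` cubes table: each entry is the restriction to `C` of a polynomial of total
degree at most `d`. -/
def DegTable (F : Type) [Field F] [Fintype F] (n d : ℕ)
    (T : AffineSubspace F (Fin n → F) → (Fin n → F) → F) : Prop :=
  ∀ C : AffineSubspace F (Fin n → F), IsCube F n C →
    ∃ p : MvPolynomial (Fin n) F, p.totalDegree ≤ d ∧ ∀ z ∈ C, T C z = eval z p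

/-- `γ = 1/(1000 d³)`. -/
noncomputable def gam (d : ℕ) : ℝ := 1 / (1000 * (d : ℝ) ^ 3)

/-- `T(C₁)` and `T(C₂)` agree on the line `ℓ`. -/
def LineAgree (F : Type) [Field F] [Fintype F] (n : ℕ)
    (T : AffineSubspace F (Fin n → F) → (Fin n → F) → F)
    (C₁ C₂ ℓ : AffineSubspace F (Fin n → F)) : Prop :=
  ∀ z : Fin n → F, z ∈ ℓ → T C₁ z = T C₂ z

/-- An excellent pair `(x, σ)`: (i) `μ_x(𝒞_{x,σ}) ≥ ε/5`, and (ii) picking `C₁` uniform in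
`𝒞_{x,σ}`, a uniform line `ℓ` with `x ∈ ℓ ⊆ C₁`, and `C₂` uniform in `{C ∈ 𝒞_{x,σ} : ℓ ⊆ C}`,
the probability that `T(C₁)|_ℓ ≠ T(C₂)|_ℓ` is at most `γ`.  (The probability is written as the
sum over the uniformly weighted pairs `(C₁, ℓ)` of the conditional probability over `C₂`,
compared against `γ` times the number of pairs `(C₁, ℓ)`.) -/
def Excellent (F : Type) [Field F] [Fintype F] (n : ℕ)
    (T : AffineSubspace F (Fin n → F) → (Fin n → F) → F)
    (d : ℕ) (ε : ℝ) (x : Fin n → F) (σ : F) : Prop :=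
  ε / 5 ≤ muX F n x (cubesVal F n T x σ) ∧
  (∑ᶠ C₁ ∈ cubesVal F n T x σ,
      ∑ᶠ ℓ ∈ {ℓ : AffineSubspace F (Fin n → F) | IsLine F n ℓ ∧ x ∈ ℓ ∧ ℓ ≤ C₁},
        (({C₂ ∈ cubesVal F n T x σ | ℓ ≤ C₂ ∧ ¬ LineAgree F n T C₁ C₂ ℓ}.ncard : ℝ) /
          ({C₂ ∈ cubesVal F n T x σ | ℓ ≤ C₂}.ncard : ℝ)))
    ≤ gam d * (({p : AffineSubspace F (Fin n → F) × AffineSubspace F (Fin n → F) |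
        p.1 ∈ cubesVal F n T x σ ∧ IsLine F n p.2 ∧ x ∈ p.2 ∧ p.2 ≤ p.1}).ncard : ℝ)

/-- `ℱ_{x,σ}`: the cubes of `𝒞_{x,σ}` on which `T` coincides with the global polynomial
`g x σ`. -/
def calF (F : Type) [Field F] [Fintype F] (n : ℕ)
    (T : AffineSubspace F (Fin n → F) → (Fin n → F) → F)
    (g : (Fin n → F) → F → MvPolynomial (Fin n) F) (x : Fin n → F) (σ : F) :
    Set (AffineSubspace F (Fin n → F)) :=
  {C ∈ cubesVal F n T x σ | ∀ z : Fin n → F, z ∈ C → T C z = eval z (g x σ)}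

/-! ### Counting subspaces of a finite vector space -/

section Linear

set_option linter.unusedSectionVars false

variable {F : Type} [Field F] [Fintype F]

lemma card_submodule_finrank_one {E : Type} [AddCommGroup E] [Module F E] {N : ℕ}
    (h : Module.finrank F E = N) :
    Nat.card {W : Submodule F E // Module.finrank F W = 1}
      = ∑ i ∈ Finset.range N, (Fintype.card F) ^ i := by
  rw [← Nat.card_congr (Projectivization.equivSubmodule F E),
    Projectivization.card_of_finrank F E h, Nat.card_eq_fintype_card]

lemma card_submodule_congr {E E' : Type} [AddCommGroup E] [Module F E] [AddCommGroup E']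
    [Module F E'] [FiniteDimensional F E] [FiniteDimensional F E']
    (h : Module.finrank F E = Module.finrank F E') (k : ℕ) :
    Nat.card {W : Submodule F E // Module.finrank F W = k}
      = Nat.card {W : Submodule F E' // Module.finrank F W = k} := by
  let e := LinearEquiv.ofFinrankEq E E' h
  refine Nat.card_congr ((Submodule.orderIsoMapComap e).toEquiv.subtypeEquiv fun W => ?_)
  have : Module.finrank F (W.map (e : E →ₗ[F] E')) = Module.finrank F W :=
    LinearEquiv.finrank_map_eq e W
  change _ ↔ Module.finrank F (W.map (e : E →ₗ[F] E')) = k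
  rw [this]

/-- The correspondence theorem for quotients, on subspaces of a fixed dimension. -/
lemma card_submodule_ge {E : Type} [AddCommGroup E] [Module F E] [FiniteDimensional F E]
    (U : Submodule F E) (k : ℕ) :
    Nat.card {W : Submodule F E // U ≤ W ∧ Module.finrank F W = k + Module.finrank F U}
      = Nat.card {W : Submodule F (E ⧸ U) // Module.finrank F W = k} := by
  symm
  have key : ∀ W : Submodule F (E ⧸ U),
      Module.finrank F (W.comap U.mkQ) = Module.finrank F W + Module.finrank F U := by
    intro W
    have h := LinearMap.finrank_range_add_finrank_ker (U.mkQ.domRestrict (W.comap U.mkQ))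
    have h1 : LinearMap.range (U.mkQ.domRestrict (W.comap U.mkQ)) = W := by
      rw [LinearMap.range_domRestrict, Submodule.map_comap_eq_of_surjective U.mkQ_surjective]
    have h2 : Module.finrank F (LinearMap.ker (U.mkQ.domRestrict (W.comap U.mkQ)))
        = Module.finrank F U := by
      rw [LinearMap.ker_domRestrict, Submodule.ker_mkQ]
      exact (Submodule.comapSubtypeEquivOfLe (Submodule.le_comap_mkQ U W)).finrank_eq
    rw [h1, h2] at h
    exact h.symm
  let e : Submodule F (E ⧸ U) ≃ {W : Submodule F E // U ≤ W} :=
    (Submodule.comapMkQRelIso U).toEquiv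
  refine Nat.card_congr ((e.subtypeEquiv
    (q := fun W => Module.finrank F W.1 = k + Module.finrank F U) fun W => ?_).trans
    (Equiv.subtypeSubtypeEquivSubtypeInter (fun W => U ≤ W)
      (fun W => Module.finrank F W = k + Module.finrank F U)))
  have : Module.finrank F ((Submodule.comapMkQRelIso U) W).1
      = Module.finrank F W + Module.finrank F U := key W
  change _ ↔ Module.finrank F ((Submodule.comapMkQRelIso U) W).1 = _
  rw [this]; omega

/-- Subspaces of `E` inside `D` correspond to subspaces of the space `D`. -/
lemma card_submodule_le {E : Type} [AddCommGroup E] [Module F E]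
    (D : Submodule F E) (φ : Submodule F E → Prop) :
    Nat.card {W : Submodule F E // W ≤ D ∧ φ W}
      = Nat.card {W : Submodule F D // φ (W.map D.subtype)} := by
  symm
  let e : Submodule F D ≃ {W : Submodule F E // W ≤ D} := (Submodule.mapIic D).toEquiv
  refine Nat.card_congr ((e.subtypeEquiv
    (q := fun W => φ W.1) fun W => ?_).trans
    (Equiv.subtypeSubtypeEquivSubtypeInter (fun W => W ≤ D) φ))
  exact Iff.rfl

lemma card_submodule_le_finrank {E : Type} [AddCommGroup E] [Module F E]
    (D : Submodule F E) (k : ℕ) :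
    Nat.card {W : Submodule F E // W ≤ D ∧ Module.finrank F W = k}
      = Nat.card {W : Submodule F D // Module.finrank F W = k} := by
  rw [card_submodule_le D (fun W => Module.finrank F W = k)]
  refine Nat.card_congr (Equiv.subtypeEquivRight fun W => ?_)
  rw [LinearEquiv.finrank_eq (Submodule.equivSubtypeMap D W)]

lemma card_submodule_between {E : Type} [AddCommGroup E] [Module F E] [FiniteDimensional F E]
    {U D : Submodule F E} (hUD : U ≤ D) (k : ℕ) (hU : Module.finrank F U = k)
    (hD : Module.finrank F D = k + 2) :
    Nat.card {W : Submodule F E // U ≤ W ∧ W ≤ D ∧ Module.finrank F W = k + 1}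
      = Fintype.card F + 1 := by
  have e1 : Nat.card {W : Submodule F E // U ≤ W ∧ W ≤ D ∧ Module.finrank F W = k + 1}
      = Nat.card {W : Submodule F E // W ≤ D ∧ (U ≤ W ∧ Module.finrank F W = k + 1)} :=
    Nat.card_congr (Equiv.subtypeEquivRight fun W => by tauto)
  have hU' : Module.finrank F (U.comap D.subtype) = k := by
    rw [← hU]; exact (Submodule.comapSubtypeEquivOfLe hUD).finrank_eq
  rw [e1, card_submodule_le D (fun W => U ≤ W ∧ Module.finrank F W = k + 1)]
  have e2 : Nat.card {W : Submodule F D // U ≤ W.map D.subtype ∧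
        Module.finrank F (W.map D.subtype) = k + 1}
      = Nat.card {W : Submodule F D // U.comap D.subtype ≤ W ∧
        Module.finrank F W = 1 + Module.finrank F (U.comap D.subtype)} := by
    refine Nat.card_congr (Equiv.subtypeEquivRight fun W => ?_)
    rw [← LinearEquiv.finrank_eq (Submodule.equivSubtypeMap D W), hU', add_comm k 1]
    refine and_congr_left fun _ => ?_
    constructor
    · intro h x hx
      obtain ⟨y, hy, hyx⟩ := h hx
      rwa [← Subtype.ext hyx]
    · intro h x hx
      exact ⟨⟨x, hUD hx⟩, h hx, rfl⟩
  rw [e2, card_submodule_ge, card_submodule_finrank_one (N := 2)]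
  · simp [Finset.sum_range_succ, add_comm]
  · have := Submodule.finrank_quotient_add_finrank (U.comap D.subtype)
    omega

end Linear

/-! ### Counting lines, planes and cubes -/

section Geometry

open scoped Classical

set_option linter.unusedSectionVars false

variable {F : Type} [Field F] [Fintype F] {n : ℕ}

/-- The affine subspaces of `F^n`. -/
abbrev AS (F : Type) [Field F] (n : ℕ) := AffineSubspace F (Fin n → F)

noncomputable instance instFintypeAS : Fintype (AS F n) :=
  haveI : Finite (AS F n) := Finite.of_injective (fun S : AS F n => (S : Set (Fin n → F)))
    SetLike.coe_injective
  Fintype.ofFinite _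

/-- A plane: a 2-dimensional affine subspace of `F^n`. -/
def IsPl (P : AS F n) : Prop :=
  (P : Set (Fin n → F)).Nonempty ∧ Module.finrank F P.direction = 2

/-- The number of cubes through a point. -/
noncomputable def nA (F : Type) [Field F] [Fintype F] (n : ℕ) : ℕ :=
  Nat.card {W : Submodule F (Fin n → F) // Module.finrank F W = 3}

/-- The number of cubes through a line (equivalently, of 2-dimensional subspaces of
`F^(n-1)`). -/
noncomputable def nB1 (F : Type) [Field F] [Fintype F] (n : ℕ) : ℕ :=
  Nat.card {W : Submodule F (Fin (n - 1) → F) // Module.finrank F W = 2}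

/-- The number of cubes through a plane. -/
noncomputable def nB2 (F : Type) [Field F] [Fintype F] (n : ℕ) : ℕ :=
  ∑ i ∈ Finset.range (n - 2), (Fintype.card F) ^ i

/-- The number of lines through a point. -/
noncomputable def nL (F : Type) [Field F] [Fintype F] (n : ℕ) : ℕ :=
  ∑ i ∈ Finset.range n, (Fintype.card F) ^ i

/-- The number of planes through a line. -/
noncomputable def nP1 (F : Type) [Field F] [Fintype F] (n : ℕ) : ℕ :=
  ∑ i ∈ Finset.range (n - 1), (Fintype.card F) ^ i

lemma le_iff_direction_le {S T : AS F n} {x : Fin n → F} (hS : x ∈ S) (hT : x ∈ T) :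
    S ≤ T ↔ S.direction ≤ T.direction := by
  rw [← AffineSubspace.mk'_eq hS, ← AffineSubspace.mk'_eq hT, AffineSubspace.mk'_le_mk'_iff]
  simp

lemma eq_of_direction {S T : AS F n} {x : Fin n → F} (hS : x ∈ S) (hT : x ∈ T)
    (h : S.direction = T.direction) : S = T := by
  rw [← AffineSubspace.mk'_eq hS, ← AffineSubspace.mk'_eq hT, h]

/-- Affine subspaces through a fixed point are counted through their directions. -/
lemma card_through (x : Fin n → F) (φ : Submodule F (Fin n → F) → Prop) :
    (Finset.univ.filter fun T : AS F n => x ∈ T ∧ φ T.direction).card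
      = Nat.card {W : Submodule F (Fin n → F) // φ W} := by
  rw [← Fintype.card_subtype, ← Nat.card_eq_fintype_card]
  refine Nat.card_congr
    { toFun := fun T => ⟨T.1.direction, T.2.2⟩
      invFun := fun W => ⟨AffineSubspace.mk' x W.1, AffineSubspace.self_mem_mk' _ _, by
        rw [AffineSubspace.direction_mk']; exact W.2⟩
      left_inv := fun T => Subtype.ext (AffineSubspace.mk'_eq T.2.1)
      right_inv := fun W => Subtype.ext (AffineSubspace.direction_mk' _ _) }

lemma card_filter_through (x : Fin n → F) (p : AS F n → Prop) [DecidablePred p]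
    (φ : Submodule F (Fin n → F) → Prop) (h : ∀ T : AS F n, p T ↔ x ∈ T ∧ φ T.direction) :
    (Finset.univ.filter p).card = Nat.card {W : Submodule F (Fin n → F) // φ W} := by
  rw [← card_through x φ]
  exact congrArg _ (Finset.ext fun T => by simp [h T])

lemma card_points (S : AS F n) (hS : (S : Set (Fin n → F)).Nonempty) :
    (Finset.univ.filter fun z => z ∈ S).card
      = (Fintype.card F) ^ Module.finrank F S.direction := by
  obtain ⟨x, hx⟩ := hS
  rw [← Module.card_eq_pow_finrank (K := F) (V := S.direction), ← Fintype.card_subtype]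
  refine Fintype.card_congr
    { toFun := fun z => ⟨z.1 -ᵥ x, AffineSubspace.vsub_mem_direction z.2 hx⟩
      invFun := fun v => ⟨v.1 +ᵥ x, AffineSubspace.vadd_mem_of_mem_direction v.2 hx⟩
      left_inv := fun z => Subtype.ext (by simp)
      right_inv := fun v => Subtype.ext (by simp) }

lemma card_cubes_point (x : Fin n → F) :
    (Finset.univ.filter fun C : AS F n => IsCube F n C ∧ x ∈ C).card = nA F n := by
  refine card_filter_through x _ (fun W => Module.finrank F W = 3) fun T => ?_
  exact ⟨fun h => ⟨h.2, h.1.2⟩, fun h => ⟨⟨⟨x, h.1⟩, h.2⟩, h.1⟩⟩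

lemma card_lines_point (x : Fin n → F) :
    (Finset.univ.filter fun C : AS F n => IsLine F n C ∧ x ∈ C).card = nL F n := by
  have := card_submodule_finrank_one (F := F) (E := Fin n → F) (N := n) (by simp)
  rw [nL, ← this]
  refine card_filter_through x _ (fun W => Module.finrank F W = 1) fun T => ?_
  exact ⟨fun h => ⟨h.2, h.1.2⟩, fun h => ⟨⟨⟨x, h.1⟩, h.2⟩, h.1⟩⟩

lemma card_above {S : AS F n} {x : Fin n → F} (hx : x ∈ S) (k m : ℕ)
    (hm : k + Module.finrank F S.direction = m) (p : AS F n → Prop) [DecidablePred p]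
    (hp : ∀ C : AS F n, p C ↔
      ((C : Set (Fin n → F)).Nonempty ∧ Module.finrank F C.direction = m) ∧ S ≤ C) :
    (Finset.univ.filter p).card
      = Nat.card {W : Submodule F ((Fin n → F) ⧸ S.direction) // Module.finrank F W = k} := by
  rw [← card_submodule_ge, hm]
  refine card_filter_through x _ (fun W => S.direction ≤ W ∧ Module.finrank F W = m) fun T => ?_
  rw [hp]
  constructor
  · rintro ⟨⟨_, h⟩, hS⟩
    exact ⟨hS hx, (le_iff_direction_le hx (hS hx)).1 hS, h⟩
  · rintro ⟨h, h1, h2⟩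
    exact ⟨⟨⟨x, h⟩, h2⟩, (le_iff_direction_le hx h).2 h1⟩

lemma finrank_quot (S : AS F n) (k : ℕ) (h : Module.finrank F S.direction = k) :
    Module.finrank F ((Fin n → F) ⧸ S.direction) = n - k := by
  have := Submodule.finrank_quotient_add_finrank S.direction
  simp only [Module.finrank_fintype_fun_eq_card, Fintype.card_fin] at this
  omega

lemma card_cubes_line {S : AS F n} (hS : IsLine F n S) :
    (Finset.univ.filter fun C : AS F n => IsCube F n C ∧ S ≤ C).card = nB1 F n := by
  obtain ⟨⟨x, hx⟩, h1⟩ := hS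
  refine (card_above hx 2 3 (by omega) (fun C => IsCube F n C ∧ S ≤ C) fun C => Iff.rfl).trans
    (card_submodule_congr (E' := Fin (n - 1) → F) ?_ 2)
  rw [finrank_quot S 1 h1]; simp

lemma card_cubes_plane {S : AS F n} (hS : IsPl S) :
    (Finset.univ.filter fun C : AS F n => IsCube F n C ∧ S ≤ C).card = nB2 F n := by
  obtain ⟨⟨x, hx⟩, h1⟩ := hS
  exact (card_above hx 1 3 (by omega) (fun C => IsCube F n C ∧ S ≤ C) fun C => Iff.rfl).trans
    (card_submodule_finrank_one (finrank_quot S 2 h1))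

lemma card_planes_line {S : AS F n} (hS : IsLine F n S) :
    (Finset.univ.filter fun C : AS F n => IsPl C ∧ S ≤ C).card = nP1 F n := by
  obtain ⟨⟨x, hx⟩, h1⟩ := hS
  exact (card_above hx 1 2 (by omega) (fun C => IsPl C ∧ S ≤ C) fun C => Iff.rfl).trans
    (card_submodule_finrank_one (finrank_quot S 1 h1))

lemma card_lines_cube {C : AS F n} {x : Fin n → F} (hx : x ∈ C) (hC : IsCube F n C) :
    (Finset.univ.filter fun S : AS F n => (IsLine F n S ∧ x ∈ S) ∧ S ≤ C).card
      = Fintype.card F ^ 2 + Fintype.card F + 1 := by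
  have h3 := card_submodule_finrank_one (F := F) (E := C.direction) hC.2
  rw [← card_submodule_le_finrank] at h3
  have : ∑ i ∈ Finset.range 3, Fintype.card F ^ i = Fintype.card F ^ 2 + Fintype.card F + 1 := by
    simp [Finset.sum_range_succ]; ring
  rw [← this, ← h3]
  refine card_filter_through x _ (fun W => W ≤ C.direction ∧ Module.finrank F W = 1) fun T => ?_
  constructor
  · rintro ⟨⟨⟨_, h⟩, hS⟩, hT⟩
    exact ⟨hS, (le_iff_direction_le hS hx).1 hT, h⟩
  · rintro ⟨h, h1, h2⟩
    exact ⟨⟨⟨⟨x, h⟩, h2⟩, h⟩, (le_iff_direction_le h hx).2 h1⟩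

lemma card_planes_between {S C : AS F n} (hS : IsLine F n S) (hC : IsCube F n C) (h : S ≤ C) :
    (Finset.univ.filter fun P : AS F n => (IsPl P ∧ S ≤ P) ∧ P ≤ C).card
      = Fintype.card F + 1 := by
  obtain ⟨⟨x, hx⟩, h1⟩ := hS
  have hxC := h hx
  rw [← card_submodule_between ((le_iff_direction_le hx hxC).1 h) 1 h1 hC.2]
  refine card_filter_through x _ (fun W => S.direction ≤ W ∧ W ≤ C.direction ∧
    Module.finrank F W = 1 + 1) fun T => ?_
  constructor
  · rintro ⟨⟨⟨_, h⟩, hS⟩, hT⟩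
    exact ⟨hS hx, (le_iff_direction_le hx (hS hx)).1 hS, (le_iff_direction_le (hS hx) hxC).1 hT, h⟩
  · rintro ⟨h, h1, h2, h3⟩
    exact ⟨⟨⟨⟨x, h⟩, h3⟩, (le_iff_direction_le hx h).2 h1⟩, (le_iff_direction_le h hxC).2 h2⟩

/-- The span of two affine subspaces sharing the point `x` passes through `x`, and its direction is
the sum of theirs. -/
lemma le_mk_sup_iff {S T C : AS F n} {x : Fin n → F} (hS : x ∈ S) (hT : x ∈ T) :
    (S ≤ C ∧ T ≤ C) ↔ AffineSubspace.mk' x (S.direction ⊔ T.direction) ≤ C := by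
  constructor
  · rintro ⟨h1, h2⟩
    have hC := h1 hS
    rw [le_iff_direction_le (AffineSubspace.self_mem_mk' _ _) hC, AffineSubspace.direction_mk',
      sup_le_iff]
    exact ⟨(le_iff_direction_le hS hC).1 h1, (le_iff_direction_le hT hC).1 h2⟩
  · intro h
    have hC := h (AffineSubspace.self_mem_mk' x _)
    rw [le_iff_direction_le (AffineSubspace.self_mem_mk' _ _) hC, AffineSubspace.direction_mk',
      sup_le_iff] at h
    exact ⟨(le_iff_direction_le hS hC).2 h.1, (le_iff_direction_le hT hC).2 h.2⟩

/-- Distinct subspaces of dimension `k + 1` with a common `k`-dimensional subspace span a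
subspace of dimension `k + 2`. -/
lemma finrank_sup_of_ne {E : Type} [AddCommGroup E] [Module F E] [FiniteDimensional F E]
    {U W : Submodule F E} {k : ℕ} (hU : Module.finrank F U = k + 1)
    (hW : Module.finrank F W = k + 1) (hne : U ≠ W)
    (hi : k ≤ Module.finrank F (U ⊓ W : Submodule F E)) :
    Module.finrank F (U ⊔ W : Submodule F E) = k + 2 := by
  have h := Submodule.finrank_sup_add_finrank_inf_eq U W
  have h2 : Module.finrank F (U ⊓ W : Submodule F E) < k + 1 := by
    rcases Nat.lt_or_ge (Module.finrank F (U ⊓ W : Submodule F E)) (k + 1) with h' | h'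
    · exact h'
    · exfalso
      have e1 := Submodule.eq_of_le_of_finrank_le (inf_le_left : U ⊓ W ≤ U) (by omega)
      have e2 := Submodule.eq_of_le_of_finrank_le (inf_le_right : U ⊓ W ≤ W) (by omega)
      exact hne (e1.symm.trans e2)
  omega

/-- Two lines through a point span a plane, so their common cubes are those through a plane. -/
lemma card_cubes_two_lines {S T : AS F n} {x : Fin n → F} (hS : IsLine F n S) (hT : IsLine F n T)
    (hxS : x ∈ S) (hxT : x ∈ T) (hne : S ≠ T) :
    (Finset.univ.filter fun C : AS F n => IsCube F n C ∧ (S ≤ C ∧ T ≤ C)).card = nB2 F n := by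
  simp_rw [le_mk_sup_iff hxS hxT]
  refine card_cubes_plane ⟨⟨x, AffineSubspace.self_mem_mk' _ _⟩, ?_⟩
  rw [AffineSubspace.direction_mk']
  exact finrank_sup_of_ne (k := 0) hS.2 hT.2 (fun h => hne (eq_of_direction hxS hxT h))
    (Nat.zero_le _)

/-- Two planes through a line span a cube, their only common cube. -/
lemma card_cubes_two_planes {S T ℓ : AS F n} (hℓ : IsLine F n ℓ) (hS : IsPl S) (hT : IsPl T)
    (hℓS : ℓ ≤ S) (hℓT : ℓ ≤ T) (hne : S ≠ T) :
    (Finset.univ.filter fun C : AS F n => IsCube F n C ∧ (S ≤ C ∧ T ≤ C)).card = 1 := by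
  obtain ⟨⟨x, hx⟩, h1⟩ := hℓ
  have hxS := hℓS hx
  have hxT := hℓT hx
  simp_rw [le_mk_sup_iff hxS hxT]
  have hd : Module.finrank F (S.direction ⊔ T.direction : Submodule F (Fin n → F)) = 3 := by
    refine finrank_sup_of_ne (k := 1) hS.2 hT.2 (fun h => hne (eq_of_direction hxS hxT h)) ?_
    rw [← h1]
    exact Submodule.finrank_mono (le_inf ((le_iff_direction_le hx hxS).1 hℓS)
      ((le_iff_direction_le hx hxT).1 hℓT))
  rw [Finset.card_eq_one]
  refine ⟨AffineSubspace.mk' x (S.direction ⊔ T.direction), ?_⟩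
  have hm := AffineSubspace.self_mem_mk' x (S.direction ⊔ T.direction)
  ext C
  simp only [Finset.mem_filter, Finset.mem_univ, true_and, Finset.mem_singleton]
  constructor
  · rintro ⟨hC, hle⟩
    refine (eq_of_direction hm (hle hm) ?_).symm
    refine Submodule.eq_of_le_of_finrank_eq ((le_iff_direction_le hm (hle hm)).1 hle) ?_
    rw [AffineSubspace.direction_mk', hd, hC.2]
  · rintro rfl
    exact ⟨⟨⟨x, hm⟩, by rw [AffineSubspace.direction_mk', hd]⟩, le_rfl⟩

/-- The line through two distinct points, characterized as the smallest affine subspace containing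
both. -/
lemma exists_line {x y : Fin n → F} (h : x ≠ y) :
    ∃ ℓ : AS F n, IsLine F n ℓ ∧ x ∈ ℓ ∧ y ∈ ℓ ∧ ∀ S : AS F n, x ∈ S → y ∈ S → ℓ ≤ S := by
  refine ⟨AffineSubspace.mk' x (Submodule.span F {y -ᵥ x}), ⟨⟨x, AffineSubspace.self_mem_mk' _ _⟩, ?_⟩,
    AffineSubspace.self_mem_mk' _ _, ?_, ?_⟩
  · rw [AffineSubspace.direction_mk']
    exact finrank_span_singleton (vsub_ne_zero.2 h.symm)
  · rw [AffineSubspace.mem_mk']; exact Submodule.mem_span_singleton_self _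
  · intro S hx hy
    rw [le_iff_direction_le (AffineSubspace.self_mem_mk' _ _) hx, AffineSubspace.direction_mk',
      Submodule.span_singleton_le_iff_mem]
    exact AffineSubspace.vsub_mem_direction hy hx

lemma line_le_of_mem {ℓ S : AS F n} {x y : Fin n → F} (hℓ : IsLine F n ℓ) (h : x ≠ y)
    (hx : x ∈ ℓ) (hy : y ∈ ℓ) (hxS : x ∈ S) (hyS : y ∈ S) : ℓ ≤ S := by
  obtain ⟨m, hm, hxm, hym, hmin⟩ := exists_line h
  have hle := hmin ℓ hx hy
  have : m = ℓ := eq_of_direction hxm hx (Submodule.eq_of_le_of_finrank_eq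
    ((le_iff_direction_le hxm hx).1 hle) (by rw [hm.2, hℓ.2]))
  rw [← this]
  exact hmin S hxS hyS

/-- Two cubes form a plane pair meeting in `P` exactly when they are distinct and contain `P`. -/
lemma planePair_iff {C₁ C₂ P : AS F n} (h1 : IsCube F n C₁) (h2 : IsCube F n C₂) (hP : IsPl P) :
    (PlanePair F n C₁ C₂ ∧ C₁ ⊓ C₂ = P) ↔ (P ≤ C₁ ∧ P ≤ C₂ ∧ C₁ ≠ C₂) := by
  constructor
  · rintro ⟨h, rfl⟩
    refine ⟨inf_le_left, inf_le_right, ?_⟩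
    rintro rfl
    have := h.2.2.2
    rw [inf_idem, h1.2] at this
    omega
  · rintro ⟨hl1, hl2, hne⟩
    obtain ⟨⟨x, hx⟩, hP2⟩ := hP
    have hx1 := hl1 hx
    have hx2 := hl2 hx
    have hxi : x ∈ C₁ ⊓ C₂ := ⟨hx1, hx2⟩
    have hdi := AffineSubspace.direction_inf_of_mem hx1 hx2
    have hle : P ≤ C₁ ⊓ C₂ := le_inf hl1 hl2
    have hdl := (le_iff_direction_le hx hxi).1 hle
    have hr : Module.finrank F (C₁ ⊓ C₂ : AS F n).direction = 2 := by
      have hge := Submodule.finrank_mono hdl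
      have hs := finrank_sup_of_ne (k := 2) h1.2 h2.2
        (fun h => hne (eq_of_direction hx1 hx2 h)) (by rw [← hdi]; omega)
      have := Submodule.finrank_sup_add_finrank_inf_eq C₁.direction C₂.direction
      rw [h1.2, h2.2, hs, ← hdi] at this
      omega
    refine ⟨⟨h1, h2, ⟨x, hxi⟩, hr⟩, (eq_of_direction hx hxi ?_).symm⟩
    exact Submodule.eq_of_le_of_finrank_eq hdl (by rw [hP2, hr])

end Geometry

/-! ### Variance in a 2-design -/

section Design

open scoped Classical

/-- Variance bound in a 2-design. If any two distinct points lie on exactly `s` common blocks,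
then the point–block incidence matrix `N` satisfies `N Nᵀ = (r - s) I + s J`, so that `Nᵀ`
scales the vectors of sum zero by exactly `√(r - s)`.  Hence the degrees into a set `A` of blocks
deviate from their mean `c` by at most `(r - s) |A|` in total square; `t` is any upper bound for
`r - s`. -/
lemma design_variance {α β : Type} (P : Finset α) (B A : Finset β) (hAB : A ⊆ B)
    (inc : α → β → Prop) (k r s t c : ℝ)
    (hk : ∀ b ∈ A, ((P.filter fun p => inc p b).card : ℝ) = k)
    (hr : ∀ p ∈ P, ((B.filter fun b => inc p b).card : ℝ) = r)
    (hs : ∀ p ∈ P, ∀ p' ∈ P, p ≠ p' →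
      ((B.filter fun b => inc p b ∧ inc p' b).card : ℝ) = s)
    (hc : c * P.card = k * A.card) (ht : r - s ≤ t) (ht0 : 0 ≤ t) :
    ∑ p ∈ P, (((A.filter fun b => inc p b).card : ℝ) - c) ^ 2 ≤ t * A.card := by
  set I : α → β → ℝ := fun p b => if inc p b then 1 else 0 with hI
  set v : α → ℝ := fun p => ((A.filter fun b => inc p b).card : ℝ) - c with hv
  have hdeg : ∀ p, ((A.filter fun b => inc p b).card : ℝ) = ∑ b ∈ A, I p b := fun p => by
    simp [hI]
  have hk' : ∀ b ∈ A, ∑ p ∈ P, I p b = k := fun b hb => by rw [← hk b hb]; simp [hI]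
  have hsum0 : ∑ p ∈ P, v p = 0 := by
    simp only [hv, hdeg, Finset.sum_sub_distrib]
    rw [Finset.sum_comm, Finset.sum_congr rfl hk']
    simp only [Finset.sum_const, nsmul_eq_mul]
    linarith
  set S := ∑ p ∈ P, v p ^ 2 with hS
  have hS0 : 0 ≤ S := Finset.sum_nonneg fun p _ => sq_nonneg _
  set w : β → ℝ := fun b => ∑ p ∈ P, v p * I p b with hw
  have h1 : S = ∑ b ∈ A, w b := by
    simp only [hw]
    rw [Finset.sum_comm]
    have : ∀ p, ∑ b ∈ A, v p * I p b = v p ^ 2 + c * v p := fun p => by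
      rw [← Finset.mul_sum, ← hdeg]; simp only [hv]; ring
    simp only [this, Finset.sum_add_distrib, ← Finset.mul_sum, hsum0]
    simp [hS]
  -- `w = Nᵀ v` with `v` of sum zero, hence `‖w‖² = ⟨v, N Nᵀ v⟩ = (r - s) ‖v‖²`
  have h2 : ∑ b ∈ B, w b ^ 2 = (r - s) * S := by
    have hII : ∀ p p' b, I p b * I p' b = if inc p b ∧ inc p' b then 1 else 0 := fun p p' b => by
      by_cases h1 : inc p b <;> by_cases h2 : inc p' b <;> simp [hI, h1, h2]
    have e1 : ∀ b, w b ^ 2 = ∑ p ∈ P, ∑ p' ∈ P, v p * v p' * (I p b * I p' b) := fun b => by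
      simp only [hw]
      rw [sq, Finset.sum_mul_sum]
      exact Finset.sum_congr rfl fun p _ => Finset.sum_congr rfl fun p' _ => by ring
    have e2 : ∀ p ∈ P, ∀ p' ∈ P, ∑ b ∈ B, I p b * I p' b = s + (if p = p' then r - s else 0) := by
      intro p hp p' hp'
      by_cases h : p = p'
      · subst h
        rw [if_pos rfl, ← add_sub_assoc, add_sub_cancel_left, ← hr p hp,
          Finset.sum_congr rfl fun b _ => hII p p b]
        simp
      · rw [if_neg h, add_zero, ← hs p hp p' hp' h,
          Finset.sum_congr rfl fun b _ => hII p p' b, Finset.sum_boole]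
    calc ∑ b ∈ B, w b ^ 2
        = ∑ p ∈ P, ∑ p' ∈ P, ∑ b ∈ B, v p * v p' * (I p b * I p' b) := by
          simp only [e1]
          rw [Finset.sum_comm]
          exact Finset.sum_congr rfl fun p _ => Finset.sum_comm
      _ = ∑ p ∈ P, ∑ p' ∈ P, (v p * v p' * s + (if p = p' then v p * v p' * (r - s) else 0)) := by
          refine Finset.sum_congr rfl fun p hp => Finset.sum_congr rfl fun p' hp' => ?_
          rw [← Finset.mul_sum, e2 p hp p' hp']
          split_ifs <;> ring
      _ = (∑ p ∈ P, v p) * (∑ p ∈ P, v p) * s + (r - s) * S := by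
          simp only [Finset.sum_add_distrib]
          congr 1
          · rw [Finset.sum_mul_sum, Finset.sum_mul]
            exact Finset.sum_congr rfl fun p _ => by rw [Finset.sum_mul]
          · rw [hS, Finset.mul_sum]
            refine Finset.sum_congr rfl fun p hp => ?_
            rw [Finset.sum_ite_eq, if_pos hp]; ring
      _ = (r - s) * S := by rw [hsum0]; ring
  -- Cauchy–Schwarz over `A`
  have h3 : S ^ 2 ≤ A.card * (t * S) := by
    calc S ^ 2 = (∑ b ∈ A, w b) ^ 2 := by rw [← h1]
      _ ≤ A.card * ∑ b ∈ A, w b ^ 2 := sq_sum_le_card_mul_sum_sq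
      _ ≤ A.card * ∑ b ∈ B, w b ^ 2 := by
          gcongr
      _ ≤ A.card * (t * S) := by rw [h2]; gcongr
  rcases hS0.eq_or_lt with h0 | hpos
  · rw [← h0]; exact mul_nonneg ht0 (Nat.cast_nonneg _)
  · nlinarith

end Design

/-! ### Expansion through two points -/

section Expansion

open scoped Classical

set_option linter.unusedSectionVars false

variable {F : Type} [Field F] [Fintype F] {n : ℕ}

/-- The cubes through `x`. -/
noncomputable def cubesPt (x : Fin n → F) : Finset (AS F n) :=
  Finset.univ.filter fun C => IsCube F n C ∧ x ∈ C

/-- The cubes containing `S`. -/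
noncomputable def cubesAb (S : AS F n) : Finset (AS F n) :=
  Finset.univ.filter fun C => IsCube F n C ∧ S ≤ C

/-- The lines through `x`. -/
noncomputable def linesPt (x : Fin n → F) : Finset (AS F n) :=
  Finset.univ.filter fun C => IsLine F n C ∧ x ∈ C

/-- The planes containing `S`. -/
noncomputable def planesAb (S : AS F n) : Finset (AS F n) :=
  Finset.univ.filter fun C => IsPl C ∧ S ≤ C

/-- The ordered plane pairs of cubes of `A`, both containing `x` and `y`. -/
noncomputable def pairsD (A : Finset (AS F n)) (x y : Fin n → F) : Finset (AS F n × AS F n) :=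
  Finset.univ.filter fun p => PlanePair F n p.1 p.2 ∧ (p.1 ∈ A ∧ p.2 ∈ A) ∧
    (x ∈ p.1 ∧ x ∈ p.2) ∧ (y ∈ p.1 ∧ y ∈ p.2)

/-- The number of plane pairs containing two given distinct points: a plane through both, and an
ordered pair of distinct cubes containing that plane. -/
noncomputable def nPairs (F : Type) [Field F] [Fintype F] (n : ℕ) : ℝ :=
  (nP1 F n : ℝ) * (nB2 F n * (nB2 F n - 1))

lemma planes_cubes_count {ℓ : AS F n} (hℓ : IsLine F n ℓ) :
    nP1 F n * nB2 F n = nB1 F n * (Fintype.card F + 1) := by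
  have := Finset.card_mul_eq_card_mul (s := planesAb ℓ) (t := cubesAb ℓ) (fun P C => P ≤ C)
    (m := nB2 F n) (n := Fintype.card F + 1) ?_ ?_
  · rwa [planesAb, card_planes_line hℓ, cubesAb, card_cubes_line hℓ] at this
  · intro P hP
    simp only [planesAb, Finset.mem_filter, Finset.mem_univ, true_and] at hP
    rw [← card_cubes_plane hP.1]
    congr 1; ext C
    simp only [Finset.bipartiteAbove, cubesAb, Finset.mem_filter, Finset.mem_univ, true_and]
    exact ⟨fun h => ⟨h.1.1, h.2⟩, fun h => ⟨⟨h.1, hP.2.trans h.2⟩, h.2⟩⟩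
  · intro C hC
    simp only [cubesAb, Finset.mem_filter, Finset.mem_univ, true_and] at hC
    rw [← card_planes_between hℓ hC.1 hC.2]
    congr 1; ext P
    simp only [Finset.bipartiteBelow, planesAb, Finset.mem_filter, Finset.mem_univ, true_and]

lemma lines_cubes_count (x : Fin n → F) :
    nL F n * nB1 F n = nA F n * (Fintype.card F ^ 2 + Fintype.card F + 1) := by
  have := Finset.card_mul_eq_card_mul (s := linesPt x) (t := cubesPt x) (fun P C => P ≤ C)
    (m := nB1 F n) (n := Fintype.card F ^ 2 + Fintype.card F + 1) ?_ ?_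
  · rwa [linesPt, card_lines_point, cubesPt, card_cubes_point] at this
  · intro P hP
    simp only [linesPt, Finset.mem_filter, Finset.mem_univ, true_and] at hP
    rw [← card_cubes_line hP.1]
    congr 1; ext C
    simp only [Finset.bipartiteAbove, cubesPt, Finset.mem_filter, Finset.mem_univ, true_and]
    exact ⟨fun h => ⟨h.1.1, h.2⟩, fun h => ⟨⟨h.1, h.2 hP.2⟩, h.2⟩⟩
  · intro C hC
    simp only [cubesPt, Finset.mem_filter, Finset.mem_univ, true_and] at hC
    rw [← card_lines_cube hC.2 hC.1]
    congr 1; ext P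
    simp only [Finset.bipartiteBelow, linesPt, Finset.mem_filter, Finset.mem_univ, true_and]

/-- Every plane pair is counted at the plane in which its two cubes meet. -/
lemma card_pairsD {A : Finset (AS F n)} (hA : ∀ C ∈ A, IsCube F n C) {x y : Fin n → F}
    (hxy : x ≠ y) {ℓ : AS F n} (hℓ : IsLine F n ℓ) (hx : x ∈ ℓ) (hy : y ∈ ℓ) :
    ((pairsD A x y).card : ℝ) = ∑ P ∈ planesAb ℓ,
      (((A.filter fun C => P ≤ C).card : ℝ) ^ 2 - (A.filter fun C => P ≤ C).card) := by
  rw [Finset.card_eq_sum_card_fiberwise (f := fun p => p.1 ⊓ p.2) (t := planesAb ℓ)]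
  · push_cast
    refine Finset.sum_congr rfl fun P hP => ?_
    simp only [planesAb, Finset.mem_filter, Finset.mem_univ, true_and] at hP
    have : (pairsD A x y).filter (fun p => p.1 ⊓ p.2 = P) =
        (A.filter fun C => P ≤ C).offDiag := by
      ext p
      simp only [pairsD, Finset.mem_filter, Finset.mem_univ, true_and, Finset.mem_offDiag]
      constructor
      · rintro ⟨⟨hpp, ⟨h1, h2⟩, _, _⟩, hi⟩
        have := (planePair_iff (hA _ h1) (hA _ h2) hP.1).1 ⟨hpp, hi⟩
        exact ⟨⟨h1, this.1⟩, ⟨h2, this.2.1⟩, this.2.2⟩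
      · rintro ⟨⟨h1, hl1⟩, ⟨h2, hl2⟩, hne⟩
        have := (planePair_iff (hA _ h1) (hA _ h2) hP.1).2 ⟨hl1, hl2, hne⟩
        exact ⟨⟨this.1, ⟨h1, h2⟩, ⟨hl1 (hP.2 hx), hl2 (hP.2 hx)⟩, hl1 (hP.2 hy), hl2 (hP.2 hy)⟩,
          this.2⟩
    rw [this, Finset.offDiag_card, Nat.cast_sub (Nat.le_mul_self _)]
    push_cast; ring
  · intro p hp
    simp only [pairsD, Finset.coe_filter, Finset.mem_univ, true_and, Set.mem_ofPred_eq] at hp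
    simp only [planesAb, Finset.coe_filter, Finset.mem_univ, true_and, Set.mem_ofPred_eq]
    exact ⟨⟨hp.1.2.2.1, hp.1.2.2.2⟩, line_le_of_mem hℓ hxy hx hy
      (AffineSubspace.mem_inf_iff _ _ _ |>.2 ⟨hp.2.2.1.1, hp.2.2.1.2⟩)
      (AffineSubspace.mem_inf_iff _ _ _ |>.2 ⟨hp.2.2.2.1, hp.2.2.2.2⟩)⟩

lemma nB2_ge (hn : 6 ≤ n) : (Fintype.card F : ℝ) + 1 ≤ nB2 F n := by
  have : ∑ i ∈ Finset.range 2, (Fintype.card F) ^ i ≤ nB2 F n :=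
    Finset.sum_le_sum_of_subset (Finset.range_subset_range.2 (by omega))
  simp only [Finset.sum_range_succ, Finset.sum_range_zero, pow_zero, pow_one, zero_add] at this
  have h : ((1 + Fintype.card F : ℕ) : ℝ) ≤ nB2 F n := by exact_mod_cast this
  push_cast at h
  linarith

lemma nP1_pos (hn : 6 ≤ n) : (0 : ℝ) < nP1 F n := by
  have : 0 < nP1 F n := Finset.sum_pos (fun i _ => pow_pos Fintype.card_pos i)
    (Finset.nonempty_range_iff.2 (by omega))
  exact_mod_cast this

lemma nL_pos (hn : 6 ≤ n) : (0 : ℝ) < nL F n := by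
  have : 0 < nL F n := Finset.sum_pos (fun i _ => pow_pos Fintype.card_pos i)
    (Finset.nonempty_range_iff.2 (by omega))
  exact_mod_cast this

lemma q_gt_one : (1 : ℝ) < Fintype.card F := by exact_mod_cast Fintype.one_lt_card

lemma planes_cubes_count' (hn : 6 ≤ n) :
    (nP1 F n : ℝ) * nB2 F n = nB1 F n * (Fintype.card F + 1) := by
  have : Nonempty (Fin n) := ⟨⟨0, by omega⟩⟩
  obtain ⟨x, y, hxy⟩ := exists_pair_ne (Fin n → F)
  obtain ⟨ℓ, hℓ, -⟩ := exists_line hxy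
  exact_mod_cast planes_cubes_count hℓ

lemma nB1_pos (hn : 6 ≤ n) : (0 : ℝ) < nB1 F n := by
  have h1 := planes_cubes_count' (F := F) hn
  have h2 := nP1_pos (F := F) hn
  have h3 := nB2_ge (F := F) hn
  have h4 := q_gt_one (F := F)
  have : 0 < (nP1 F n : ℝ) * nB2 F n := mul_pos h2 (by linarith)
  rw [h1] at this
  exact pos_of_mul_pos_left this (by linarith)

lemma lines_cubes_count' (F : Type) [Field F] [Fintype F] (n : ℕ) :
    (nL F n : ℝ) * nB1 F n = nA F n * (Fintype.card F ^ 2 + Fintype.card F + 1) := by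
  exact_mod_cast lines_cubes_count (0 : Fin n → F)

lemma nA_pos (hn : 6 ≤ n) : (0 : ℝ) < nA F n := by
  have h1 := lines_cubes_count' F n
  have : 0 < (nL F n : ℝ) * nB1 F n := mul_pos (nL_pos hn) (nB1_pos hn)
  rw [h1] at this
  exact pos_of_mul_pos_left this (by positivity)

lemma nPairs_pos (hn : 6 ≤ n) : 0 < nPairs F n := by
  have h3 := nB2_ge (F := F) hn
  have h4 := q_gt_one (F := F)
  exact mul_pos (nP1_pos hn) (mul_pos (by linarith) (by linarith))

/-- Expansion at two points: the plane-pair walk on the cubes through a line has its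
nontrivial eigenvalues between `-1/q` and `1/q`, as planes and cubes through a line form a
2-design. -/
lemma pairsD_bounds (hn : 6 ≤ n) {A : Finset (AS F n)} (hA : ∀ C ∈ A, IsCube F n C)
    {x y : Fin n → F} (hxy : x ≠ y) {ℓ : AS F n} (hℓ : IsLine F n ℓ) (hx : x ∈ ℓ) (hy : y ∈ ℓ)
    (m : ℝ) (hm : m = ((A.filter fun C => ℓ ≤ C).card : ℝ) / nB1 F n) :
    ((pairsD A x y).card : ℝ) ≤ nPairs F n * (m ^ 2 + m / Fintype.card F) ∧
    nPairs F n * (m ^ 2 - m / Fintype.card F) ≤ ((pairsD A x y).card : ℝ) := by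
  set q : ℝ := (Fintype.card F : ℝ) with hq
  have hq1 : 1 < q := q_gt_one
  have hb1 := nB1_pos (F := F) hn
  have hb2 := nB2_ge (F := F) hn
  have hp1 := nP1_pos (F := F) hn
  have hcount := planes_cubes_count' (F := F) hn
  rw [← hq] at hb2 hcount
  set b1 : ℝ := (nB1 F n : ℝ)
  set b2 : ℝ := (nB2 F n : ℝ) with hb2def
  set p1 : ℝ := (nP1 F n : ℝ) with hp1def
  set A' := A.filter fun C => ℓ ≤ C with hA'
  have hA'm : (A'.card : ℝ) = m * b1 := by rw [hm]; field_simp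
  have hm0 : 0 ≤ m := by rw [hm]; positivity
  have hm1 : m ≤ 1 := by
    rw [hm, div_le_one hb1]
    have : A'.card ≤ nB1 F n := by
      rw [← card_cubes_line hℓ]
      refine Finset.card_le_card fun C hC => ?_
      simp only [hA', Finset.mem_filter] at hC
      simp only [Finset.mem_filter, Finset.mem_univ, true_and]
      exact ⟨hA C hC.1, hC.2⟩
    exact Nat.cast_le.2 this
  have hcardP : ((planesAb ℓ).card : ℝ) = p1 := by rw [planesAb, card_planes_line hℓ]
  have hdeg : ∀ P ∈ planesAb ℓ, (A.filter fun C => P ≤ C) = A'.filter fun C => P ≤ C := by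
    intro P hP
    simp only [planesAb, Finset.mem_filter, Finset.mem_univ, true_and] at hP
    ext C
    simp only [hA', Finset.mem_filter]
    exact ⟨fun h => ⟨⟨h.1, hP.2.trans h.2⟩, h.2⟩, fun h => ⟨h.1.1, h.2⟩⟩
  have hsub : A' ⊆ cubesAb ℓ := by
    intro C hC
    simp only [hA', Finset.mem_filter] at hC
    simp only [cubesAb, Finset.mem_filter, Finset.mem_univ, true_and]
    exact ⟨hA C hC.1, hC.2⟩
  have hk : ∀ C ∈ A', (((planesAb ℓ).filter fun P => P ≤ C).card : ℝ) = q + 1 := by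
    intro C hC
    have h := hsub hC
    simp only [cubesAb, Finset.mem_filter, Finset.mem_univ, true_and] at h
    have := card_planes_between hℓ h.1 h.2
    rw [planesAb, Finset.filter_filter, this]
    push_cast; rfl
  have hc : (b2 * m) * ((planesAb ℓ).card : ℝ) = (q + 1) * A'.card := by
    rw [hcardP, hA'm]; linear_combination m * hcount
  have hvar := design_variance (planesAb ℓ) (cubesAb ℓ) A' hsub (fun P C => P ≤ C) (q + 1) b2 1
    (b2 - 1) (b2 * m) hk ?_ ?_ hc le_rfl (by linarith)
  · set S := ∑ p ∈ planesAb ℓ, (((A'.filter fun C => p ≤ C).card : ℝ) - b2 * m) ^ 2 with hS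
    have hS0 : 0 ≤ S := Finset.sum_nonneg fun p _ => sq_nonneg _
    have hlin : ∑ P ∈ planesAb ℓ, ((A'.filter fun C => P ≤ C).card : ℝ) = (q + 1) * A'.card := by
      have := Finset.sum_card_bipartiteAbove_eq_sum_card_bipartiteBelow (s := planesAb ℓ) (t := A')
        (fun P C => P ≤ C)
      have h2 : ∑ P ∈ planesAb ℓ, ((A'.filter fun C => P ≤ C).card : ℝ)
          = ∑ C ∈ A', (((planesAb ℓ).filter fun P => P ≤ C).card : ℝ) := by exact_mod_cast this
      rw [h2, Finset.sum_congr rfl hk, Finset.sum_const, nsmul_eq_mul]; ring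
    -- the sum of `deg² - deg` over the planes, expanded around the mean degree `b2 * m`
    have hD : ((pairsD A x y).card : ℝ)
        = S + (2 * (b2 * m) - 1) * ((q + 1) * A'.card) - p1 * (b2 * m) ^ 2 := by
      have hconst : p1 * (b2 * m) ^ 2 = ∑ _P ∈ planesAb ℓ, (b2 * m) ^ 2 := by
        rw [Finset.sum_const, nsmul_eq_mul, hcardP]
      rw [card_pairsD hA hxy hℓ hx hy, hS, ← hlin, hconst, Finset.mul_sum,
        ← Finset.sum_add_distrib, ← Finset.sum_sub_distrib]
      refine Finset.sum_congr rfl fun P hP => ?_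
      rw [hdeg P hP]; ring
    have hD' : ((pairsD A x y).card : ℝ) = S + p1 * b2 * (b2 * m ^ 2 - m) := by
      rw [hD, hA'm]; linear_combination (-(2 * b2 * m - 1) * m) * hcount
    have hN : nPairs F n = p1 * b2 * (b2 - 1) := by rw [nPairs]; ring
    rw [hD', hN]
    have hpb : 0 < p1 * b2 := mul_pos hp1 (by linarith)
    rw [hA'm] at hvar
    constructor
    · have h1 : (b2 - 1) * (m * b1) ≤ p1 * b2 * (b2 - 1) * (m / q) := by
        have e : p1 * b2 * (b2 - 1) * (m / q) = (b2 - 1) * (m * b1) * ((q + 1) / q) := by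
          rw [hcount]; ring
        rw [e]
        refine le_mul_of_one_le_right ?_ ?_
        · exact mul_nonneg (by linarith) (by positivity)
        · rw [one_le_div (by linarith)]; linarith
      have h2 : p1 * b2 * (b2 * m ^ 2 - m) ≤ p1 * b2 * ((b2 - 1) * m ^ 2) := by
        refine mul_le_mul_of_nonneg_left ?_ hpb.le
        nlinarith
      linarith
    · have h2 : p1 * b2 * ((b2 - 1) * (m ^ 2 - m / q)) ≤ p1 * b2 * (b2 * m ^ 2 - m) := by
        refine mul_le_mul_of_nonneg_left ?_ hpb.le
        have : m ≤ (b2 - 1) * (m / q) := by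
          rw [mul_div_assoc', le_div_iff₀ (by linarith)]
          nlinarith
        nlinarith [sq_nonneg m]
      linarith
  · intro P hP
    simp only [planesAb, Finset.mem_filter, Finset.mem_univ, true_and] at hP
    rw [hb2def, ← card_cubes_plane hP.1]
    congr 2; ext C
    simp only [cubesAb, Finset.mem_filter, Finset.mem_univ, true_and]
    exact ⟨fun h => ⟨h.1.1, h.2⟩, fun h => ⟨⟨h.1, hP.2.trans h.2⟩, h.2⟩⟩
  · intro P hP P' hP' hne
    simp only [planesAb, Finset.mem_filter, Finset.mem_univ, true_and] at hP hP'
    have := card_cubes_two_planes hℓ hP.1 hP'.1 hP.2 hP'.2 hne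
    rw [← Nat.cast_one, ← this]
    congr 2; ext C
    simp only [cubesAb, Finset.mem_filter, Finset.mem_univ, true_and]
    exact ⟨fun h => ⟨h.1.1, h.2⟩, fun h => ⟨⟨h.1, hP.2.trans h.2.1⟩, h.2⟩⟩

end Expansion

/-! ### Expansion at one point -/

section PointExpansion

open scoped Classical

set_option linter.unusedSectionVars false

variable {F : Type} [Field F] [Fintype F] {n : ℕ}

lemma finsum_mem_eq_filter_sum {α : Type} [Fintype α] (s : Set α) (f : α → ℝ) :
    ∑ᶠ a ∈ s, f a = ∑ a ∈ Finset.univ.filter (fun a => a ∈ s), f a := by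
  rw [← finsum_mem_coe_finset]
  simp

lemma ncard_eq_card {α : Type} [Fintype α] (s : Set α) :
    s.ncard = (Finset.univ.filter (fun a => a ∈ s)).card := by
  rw [← Set.ncard_coe_finset]
  simp

lemma card_line_minus (x : Fin n → F) {ℓ : AS F n} (hℓ : IsLine F n ℓ) (hx : x ∈ ℓ) :
    (((Finset.univ.filter fun y => y ≠ x).filter fun y => y ∈ ℓ).card : ℝ)
      = Fintype.card F - 1 := by
  have h := card_points ℓ hℓ.1
  rw [hℓ.2, pow_one] at h
  have e : ((Finset.univ.filter fun y => y ≠ x).filter fun y => y ∈ ℓ)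
      = (Finset.univ.filter fun z => z ∈ ℓ).erase x := by
    ext y; simp
  rw [e, Finset.card_erase_of_mem (by simp [hx]), h, Nat.cast_sub Fintype.card_pos]
  simp

/-- Summation over the points other than `x`, organized by the lines through `x`. -/
lemma sum_points_eq_sum_lines (x : Fin n → F) (f : AS F n → ℝ) (h : (Fin n → F) → ℝ)
    (hfh : ∀ ℓ, IsLine F n ℓ → x ∈ ℓ → ∀ y ∈ ℓ, y ≠ x → h y = f ℓ) :
    ∑ y ∈ Finset.univ.filter (fun y => y ≠ x), h y
      = (Fintype.card F - 1) * ∑ ℓ ∈ linesPt x, f ℓ := by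
  have h1 : ∑ ℓ ∈ linesPt x, ∑ y ∈ (Finset.univ.filter fun y => y ≠ x).filter (fun y => y ∈ ℓ), h y
      = (Fintype.card F - 1) * ∑ ℓ ∈ linesPt x, f ℓ := by
    rw [Finset.mul_sum]
    refine Finset.sum_congr rfl fun ℓ hℓ => ?_
    simp only [linesPt, Finset.mem_filter, Finset.mem_univ, true_and] at hℓ
    rw [← card_line_minus x hℓ.1 hℓ.2, ← nsmul_eq_mul, ← Finset.sum_const]
    refine Finset.sum_congr rfl fun y hy => ?_
    simp only [Finset.mem_filter, Finset.mem_univ, true_and] at hy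
    exact hfh ℓ hℓ.1 hℓ.2 y hy.2 hy.1
  rw [← h1]
  simp only [Finset.sum_filter (s := Finset.univ.filter fun y => y ≠ x)]
  rw [Finset.sum_comm]
  refine Finset.sum_congr rfl fun y hy => ?_
  simp only [Finset.mem_filter, Finset.mem_univ, true_and] at hy
  obtain ⟨ℓ, hℓ, hx, hyℓ, hmin⟩ := exists_line hy.symm
  rw [← Finset.sum_filter, Finset.sum_const]
  have : (linesPt x).filter (fun ℓ => y ∈ ℓ) = {ℓ} := by
    ext m
    simp only [linesPt, Finset.mem_filter, Finset.mem_univ, true_and, Finset.mem_singleton]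
    constructor
    · rintro ⟨⟨hm, hxm⟩, hym⟩
      exact le_antisymm (line_le_of_mem hm hy.symm hxm hym hx hyℓ) (hmin m hxm hym)
    · rintro rfl; exact ⟨⟨hℓ, hx⟩, hyℓ⟩
  rw [this, Finset.card_singleton, one_smul]

lemma nL_mul : (nL F n : ℝ) * (Fintype.card F - 1) = (Fintype.card F : ℝ) ^ n - 1 := by
  have := geom_sum_mul (Fintype.card F : ℝ) n
  rw [← this, nL]; push_cast; rfl

/-- Concentration on lines: lines and cubes through a point form a 2-design. -/
lemma lines_variance {x : Fin n → F} {A : Finset (AS F n)} (hA : A ⊆ cubesPt x) (m : ℝ)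
    (hm : (A.card : ℝ) = m * nA F n) :
    ∑ ℓ ∈ linesPt x, ((A.filter fun C => ℓ ≤ C).card : ℝ)
        = ((Fintype.card F : ℝ) ^ 2 + Fintype.card F + 1) * A.card ∧
    ∑ ℓ ∈ linesPt x, (((A.filter fun C => ℓ ≤ C).card : ℝ) - nB1 F n * m) ^ 2
        ≤ nB1 F n * A.card := by
  have hk : ∀ C ∈ A, (((linesPt x).filter fun ℓ => ℓ ≤ C).card : ℝ)
      = (Fintype.card F : ℝ) ^ 2 + Fintype.card F + 1 := by
    intro C hC
    have h := hA hC
    simp only [cubesPt, Finset.mem_filter, Finset.mem_univ, true_and] at h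
    have := card_lines_cube h.2 h.1
    rw [linesPt, Finset.filter_filter, this]
    push_cast; rfl
  have hcard : ((linesPt x).card : ℝ) = nL F n := by rw [linesPt, card_lines_point]
  constructor
  · have := Finset.sum_card_bipartiteAbove_eq_sum_card_bipartiteBelow (s := linesPt x) (t := A)
      (fun P C => P ≤ C)
    have h2 : ∑ P ∈ linesPt x, ((A.filter fun C => P ≤ C).card : ℝ)
        = ∑ C ∈ A, (((linesPt x).filter fun P => P ≤ C).card : ℝ) := by exact_mod_cast this
    rw [h2, Finset.sum_congr rfl hk, Finset.sum_const, nsmul_eq_mul]; ring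
  · refine design_variance (linesPt x) (cubesPt x) A hA (fun ℓ C => ℓ ≤ C) _ (nB1 F n) (nB2 F n)
      (nB1 F n) (nB1 F n * m) hk ?_ ?_ ?_ (by simp) (Nat.cast_nonneg _)
    · intro P hP
      simp only [linesPt, Finset.mem_filter, Finset.mem_univ, true_and] at hP
      rw [← card_cubes_line hP.1]
      congr 2; ext C
      simp only [cubesPt, Finset.mem_filter, Finset.mem_univ, true_and]
      exact ⟨fun h => ⟨h.1.1, h.2⟩, fun h => ⟨⟨h.1, h.2 hP.2⟩, h.2⟩⟩
    · intro P hP P' hP' hne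
      simp only [linesPt, Finset.mem_filter, Finset.mem_univ, true_and] at hP hP'
      rw [← card_cubes_two_lines hP.1 hP'.1 hP.2 hP'.2 hne]
      congr 2; ext C
      simp only [cubesPt, Finset.mem_filter, Finset.mem_univ, true_and]
      exact ⟨fun h => ⟨h.1.1, h.2⟩, fun h => ⟨⟨h.1, h.2.1 hP.2⟩, h.2⟩⟩
    · rw [hcard, hm]; linear_combination m * lines_cubes_count' F n

/-- The number of pairs `((C₁, C₂), y)` with `C₁, C₂ ∈ A` a plane pair through `x` and
`y ≠ x` a further point of both cubes. -/
noncomputable def energy (x : Fin n → F) (A : Finset (AS F n)) : ℝ :=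
  ∑ y ∈ Finset.univ.filter (fun y => y ≠ x), ((pairsD A x y).card : ℝ)

/-- Expansion at one point, combining the walk inside each line with the concentration of the
density of `A` on lines. -/
lemma energy_bounds (hn : 6 ≤ n) {x : Fin n → F} {A : Finset (AS F n)} (hA : A ⊆ cubesPt x) (m : ℝ)
    (hm : (A.card : ℝ) = m * nA F n) :
    energy x A ≤ nPairs F n * ((Fintype.card F : ℝ) ^ n - 1) *
        (m ^ 2 + 2 * m / Fintype.card F) ∧
    nPairs F n * ((Fintype.card F : ℝ) ^ n - 1) * (m ^ 2 - m / Fintype.card F) ≤ energy x A := by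
  obtain ⟨hlin, hvar⟩ := lines_variance hA m hm
  have hcard : ((linesPt x).card : ℝ) = nL F n := by rw [linesPt, card_lines_point]
  have hAcube : ∀ C ∈ A, IsCube F n C := fun C hC => by
    have h := hA hC
    simp only [cubesPt, Finset.mem_filter, Finset.mem_univ, true_and] at h
    exact h.1
  have hN := nPairs_pos (F := F) hn
  have hb1 := nB1_pos (F := F) hn
  have ha := nA_pos (F := F) hn
  have hL := nL_pos (F := F) hn
  have hq := q_gt_one (F := F)
  have hLa := lines_cubes_count' F n
  have hm0 : 0 ≤ m := by
    by_contra h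
    push Not at h
    have : (A.card : ℝ) < 0 := by rw [hm]; exact mul_neg_of_neg_of_pos h ha
    exact absurd this (not_lt.2 (Nat.cast_nonneg _))
  rw [← nL_mul]
  set q : ℝ := (Fintype.card F : ℝ)
  set b1 : ℝ := (nB1 F n : ℝ)
  set L : ℝ := (nL F n : ℝ)
  set N : ℝ := nPairs F n
  set a : ℝ := (nA F n : ℝ)
  set μ : AS F n → ℝ := fun ℓ => ((A.filter fun C => ℓ ≤ C).card : ℝ) / b1 with hμ
  have hμ' : ∀ ℓ, ((A.filter fun C => ℓ ≤ C).card : ℝ) = b1 * μ ℓ := fun ℓ => by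
    simp only [hμ]; field_simp
  simp only [hμ', ← Finset.mul_sum] at hlin hvar
  have h1 : ∑ ℓ ∈ linesPt x, μ ℓ = L * m := by
    have : b1 * ∑ ℓ ∈ linesPt x, μ ℓ = b1 * (L * m) := by
      rw [hlin, hm]; linear_combination (-m) * hLa
    exact mul_left_cancel₀ hb1.ne' this
  have h2 : ∑ ℓ ∈ linesPt x, (μ ℓ - m) ^ 2 = ∑ ℓ ∈ linesPt x, μ ℓ ^ 2 - L * m ^ 2 := by
    have : ∀ ℓ, (μ ℓ - m) ^ 2 = μ ℓ ^ 2 - (2 * m) * μ ℓ + m ^ 2 := fun ℓ => by ring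
    simp only [this, Finset.sum_add_distrib, Finset.sum_sub_distrib, ← Finset.mul_sum, h1,
      Finset.sum_const, nsmul_eq_mul, hcard]
    ring
  have h3 : ∑ ℓ ∈ linesPt x, (μ ℓ - m) ^ 2 ≤ L * m / q := by
    have e : ∑ ℓ ∈ linesPt x, (b1 * μ ℓ - b1 * m) ^ 2 = b1 ^ 2 * ∑ ℓ ∈ linesPt x, (μ ℓ - m) ^ 2 := by
      rw [Finset.mul_sum]; exact Finset.sum_congr rfl fun ℓ _ => by ring
    rw [e, hm] at hvar
    have h4 : b1 * (∑ ℓ ∈ linesPt x, (μ ℓ - m) ^ 2) ≤ m * a := by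
      refine le_of_mul_le_mul_left ?_ hb1
      linarith
    have h5 : m * a * q ≤ L * m * b1 := by
      have : L * m * b1 = m * a * (q ^ 2 + q + 1) := by linear_combination m * hLa
      rw [this]
      refine mul_le_mul_of_nonneg_left ?_ (by positivity)
      nlinarith
    rw [le_div_iff₀ (by linarith)]
    refine le_of_mul_le_mul_left ?_ hb1
    nlinarith
  have h0 : 0 ≤ ∑ ℓ ∈ linesPt x, (μ ℓ - m) ^ 2 := Finset.sum_nonneg fun _ _ => sq_nonneg _
  rw [h2] at h3 h0
  -- densities along lines through `x` as densities at pairs of points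
  have hfil : ∀ ℓ, IsLine F n ℓ → x ∈ ℓ → ∀ y ∈ ℓ, y ≠ x →
      ((A.filter fun C => y ∈ C).card : ℝ) / b1 = μ ℓ := by
    intro ℓ hℓ hx y hy hyx
    simp only [hμ]
    congr 3
    refine Finset.filter_congr fun C hC => ?_
    have h := hA hC
    simp only [cubesPt, Finset.mem_filter, Finset.mem_univ, true_and] at h
    exact ⟨fun hyC => line_le_of_mem hℓ hyx.symm hx hy h.2 hyC, fun hle => hle hy⟩
  have hpair : ∀ y, y ≠ x → ∃ ℓ, IsLine F n ℓ ∧ x ∈ ℓ ∧ y ∈ ℓ := fun y hy => by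
    obtain ⟨ℓ, h1, h2, h3, -⟩ := exists_line hy.symm
    exact ⟨ℓ, h1, h2, h3⟩
  constructor
  · calc energy x A ≤ ∑ y ∈ Finset.univ.filter (fun y => y ≠ x),
          N * ((((A.filter fun C => y ∈ C).card : ℝ) / b1) ^ 2
            + ((A.filter fun C => y ∈ C).card : ℝ) / b1 / q) := by
          refine Finset.sum_le_sum fun y hy => ?_
          simp only [Finset.mem_filter, Finset.mem_univ, true_and] at hy
          obtain ⟨ℓ, hℓ, hx, hyℓ⟩ := hpair y hy
          rw [hfil ℓ hℓ hx y hyℓ hy]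
          exact (pairsD_bounds hn hAcube hy.symm hℓ hx hyℓ _ rfl).1
      _ = (q - 1) * ∑ ℓ ∈ linesPt x, N * (μ ℓ ^ 2 + μ ℓ / q) :=
          sum_points_eq_sum_lines x _ _ fun ℓ hℓ hx y hy hyx => by rw [hfil ℓ hℓ hx y hy hyx]
      _ = (q - 1) * N * (∑ ℓ ∈ linesPt x, μ ℓ ^ 2 + L * m / q) := by
          rw [← Finset.mul_sum, Finset.sum_add_distrib, ← Finset.sum_div, h1]; ring
      _ ≤ (q - 1) * N * (L * m ^ 2 + L * m / q + L * m / q) := by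
          refine mul_le_mul_of_nonneg_left (by linarith) (mul_nonneg (by linarith) hN.le)
      _ = _ := by ring
  · calc N * (L * (q - 1)) * (m ^ 2 - m / q)
        = (q - 1) * N * (L * m ^ 2 - L * m / q) := by ring
      _ ≤ (q - 1) * N * (∑ ℓ ∈ linesPt x, μ ℓ ^ 2 - L * m / q) := by
          refine mul_le_mul_of_nonneg_left (by linarith) (mul_nonneg (by linarith) hN.le)
      _ = (q - 1) * ∑ ℓ ∈ linesPt x, N * (μ ℓ ^ 2 - μ ℓ / q) := by
          rw [← Finset.mul_sum, Finset.sum_sub_distrib, ← Finset.sum_div, h1]; ring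
      _ = ∑ y ∈ Finset.univ.filter (fun y => y ≠ x),
          N * ((((A.filter fun C => y ∈ C).card : ℝ) / b1) ^ 2
            - ((A.filter fun C => y ∈ C).card : ℝ) / b1 / q) :=
          (sum_points_eq_sum_lines x _ _ fun ℓ hℓ hx y hy hyx => by
            rw [hfil ℓ hℓ hx y hy hyx]).symm
      _ ≤ energy x A := by
          refine Finset.sum_le_sum fun y hy => ?_
          simp only [Finset.mem_filter, Finset.mem_univ, true_and] at hy
          obtain ⟨ℓ, hℓ, hx, hyℓ⟩ := hpair y hy
          rw [hfil ℓ hℓ hx y hyℓ hy]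
          exact (pairsD_bounds hn hAcube hy.symm hℓ hx hyℓ _ rfl).2

end PointExpansion

/-! ### Agreement on lines -/

section LineAgreement

open scoped Classical

set_option linter.unusedSectionVars false

variable {F : Type} [Field F] [Fintype F] {n : ℕ}

/-- A polynomial of total degree at most `d` that does not vanish identically on a line has at most
`d` zeros there, being a univariate polynomial of degree at most `d` along the line. -/
lemma card_zeros_line {ℓ : AS F n} (hℓ : IsLine F n ℓ) (p : MvPolynomial (Fin n) F) {d : ℕ}
    (hp : p.totalDegree ≤ d) (hne : ∃ z ∈ ℓ, eval z p ≠ 0) :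
    (Finset.univ.filter fun z => z ∈ ℓ ∧ eval z p = 0).card ≤ d := by
  obtain ⟨⟨x, hx⟩, h1⟩ := hℓ
  obtain ⟨v, -, hv⟩ := finrank_eq_one_iff'.1 h1
  set f : Polynomial F :=
    aeval (fun i => Polynomial.C (x i) + Polynomial.C ((v : Fin n → F) i) * Polynomial.X) p with hf
  have hfe : ∀ t : F, f.eval t = eval (x + t • (v : Fin n → F)) p := by
    intro t
    rw [hf, ← Polynomial.coe_evalRingHom, MvPolynomial.aeval_def, MvPolynomial.hom_eval₂]
    have : (Polynomial.evalRingHom t).comp (algebraMap F (Polynomial F)) = RingHom.id F := by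
      ext a; simp
    rw [this, ← MvPolynomial.eval₂_id]
    congr 1
    funext i
    simp only [map_add, map_mul, Polynomial.coe_evalRingHom, Polynomial.eval_C, Polynomial.eval_X,
      Pi.add_apply, Pi.smul_apply, smul_eq_mul]
    ring
  have hpar : ∀ z ∈ ℓ, ∃ t : F, z = x + t • (v : Fin n → F) := by
    intro z hz
    obtain ⟨t, ht⟩ := hv ⟨z -ᵥ x, AffineSubspace.vsub_mem_direction hz hx⟩
    refine ⟨t, ?_⟩
    have := congrArg Subtype.val ht
    simp only [Submodule.coe_smul, vsub_eq_sub] at this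
    rw [this]; abel
  have hf0 : f ≠ 0 := by
    obtain ⟨z, hz, hzp⟩ := hne
    obtain ⟨t, rfl⟩ := hpar z hz
    rintro h
    rw [← hfe, h, Polynomial.eval_zero] at hzp
    exact hzp rfl
  have hdeg : f.natDegree ≤ d := by
    have := MvPolynomial.aeval_natDegree_le (m := d) (n := 1) p hp
      (fun i => Polynomial.C (x i) + Polynomial.C ((v : Fin n → F) i) * Polynomial.X)
      (fun i => by compute_degree)
    simpa using this
  calc (Finset.univ.filter fun z => z ∈ ℓ ∧ eval z p = 0).card
      ≤ (f.roots.toFinset.image fun t => x + t • (v : Fin n → F)).card := by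
        refine Finset.card_le_card fun z hz => ?_
        simp only [Finset.mem_filter, Finset.mem_univ, true_and] at hz
        obtain ⟨t, rfl⟩ := hpar z hz.1
        refine Finset.mem_image.2 ⟨t, ?_, rfl⟩
        rw [Multiset.mem_toFinset, Polynomial.mem_roots hf0, Polynomial.IsRoot, hfe]
        exact hz.2
    _ ≤ f.roots.toFinset.card := Finset.card_image_le
    _ ≤ f.roots.card := Multiset.toFinset_card_le _
    _ ≤ f.natDegree := Polynomial.card_roots' f
    _ ≤ d := hdeg

/-- Entries of a degree-`d` table that differ on a line coincide in at most `d` of its points. -/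
lemma card_agree_line {d : ℕ} {T : AS F n → (Fin n → F) → F} (hT : DegTable F n d T)
    {C₁ C₂ ℓ : AS F n} (h1 : IsCube F n C₁) (h2 : IsCube F n C₂) (hℓ : IsLine F n ℓ)
    (hl1 : ℓ ≤ C₁) (hl2 : ℓ ≤ C₂) (hna : ¬ LineAgree F n T C₁ C₂ ℓ) :
    (Finset.univ.filter fun z => z ∈ ℓ ∧ T C₁ z = T C₂ z).card ≤ d := by
  obtain ⟨p1, hp1, he1⟩ := hT C₁ h1
  obtain ⟨p2, hp2, he2⟩ := hT C₂ h2
  have key : ∀ z ∈ ℓ, (T C₁ z = T C₂ z ↔ eval z (p1 - p2) = 0) := fun z hz => by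
    rw [he1 z (hl1 hz), he2 z (hl2 hz), map_sub, sub_eq_zero]
  have := card_zeros_line hℓ (p1 - p2) (d := d)
    ((totalDegree_sub _ _).trans (max_le hp1 hp2)) ?_
  · refine le_trans (Finset.card_le_card fun z hz => ?_) this
    simp only [Finset.mem_filter, Finset.mem_univ, true_and] at hz ⊢
    exact ⟨hz.1, (key z hz.1).1 hz.2⟩
  · simp only [LineAgree, not_forall] at hna
    obtain ⟨z, hz, h⟩ := hna
    exact ⟨z, hz, fun h0 => h ((key z hz).2 h0)⟩

end LineAgreement

/-! ### Failure of condition (ii) -/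

section Sharpness

open scoped Classical

set_option linter.unusedSectionVars false

variable {F : Type} [Field F] [Fintype F] {n : ℕ}

/-- `𝒞_{x,σ}` as a finset. -/
noncomputable def valF (T : AS F n → (Fin n → F) → F) (x : Fin n → F) (σ : F) : Finset (AS F n) :=
  Finset.univ.filter fun C => C ∈ cubesVal F n T x σ

lemma mem_valF {T : AS F n → (Fin n → F) → F} {x : Fin n → F} {σ : F} {C : AS F n} :
    C ∈ valF T x σ ↔ IsCube F n C ∧ x ∈ C ∧ T C x = σ := by
  rw [valF, Finset.mem_filter]
  exact ⟨fun h => h.2, fun h => ⟨Finset.mem_univ _, h⟩⟩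

/-- The number of ordered pairs of cubes of `𝒞_{x,σ}` through `ℓ` whose table entries differ on
`ℓ` (for `x ∈ ℓ`). -/
noncomputable def disag (T : AS F n → (Fin n → F) → F) (x : Fin n → F) (σ : F) (ℓ : AS F n) : ℝ :=
  ∑ C₁ ∈ cubesAb ℓ, ∑ C₂ ∈ cubesAb ℓ,
    if T C₁ x = σ ∧ T C₂ x = σ ∧ ¬ LineAgree F n T C₁ C₂ ℓ then 1 else 0

lemma disag_eq (T : AS F n → (Fin n → F) → F) {x : Fin n → F} (σ : F) {ℓ : AS F n} (hx : x ∈ ℓ) :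
    disag T x σ ℓ = ∑ C₁ ∈ (valF T x σ).filter (fun C => ℓ ≤ C),
      (((valF T x σ).filter fun C₂ => ℓ ≤ C₂ ∧ ¬ LineAgree F n T C₁ C₂ ℓ).card : ℝ) := by
  have e : (valF T x σ).filter (fun C => ℓ ≤ C) = (cubesAb ℓ).filter fun C => T C x = σ := by
    ext C
    simp only [Finset.mem_filter, mem_valF, cubesAb, Finset.mem_univ, true_and]
    exact ⟨fun h => ⟨⟨h.1.1, h.2⟩, h.1.2.2⟩, fun h => ⟨⟨h.1.1, h.1.2 hx, h.2⟩, h.1.2⟩⟩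
  rw [e, Finset.sum_filter, disag]
  refine Finset.sum_congr rfl fun C₁ _ => ?_
  split_ifs with h
  · rw [← Finset.filter_filter, e, Finset.filter_filter, Finset.card_filter]
    push_cast
    exact Finset.sum_congr rfl fun C₂ _ => by simp [h]
  · exact Finset.sum_eq_zero fun C₂ _ => by simp [h]

/-- The failure probability in the definition of excellence, grouped by lines. -/
lemma sharp_sum (T : AS F n → (Fin n → F) → F) (x : Fin n → F) (σ : F) :
    (∑ᶠ C₁ ∈ cubesVal F n T x σ,
      ∑ᶠ ℓ ∈ {ℓ : AffineSubspace F (Fin n → F) | IsLine F n ℓ ∧ x ∈ ℓ ∧ ℓ ≤ C₁},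
        (({C₂ ∈ cubesVal F n T x σ | ℓ ≤ C₂ ∧ ¬ LineAgree F n T C₁ C₂ ℓ}.ncard : ℝ) /
          ({C₂ ∈ cubesVal F n T x σ | ℓ ≤ C₂}.ncard : ℝ)))
    = ∑ ℓ ∈ linesPt x, disag T x σ ℓ / (((valF T x σ).filter fun C => ℓ ≤ C).card : ℝ) := by
  rw [finsum_mem_eq_filter_sum]
  have h2 : ∀ ℓ : AS F n, {C₂ ∈ cubesVal F n T x σ | ℓ ≤ C₂}.ncard
      = ((valF T x σ).filter fun C => ℓ ≤ C).card := fun ℓ => by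
    rw [ncard_eq_card]; congr 1; ext C; simp [valF]
  have h1 : ∀ (C₁ ℓ : AS F n), {C₂ ∈ cubesVal F n T x σ | ℓ ≤ C₂ ∧
      ¬ LineAgree F n T C₁ C₂ ℓ}.ncard
      = ((valF T x σ).filter fun C₂ => ℓ ≤ C₂ ∧ ¬ LineAgree F n T C₁ C₂ ℓ).card := fun C₁ ℓ => by
    rw [ncard_eq_card]; congr 1; ext C; simp [valF]; tauto
  simp_rw [finsum_mem_eq_filter_sum, h1, h2]
  rw [Finset.sum_comm' (t' := linesPt x) (s' := fun ℓ => (valF T x σ).filter fun C => ℓ ≤ C)]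
  · refine Finset.sum_congr rfl fun ℓ hℓ => ?_
    simp only [linesPt, Finset.mem_filter, Finset.mem_univ, true_and] at hℓ
    rw [disag_eq T σ hℓ.2, Finset.sum_div]
  · intro C ℓ
    simp only [Finset.mem_filter, Finset.mem_univ, true_and, linesPt, valF, Set.mem_ofPred_eq]
    tauto

lemma sharp_card (T : AS F n → (Fin n → F) → F) (x : Fin n → F) (σ : F) :
    (({p : AffineSubspace F (Fin n → F) × AffineSubspace F (Fin n → F) |
        p.1 ∈ cubesVal F n T x σ ∧ IsLine F n p.2 ∧ x ∈ p.2 ∧ p.2 ≤ p.1}).ncard : ℝ)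
    = (valF T x σ).card * ((Fintype.card F : ℝ) ^ 2 + Fintype.card F + 1) := by
  have e : {p : AS F n × AS F n |
        p.1 ∈ cubesVal F n T x σ ∧ IsLine F n p.2 ∧ x ∈ p.2 ∧ p.2 ≤ p.1}.ncard
      = ((valF T x σ).sigma fun C => Finset.univ.filter fun S : AS F n =>
          (IsLine F n S ∧ x ∈ S) ∧ S ≤ C).card := by
    rw [ncard_eq_card]
    refine Finset.card_bij' (fun p _ => ⟨p.1, p.2⟩) (fun s _ => (s.1, s.2)) ?_ ?_ ?_ ?_
    · intro p hp
      simpa [valF, and_assoc] using hp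
    · intro p hp
      simpa [valF, and_assoc] using hp
    · intros; rfl
    · intros; rfl
  rw [e, Finset.card_sigma, Finset.sum_congr rfl fun C hC =>
    card_lines_cube (mem_valF.1 hC).2.1 (mem_valF.1 hC).1]
  simp

lemma valF_subset (T : AS F n → (Fin n → F) → F) (x : Fin n → F) (σ : F) :
    valF T x σ ⊆ cubesPt x := fun C hC => by
  have := mem_valF.1 hC
  exact Finset.mem_filter.2 ⟨Finset.mem_univ _, this.1, this.2.1⟩

/-- For a numerator `Y ≤ g²`, the ratio `Y / g` can be replaced by `2 * Y / r` up to the squared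
deviation of `g` from `r`. Here `Y` counts disagreeing pairs on a line, `g` is the number of cubes of
`𝒞_{x,σ}` through that line, and `r` is its mean. -/
lemma mul_div_le_add_sq {r Y g : ℝ} (hr0 : 0 ≤ r) (hg0 : 0 ≤ g) (hY0 : 0 ≤ Y) (hY1 : Y ≤ g ^ 2) :
    r * (Y / g) ≤ 2 * Y + 2 * (g - r) ^ 2 := by
  rcases hg0.eq_or_lt with h0 | h0
  · rw [← h0, div_zero, mul_zero]; positivity
  by_cases hr : r ≤ 2 * g
  · have : r * (Y / g) ≤ 2 * g * (Y / g) := by gcongr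
    have h2 : 2 * g * (Y / g) = 2 * Y := by field_simp
    nlinarith [sq_nonneg (g - r)]
  · push Not at hr
    have : Y / g ≤ g := by rw [div_le_iff₀ h0]; nlinarith
    nlinarith [mul_le_mul_of_nonneg_left this hr0]

lemma not_sharp_aux {q b L A S m γ : ℝ} (hq : 1 < q) (hb : 0 < b) (hL : 0 < L) (hA : 0 ≤ A)
    (hm0 : 0 ≤ m) (hLA : L * b = A * (q ^ 2 + q + 1))
    (h1 : b * m * (γ * (m * A * (q ^ 2 + q + 1))) ≤ 2 * S + 2 * (b * (m * A))) :
    γ * m ^ 2 ≤ 2 * (S / (L * b ^ 2)) + 2 * m / q := by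
  have e1 : b * m * (γ * (m * A * (q ^ 2 + q + 1))) = γ * m ^ 2 * (L * b ^ 2) := by
    linear_combination -(γ * m ^ 2 * b) * hLA
  have hk : A * q ≤ L * b := by
    rw [hLA]
    nlinarith [mul_nonneg hA (sq_nonneg q)]
  have e2 : b * (m * A) * q ≤ m * (L * b ^ 2) := by
    nlinarith [mul_le_mul_of_nonneg_left hk (mul_nonneg hb.le hm0)]
  rw [e1] at h1
  have hD : 0 < L * b ^ 2 := by positivity
  have e3 : b * (m * A) ≤ m / q * (L * b ^ 2) := by
    rw [div_mul_eq_mul_div, le_div_iff₀ (by linarith)]; exact e2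
  rw [← mul_le_mul_iff_left₀ hD, add_mul, mul_assoc 2 (S / _), div_mul_cancel₀ _ hD.ne',
    mul_div_assoc, mul_assoc 2 (m / q)]
  linarith

/-- If `𝒞_{x,σ}` has density `m` but violates condition (ii), then the pairs of its cubes that
disagree on a common line through `x` have substantial density. -/
lemma not_sharp (hn : 6 ≤ n) (T : AS F n → (Fin n → F) → F) (d : ℕ) (ε : ℝ) (x : Fin n → F) (σ : F)
    (m : ℝ) (hm0 : 0 ≤ m) (hm : ((valF T x σ).card : ℝ) = m * nA F n)
    (hi : ε / 5 ≤ muX F n x (cubesVal F n T x σ)) (hne : ¬ Excellent F n T d ε x σ) :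
    gam d * m ^ 2 ≤ 2 * ((∑ ℓ ∈ linesPt x, disag T x σ ℓ) / (nL F n * nB1 F n ^ 2))
      + 2 * m / Fintype.card F := by
  have hlt := not_le.1 fun h => hne ⟨hi, h⟩
  rw [sharp_sum, sharp_card] at hlt
  obtain ⟨-, hvar⟩ := lines_variance (valF_subset T x σ) m hm
  have hb := nB1_pos (F := F) hn
  have hL := nL_pos (F := F) hn
  have hq := q_gt_one (F := F)
  -- `nB1 * m` is the mean number of cubes of `𝒞_{x,σ}` on a line through `x`
  have hper : ∀ ℓ ∈ linesPt x, nB1 F n * m *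
      (disag T x σ ℓ / (((valF T x σ).filter fun C => ℓ ≤ C).card : ℝ))
      ≤ 2 * disag T x σ ℓ +
        2 * ((((valF T x σ).filter fun C => ℓ ≤ C).card : ℝ) - nB1 F n * m) ^ 2 := by
    intro ℓ hℓ
    have hx := (Finset.mem_filter.1 hℓ).2.2
    refine mul_div_le_add_sq (by positivity) (by positivity) ?_ ?_
    · rw [disag_eq T σ hx]; positivity
    · rw [disag_eq T σ hx, sq]
      refine (Finset.sum_le_card_nsmul _ _
        (((valF T x σ).filter fun C => ℓ ≤ C).card : ℝ) fun C _ => ?_).trans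
        (le_of_eq (nsmul_eq_mul _ _))
      exact_mod_cast Finset.card_le_card
        (Finset.monotone_filter_right _ fun C _ (h : ℓ ≤ C ∧ _) => h.1)
  have hsum := Finset.sum_le_sum hper
  rw [← Finset.mul_sum, Finset.sum_add_distrib, ← Finset.mul_sum, ← Finset.mul_sum] at hsum
  have h1 := (mul_le_mul_of_nonneg_left hlt.le (by positivity : 0 ≤ nB1 F n * m)).trans
    (hsum.trans (add_le_add_right (mul_le_mul_of_nonneg_left hvar zero_le_two) _))
  rw [hm] at h1
  exact not_sharp_aux hq hb hL (Nat.cast_nonneg _) hm0 (lines_cubes_count' F n) h1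

/-- Two cubes that disagree on a line agree on at most `d` of its points, so on average a point
of a line sees few disagreeing pairs with equal values at that point. -/
lemma sum_disag (hn : 6 ≤ n) {d : ℕ} {T : AS F n → (Fin n → F) → F} (hT : DegTable F n d T) :
    ∑ x : Fin n → F, ∑ σ : F, (∑ ℓ ∈ linesPt x, disag T x σ ℓ) / (nL F n * nB1 F n ^ 2)
      ≤ (Fintype.card F : ℝ) ^ n * (d / Fintype.card F) := by
  have hb := nB1_pos (F := F) hn
  have hL := nL_pos (F := F) hn
  have hq := q_gt_one (F := F)
  have hD : (0 : ℝ) < nL F n * nB1 F n ^ 2 := by positivity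
  set Ls : Finset (AS F n) := Finset.univ.filter fun ℓ => IsLine F n ℓ with hLs
  have hcount : (Ls.card : ℝ) * Fintype.card F = (Fintype.card F : ℝ) ^ n * nL F n := by
    have := Finset.card_mul_eq_card_mul (s := Ls) (t := (Finset.univ : Finset (Fin n → F)))
      (fun ℓ x => x ∈ ℓ) (m := Fintype.card F) (n := nL F n) ?_ ?_
    · simp only [Finset.card_univ, Fintype.card_fun, Fintype.card_fin] at this
      exact_mod_cast this
    · intro ℓ hℓ
      simp only [hLs, Finset.mem_filter, Finset.mem_univ, true_and] at hℓ
      have := card_points ℓ hℓ.1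
      rw [hℓ.2, pow_one] at this
      rw [← this]; rfl
    · intro x _
      rw [← card_lines_point x, Finset.bipartiteBelow, hLs, Finset.filter_filter]
  have hσ : ∀ (x : Fin n → F) (ℓ : AS F n), ∑ σ : F, disag T x σ ℓ
      = ∑ C₁ ∈ cubesAb ℓ, ∑ C₂ ∈ cubesAb ℓ,
        if T C₁ x = T C₂ x ∧ ¬ LineAgree F n T C₁ C₂ ℓ then (1 : ℝ) else 0 := by
    intro x ℓ
    simp only [disag]
    rw [Finset.sum_comm]
    refine Finset.sum_congr rfl fun C₁ _ => ?_
    rw [Finset.sum_comm]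
    refine Finset.sum_congr rfl fun C₂ _ => ?_
    rw [Finset.sum_eq_single (T C₁ x)]
    · simp [eq_comm]
    · intro σ _ h
      simp [h.symm]
    · simp
  have hmain : ∑ x : Fin n → F, ∑ σ : F, ∑ ℓ ∈ linesPt x, disag T x σ ℓ
      ≤ Ls.card * (nB1 F n ^ 2 * d) := by
    calc ∑ x : Fin n → F, ∑ σ : F, ∑ ℓ ∈ linesPt x, disag T x σ ℓ
        = ∑ x : Fin n → F, ∑ ℓ ∈ linesPt x, ∑ C₁ ∈ cubesAb ℓ, ∑ C₂ ∈ cubesAb ℓ,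
        (if T C₁ x = T C₂ x ∧ ¬ LineAgree F n T C₁ C₂ ℓ then (1 : ℝ) else 0) := by
          refine Finset.sum_congr rfl fun x _ => ?_
          rw [Finset.sum_comm]
          exact Finset.sum_congr rfl fun ℓ _ => hσ x ℓ
      _ = ∑ ℓ ∈ Ls, ∑ x ∈ Finset.univ.filter (fun x => x ∈ ℓ), ∑ C₁ ∈ cubesAb ℓ, ∑ C₂ ∈ cubesAb ℓ,
        (if T C₁ x = T C₂ x ∧ ¬ LineAgree F n T C₁ C₂ ℓ then (1 : ℝ) else 0) := by
          refine Finset.sum_comm' fun x ℓ => ?_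
          simp [linesPt, hLs, and_comm]
      _ ≤ ∑ ℓ ∈ Ls, ((nB1 F n : ℝ) ^ 2 * d) := by
          refine Finset.sum_le_sum fun ℓ hℓ => ?_
          simp only [hLs, Finset.mem_filter, Finset.mem_univ, true_and] at hℓ
          rw [Finset.sum_comm]
          have hc : ((cubesAb ℓ).card : ℝ) = nB1 F n := by
            rw [cubesAb, card_cubes_line hℓ]
          have : (nB1 F n : ℝ) ^ 2 * d = ∑ C₁ ∈ cubesAb ℓ, ∑ C₂ ∈ cubesAb ℓ, (d : ℝ) := by
            simp only [Finset.sum_const, nsmul_eq_mul, hc]; ring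
          rw [this]
          refine Finset.sum_le_sum fun C₁ h1 => ?_
          rw [Finset.sum_comm]
          refine Finset.sum_le_sum fun C₂ h2 => ?_
          simp only [cubesAb, Finset.mem_filter, Finset.mem_univ, true_and] at h1 h2
          by_cases hna : LineAgree F n T C₁ C₂ ℓ
          · simp [hna]
          · have := card_agree_line hT h1.1 h2.1 hℓ h1.2 h2.2 hna
            simp only [hna, not_false_eq_true, and_true]
            rw [← Finset.sum_filter, Finset.filter_filter]
            simp only [Finset.sum_const, nsmul_eq_mul, mul_one]
            exact_mod_cast this
      _ = Ls.card * (nB1 F n ^ 2 * d) := by rw [Finset.sum_const, nsmul_eq_mul]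
  simp_rw [← Finset.sum_div]
  rw [div_le_iff₀ hD]
  refine hmain.trans (le_of_eq ?_)
  have h0 : (Fintype.card F : ℝ) ≠ 0 := by linarith
  field_simp
  linear_combination (d : ℝ) * hcount

end Sharpness

/-! ### Double counting of accepting pairs -/

section Counting

open scoped Classical

set_option linter.unusedSectionVars false

variable {F : Type} [Field F] [Fintype F] {n : ℕ}

/-- `ℱ_{x,σ}` as a finset. -/
noncomputable def polyF (T : AS F n → (Fin n → F) → F)
    (g : (Fin n → F) → F → MvPolynomial (Fin n) F) (x : Fin n → F) (σ : F) : Finset (AS F n) :=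
  Finset.univ.filter fun C => C ∈ calF F n T g x σ

lemma mem_polyF {T : AS F n → (Fin n → F) → F} {g : (Fin n → F) → F → MvPolynomial (Fin n) F}
    {x : Fin n → F} {σ : F} {C : AS F n} : C ∈ polyF T g x σ ↔
      (IsCube F n C ∧ x ∈ C ∧ T C x = σ) ∧ ∀ z, z ∈ C → T C z = eval z (g x σ) := by
  rw [polyF, Finset.mem_filter]
  exact ⟨fun h => h.2, fun h => ⟨Finset.mem_univ _, h⟩⟩

/-- The set of the plane pairs on which the test accepts. -/
noncomputable def accPairs (T : AS F n → (Fin n → F) → F) : Finset (AS F n × AS F n) :=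
  Finset.univ.filter fun p => PlanePair F n p.1 p.2 ∧ Agrees F n T p.1 p.2

/-- The pairs of `S` whose two cubes both contain `x` and `y`. -/
noncomputable def thru (S : Finset (AS F n × AS F n)) (x y : Fin n → F) :
    Finset (AS F n × AS F n) :=
  S.filter fun p => (x ∈ p.1 ∧ x ∈ p.2) ∧ (y ∈ p.1 ∧ y ∈ p.2)

lemma thru_comm (S : Finset (AS F n × AS F n)) (x y : Fin n → F) : thru S x y = thru S y x :=
  Finset.filter_congr fun _ _ => and_comm

/-- Double counting of plane pairs and ordered pairs of distinct points of their planes. -/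
lemma sum_thru (S : Finset (AS F n × AS F n)) (hS : ∀ p ∈ S, PlanePair F n p.1 p.2) :
    ∑ x : Fin n → F, ∑ y ∈ Finset.univ.filter (fun y => y ≠ x), ((thru S x y).card : ℝ)
      = S.card * ((Fintype.card F : ℝ) ^ 2 * ((Fintype.card F : ℝ) ^ 2 - 1)) := by
  have h1 : ∀ x y, ((thru S x y).card : ℝ)
      = ∑ p ∈ S, if (x ∈ p.1 ⊓ p.2 ∧ y ∈ p.1 ⊓ p.2) then (1 : ℝ) else 0 := fun x y => by
    rw [thru, Finset.card_filter]
    push_cast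
    exact Finset.sum_congr rfl fun p _ => if_congr
      (by simp only [AffineSubspace.mem_inf_iff]) rfl rfl
  simp_rw [h1]
  have h2 : ∀ x : Fin n → F, ∑ y ∈ Finset.univ.filter (fun y => y ≠ x),
      ∑ p ∈ S, (if (x ∈ p.1 ⊓ p.2 ∧ y ∈ p.1 ⊓ p.2) then (1 : ℝ) else 0)
      = ∑ p ∈ S, if x ∈ p.1 ⊓ p.2 then (Fintype.card F : ℝ) ^ 2 - 1 else 0 := by
    intro x
    rw [Finset.sum_comm]
    refine Finset.sum_congr rfl fun p hp => ?_
    have hP := (hS p hp).2.2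
    split_ifs with hx
    · have hc := card_points (p.1 ⊓ p.2) hP.1
      rw [hP.2] at hc
      have e : (Finset.univ.filter fun y => y ≠ x).filter (fun y => y ∈ p.1 ⊓ p.2)
          = (Finset.univ.filter fun z => z ∈ p.1 ⊓ p.2).erase x := by
        ext y
        simp only [Finset.mem_filter, Finset.mem_univ, true_and, Finset.mem_erase]
      simp only [hx, true_and]
      rw [← Finset.sum_filter, e, Finset.sum_const, nsmul_eq_mul, mul_one,
        Finset.cast_card_erase_of_mem (Finset.mem_filter.2 ⟨Finset.mem_univ _, hx⟩), hc]
      push_cast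
      rfl
    · exact Finset.sum_eq_zero fun y _ => if_neg fun h => hx h.1
  simp_rw [h2]
  rw [Finset.sum_comm, Finset.sum_congr rfl fun p hp => ?_, Finset.sum_const, nsmul_eq_mul]
  have hP := (hS p hp).2.2
  have hc := card_points (p.1 ⊓ p.2) hP.1
  rw [hP.2] at hc
  rw [← Finset.sum_filter, Finset.sum_const, nsmul_eq_mul, hc]
  push_cast
  rfl

lemma card_pairs_all {x y : Fin n → F} (hxy : x ≠ y) :
    ((thru (Finset.univ.filter fun p : AS F n × AS F n => PlanePair F n p.1 p.2) x y).card : ℝ)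
      = nPairs F n := by
  obtain ⟨ℓ, hℓ, hx, hy, -⟩ := exists_line hxy
  have hA : ∀ C ∈ Finset.univ.filter (fun C : AS F n => IsCube F n C), IsCube F n C :=
    fun C hC => (Finset.mem_filter.1 hC).2
  have h := card_pairsD hA hxy hℓ hx hy
  have e : thru (Finset.univ.filter fun p : AS F n × AS F n => PlanePair F n p.1 p.2) x y
      = pairsD (Finset.univ.filter fun C : AS F n => IsCube F n C) x y := by
    ext p
    simp only [thru, pairsD, Finset.mem_filter, Finset.mem_univ, true_and]
    exact ⟨fun h => ⟨h.1, ⟨h.1.1, h.1.2.1⟩, h.2⟩, fun h => ⟨h.1, h.2.2⟩⟩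
  rw [e, h, Finset.sum_congr rfl fun P hP => ?_, Finset.sum_const, nsmul_eq_mul]
  · rw [planesAb, card_planes_line hℓ]; rfl
  · rw [Finset.filter_filter, card_cubes_plane (Finset.mem_filter.1 hP).2.1]
    ring

lemma card_vectors : (((Finset.univ : Finset (Fin n → F)).card : ℕ) : ℝ)
    = (Fintype.card F : ℝ) ^ n := by
  rw [Finset.card_univ, Fintype.card_fun, Fintype.card_fin]; push_cast; rfl

lemma card_ne (x : Fin n → F) : ((Finset.univ.filter fun y => y ≠ x).card : ℝ)
    = (Fintype.card F : ℝ) ^ n - 1 := by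
  rw [Finset.filter_ne', Finset.cast_card_erase_of_mem (Finset.mem_univ _), card_vectors]

/-- Accepting plane pairs, counted with an ordered pair of distinct points of their plane. -/
lemma sum_acc (hn : 6 ≤ n) (T : AS F n → (Fin n → F) → F) :
    ∑ x : Fin n → F, ∑ y ∈ Finset.univ.filter (fun y => y ≠ x), ((thru (accPairs T) x y).card : ℝ)
      = epsT F n T * ((Fintype.card F : ℝ) ^ n *
          (nPairs F n * ((Fintype.card F : ℝ) ^ n - 1))) := by
  set PP : Finset (AS F n × AS F n) :=
    Finset.univ.filter fun p : AS F n × AS F n => PlanePair F n p.1 p.2 with hPP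
  have h1 := sum_thru PP fun p hp => (Finset.mem_filter.1 hp).2
  have h2 : ∑ x : Fin n → F, ∑ y ∈ Finset.univ.filter (fun y => y ≠ x), ((thru PP x y).card : ℝ)
      = (Fintype.card F : ℝ) ^ n * (nPairs F n * ((Fintype.card F : ℝ) ^ n - 1)) := by
    have h : ∀ x : Fin n → F, ∑ y ∈ Finset.univ.filter (fun y => y ≠ x), ((thru PP x y).card : ℝ)
        = nPairs F n * ((Fintype.card F : ℝ) ^ n - 1) := fun x => by
      rw [Finset.sum_congr rfl fun y hy => card_pairs_all (Ne.symm (Finset.mem_filter.1 hy).2),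
        Finset.sum_const, nsmul_eq_mul, card_ne, mul_comm]
    rw [Finset.sum_congr rfl fun x _ => h x, Finset.sum_const, nsmul_eq_mul, card_vectors]
  have h3 := sum_thru (accPairs T) fun p hp => (Finset.mem_filter.1 hp).2.1
  have hε : epsT F n T = (accPairs T).card / PP.card := by
    rw [epsT, ncard_eq_card, ncard_eq_card, accPairs, hPP]
    congr 3
    ext p
    simp
  have hpos : 0 < (Fintype.card F : ℝ) ^ n * (nPairs F n * ((Fintype.card F : ℝ) ^ n - 1)) := by
    have hq := q_gt_one (F := F)
    have := one_lt_pow₀ hq (by omega : n ≠ 0)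
    have := nPairs_pos (F := F) hn
    exact mul_pos (by linarith) (mul_pos this (by linarith))
  have hP0 : (PP.card : ℝ) ≠ 0 := fun h => by
    rw [h2, h, zero_mul] at h1
    exact hpos.ne' h1
  rw [h3, hε, ← h2, h1]
  field_simp

/-- `x` *explains* the pair `p`: its table value at `x` is excellent, and both cubes follow the
corresponding global polynomial. -/
def Expl (T : AS F n → (Fin n → F) → F) (g : (Fin n → F) → F → MvPolynomial (Fin n) F)
    (E : (Fin n → F) → F → Prop) (x : Fin n → F) (p : AS F n × AS F n) : Prop :=
  E x (T p.1 x) ∧ p.1 ∈ polyF T g x (T p.1 x) ∧ p.2 ∈ polyF T g x (T p.1 x)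

/-- An accepting pair through `x` has equal values at `x`, so both cubes lie in one `𝒞_{x,σ}`. -/
lemma card_acc_le (T : AS F n → (Fin n → F) → F) (x y : Fin n → F) :
    ((thru (accPairs T) x y).card : ℝ) ≤ ∑ σ : F, ((pairsD (valF T x σ) x y).card : ℝ) := by
  rw [Finset.card_eq_sum_card_fiberwise (f := fun p => T p.1 x) (t := Finset.univ)
    fun _ _ => Finset.mem_coe.2 (Finset.mem_univ _)]
  push_cast
  refine Finset.sum_le_sum fun σ _ => ?_
  norm_cast
  refine Finset.card_le_card fun p hp => ?_
  simp only [thru, accPairs, pairsD, Finset.mem_filter, Finset.mem_univ, true_and, mem_valF]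
    at hp ⊢
  obtain ⟨⟨⟨h1, h2⟩, h3, h4⟩, h5⟩ := hp
  exact ⟨h1, ⟨⟨h1.1, h3.1, h5⟩, h1.2.1, h3.2, by rw [← h2 x h3.1 h3.2, h5]⟩, h3, h4⟩

/-- Two cubes of `ℱ_{x,σ}` carry the same global polynomial, so every plane pair they form accepts. -/
lemma le_card_expl (T : AS F n → (Fin n → F) → F) (g : (Fin n → F) → F → MvPolynomial (Fin n) F)
    (E : (Fin n → F) → F → Prop) (x y : Fin n → F) :
    ∑ σ : F, (if E x σ then ((pairsD (polyF T g x σ) x y).card : ℝ) else 0)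
      ≤ ((thru (accPairs T) x y).filter (Expl T g E x)).card := by
  rw [Finset.card_eq_sum_card_fiberwise (f := fun p => T p.1 x) (t := Finset.univ)
    fun _ _ => Finset.mem_coe.2 (Finset.mem_univ _)]
  push_cast
  refine Finset.sum_le_sum fun σ _ => ?_
  split_ifs with hE
  · norm_cast
    refine Finset.card_le_card fun p hp => ?_
    simp only [thru, accPairs, pairsD, Finset.mem_filter, Finset.mem_univ, true_and] at hp ⊢
    obtain ⟨h1, ⟨h2, h3⟩, h4⟩ := hp
    have m1 := mem_polyF.1 h2
    have m2 := mem_polyF.1 h3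
    have h5 : T p.1 x = σ := m1.1.2.2
    refine ⟨⟨⟨⟨h1, fun z hz1 hz2 => by rw [m1.2 z hz1, m2.2 z hz2]⟩, h4⟩, ?_⟩, h5⟩
    rw [Expl, h5]
    exact ⟨hE, h2, h3⟩
  · positivity

/-- The accepting pairs at `x` not explained by `x` number at most the energy of the `𝒞_{x,σ}` that
is not carried by the excellent `ℱ_{x,σ}`. -/
lemma sum_unexpl (T : AS F n → (Fin n → F) → F) (g : (Fin n → F) → F → MvPolynomial (Fin n) F)
    (E : (Fin n → F) → F → Prop) (x : Fin n → F) :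
    ∑ y ∈ Finset.univ.filter (fun y => y ≠ x),
        (((thru (accPairs T) x y).filter fun p => ¬ Expl T g E x p).card : ℝ)
      ≤ ∑ σ : F, (energy x (valF T x σ) - if E x σ then energy x (polyF T g x σ) else 0) := by
  have h : ∀ y, (((thru (accPairs T) x y).filter fun p => ¬ Expl T g E x p).card : ℝ)
      ≤ ∑ σ : F, (((pairsD (valF T x σ) x y).card : ℝ) -
        if E x σ then ((pairsD (polyF T g x σ) x y).card : ℝ) else 0) := fun y => by
    rw [Finset.sum_sub_distrib]
    have h1 := card_acc_le T x y
    have h2 := le_card_expl T g E x y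
    have h3 : (((thru (accPairs T) x y).filter (Expl T g E x)).card : ℝ) +
      ((thru (accPairs T) x y).filter fun p => ¬ Expl T g E x p).card
        = (thru (accPairs T) x y).card := by
      exact_mod_cast Finset.card_filter_add_card_filter_not (s := thru (accPairs T) x y) _
    linarith
  refine (Finset.sum_le_sum fun y _ => h y).trans (le_of_eq ?_)
  rw [Finset.sum_comm]
  refine Finset.sum_congr rfl fun σ _ => ?_
  rw [Finset.sum_sub_distrib, energy]
  split_ifs
  · rfl
  · simp

/-- The total energy of the excellent `ℱ_{x,σ}` is at most the number of accepting pairs, as every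
plane pair inside one `ℱ_{x,σ}` accepts. -/
lemma sum_energy_polyF (hn : 6 ≤ n) (T : AS F n → (Fin n → F) → F)
    (g : (Fin n → F) → F → MvPolynomial (Fin n) F) (E : (Fin n → F) → F → Prop) :
    ∑ x : Fin n → F, ∑ σ : F, (if E x σ then energy x (polyF T g x σ) else 0)
      ≤ epsT F n T * ((Fintype.card F : ℝ) ^ n *
          (nPairs F n * ((Fintype.card F : ℝ) ^ n - 1))) := by
  rw [← sum_acc hn T]
  refine Finset.sum_le_sum fun x _ => ?_
  calc ∑ σ : F, (if E x σ then energy x (polyF T g x σ) else 0)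
      = ∑ y ∈ Finset.univ.filter (fun y => y ≠ x), ∑ σ : F,
        (if E x σ then ((pairsD (polyF T g x σ) x y).card : ℝ) else 0) := by
        rw [Finset.sum_comm]
        refine Finset.sum_congr rfl fun σ _ => ?_
        split_ifs
        · rfl
        · simp
    _ ≤ _ := Finset.sum_le_sum fun y _ => (le_card_expl T g E x y).trans (by
        exact_mod_cast Finset.card_filter_le _ _)

/-- Through two distinct points, the pairs explained by both are controlled by the squared
densities of the sets `ℱ_{x,σ} ∩ ℱ_{y,τ}`. These are disjoint for distinct `(σ, τ)`, so the errors
of the expansion bound add up to at most `1/q`. -/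
lemma card_good (hn : 6 ≤ n) (T : AS F n → (Fin n → F) → F)
    (g : (Fin n → F) → F → MvPolynomial (Fin n) F) (E : (Fin n → F) → F → Prop)
    {x y : Fin n → F} (hxy : x ≠ y) :
    (((thru (accPairs T) x y).filter fun p => Expl T g E x p ∧ Expl T g E y p).card : ℝ)
      ≤ nPairs F n * (∑ s ∈ Finset.univ.filter (fun s : F × F => E x s.1 ∧ E y s.2),
          (muXY F n x y (calF F n T g x s.1 ∩ calF F n T g y s.2)) ^ 2
            + 1 / (Fintype.card F : ℝ)) := by
  obtain ⟨ℓ, hℓ, hx, hy, hmin⟩ := exists_line hxy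
  have hb := nB1_pos (F := F) hn
  have hq := q_gt_one (F := F)
  set Q := Finset.univ.filter (fun s : F × F => E x s.1 ∧ E y s.2) with hQ
  set A : F × F → Finset (AS F n) := fun s => polyF T g x s.1 ∩ polyF T g y s.2 with hA
  have hmem : ∀ s, ∀ C ∈ A s, (IsCube F n C ∧ ℓ ≤ C) ∧ (T C x, T C y) = s := fun s C hC => by
    obtain ⟨h1, h2⟩ := Finset.mem_inter.1 hC
    have m1 := mem_polyF.1 h1
    have m2 := mem_polyF.1 h2
    exact ⟨⟨m1.1.1, hmin C m1.1.2.1 m2.1.2.1⟩, Prod.ext m1.1.2.2 m2.1.2.2⟩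
  have hfull : ∀ s, (A s).filter (fun C => ℓ ≤ C) = A s := fun s =>
    Finset.filter_true_of_mem fun C hC => (hmem s C hC).1.2
  have hmu : ∀ s : F × F, muXY F n x y (calF F n T g x s.1 ∩ calF F n T g y s.2)
      = ((A s).card : ℝ) / nB1 F n := fun s => by
    rw [muXY]
    congr 2
    · rw [ncard_eq_card, hA]
      congr 1
      ext C
      simp [polyF]
    · rw [ncard_eq_card, ← card_cubes_line hℓ]
      congr 1
      refine Finset.filter_congr fun C _ => ?_
      exact ⟨fun h => ⟨h.1, hmin C h.2.1 h.2.2⟩, fun h => ⟨h.1, h.2 hx, h.2 hy⟩⟩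
  -- the sets `A s` lie in different fibres of `C ↦ (T C x, T C y)`
  have hsum : ∑ s ∈ Q, ((A s).card : ℝ) / nB1 F n ≤ 1 := by
    rw [← Finset.sum_div, div_le_one hb]
    have hc : ((cubesAb ℓ).card : ℝ) = nB1 F n := by rw [cubesAb, card_cubes_line hℓ]
    rw [← hc, Finset.card_eq_sum_card_fiberwise (s := cubesAb ℓ) (f := fun C => (T C x, T C y))
      (t := Finset.univ) fun _ _ => Finset.mem_coe.2 (Finset.mem_univ _)]
    push_cast
    refine (Finset.sum_le_sum fun s _ => ?_).trans
      (Finset.sum_le_sum_of_subset_of_nonneg (Finset.subset_univ Q) fun _ _ _ => by positivity)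
    norm_cast
    refine Finset.card_le_card fun C hC => ?_
    have := hmem s C hC
    exact Finset.mem_filter.2 ⟨Finset.mem_filter.2 ⟨Finset.mem_univ _, this.1⟩, this.2⟩
  have hcov : (((thru (accPairs T) x y).filter fun p => Expl T g E x p ∧ Expl T g E y p).card : ℝ)
      ≤ ∑ s ∈ Q, ((pairsD (A s) x y).card : ℝ) := by
    rw [Finset.card_eq_sum_card_fiberwise (f := fun p => (T p.1 x, T p.1 y)) (t := Q)]
    · push_cast
      refine Finset.sum_le_sum fun s _ => ?_
      norm_cast
      refine Finset.card_le_card fun p hp => ?_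
      obtain ⟨hp1, hs⟩ := Finset.mem_filter.1 hp
      obtain ⟨hp2, e1, e2⟩ := Finset.mem_filter.1 hp1
      obtain ⟨hp3, h3⟩ := Finset.mem_filter.1 hp2
      rw [← hs]
      refine Finset.mem_filter.2 ⟨Finset.mem_univ _, (Finset.mem_filter.1 hp3).2.1, ⟨?_, ?_⟩, h3⟩
      · exact Finset.mem_inter.2 ⟨e1.2.1, e2.2.1⟩
      · exact Finset.mem_inter.2 ⟨e1.2.2, e2.2.2⟩
    · intro p hp
      obtain ⟨-, e1, e2⟩ := Finset.mem_filter.1 (Finset.mem_coe.1 hp)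
      exact Finset.mem_coe.2 (Finset.mem_filter.2 ⟨Finset.mem_univ _, e1.1, e2.1⟩)
  refine hcov.trans ?_
  calc ∑ s ∈ Q, ((pairsD (A s) x y).card : ℝ)
      ≤ ∑ s ∈ Q, nPairs F n * ((((A s).card : ℝ) / nB1 F n) ^ 2 +
          ((A s).card : ℝ) / nB1 F n / Fintype.card F) := by
        refine Finset.sum_le_sum fun s _ => ?_
        refine (pairsD_bounds hn (fun C hC => (hmem s C hC).1.1) hxy hℓ hx hy _ ?_).1
        rw [hfull]
    _ = nPairs F n * (∑ s ∈ Q, (((A s).card : ℝ) / nB1 F n) ^ 2 +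
          (∑ s ∈ Q, ((A s).card : ℝ) / nB1 F n) / Fintype.card F) := by
        rw [← Finset.mul_sum, Finset.sum_add_distrib, Finset.sum_div]
    _ ≤ _ := by
        simp_rw [hmu]
        have := nPairs_pos (F := F) hn
        gcongr

end Counting

/-! ### Bounding the unexplained pairs -/

section Final

open scoped Classical

set_option linter.unusedSectionVars false

variable {F : Type} [Field F] [Fintype F] {n : ℕ}

/-- Passing from `𝒞_{x,σ}` (density `m`) to `ℱ_{x,σ}` (density `f`) costs little energy: with
`γ ≤ 1/1000`, `1.14 (1 - 2√γ)² ≥ 1`. -/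
lemma excellent_loss_aux {γ m f q : ℝ} (hγ : γ ≤ 1 / 1000) (hm0 : 0 ≤ m) (hq : 1 < q)
    (hf : (1 - 2 * Real.sqrt γ) * m ≤ f) (hfm : f ≤ m) :
    m ^ 2 + 2 * m / q ≤ 1.14 * (f ^ 2 - f / q) + 4 * m / q := by
  have hs : Real.sqrt γ ≤ 0.03164 := by
    rw [Real.sqrt_le_left (by norm_num)]
    linarith
  have h1 : 0.93672 * m ≤ f := by nlinarith
  have h2 : m ^ 2 ≤ 1.14 * f ^ 2 := by nlinarith
  have h3 : f / q ≤ m / q := by gcongr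
  have h4 : 0 ≤ m / q := by positivity
  rw [mul_div_assoc, mul_div_assoc]
  linarith

/-- The energy of `𝒞_{x,σ}` not captured by an excellent partition is small in each of the three
cases: low density, disagreement on lines, or excellence. -/
lemma loss_le (hn : 6 ≤ n) {d : ℕ} (hd : 1 ≤ d) (T : AS F n → (Fin n → F) → F)
    (g : (Fin n → F) → F → MvPolynomial (Fin n) F) {ε : ℝ} (hε : 0 ≤ ε) (x : Fin n → F) (σ : F)
    (m : ℝ) (hm : ((valF T x σ).card : ℝ) = m * nA F n)
    (hg : Excellent F n T d ε x σ →
      (1 - 2 * Real.sqrt (gam d)) * ((valF T x σ).card : ℝ) ≤ ((polyF T g x σ).card : ℝ)) :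
    energy x (valF T x σ) - (if Excellent F n T d ε x σ then energy x (polyF T g x σ) else 0)
      ≤ 0.14 * (if Excellent F n T d ε x σ then energy x (polyF T g x σ) else 0)
        + nPairs F n * ((Fintype.card F : ℝ) ^ n - 1) * (ε / 5 * m + 4 * m / Fintype.card F
          + 1000 * (d : ℝ) ^ 3 *
            (2 * ((∑ ℓ ∈ linesPt x, disag T x σ ℓ) / (nL F n * nB1 F n ^ 2))
              + 2 * m / Fintype.card F)) := by
  have hA := nA_pos (F := F) hn
  have hq := q_gt_one (F := F)
  have hM : 0 ≤ nPairs F n * ((Fintype.card F : ℝ) ^ n - 1) :=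
    mul_nonneg (nPairs_pos hn).le (by linarith [one_le_pow₀ hq.le (n := n)])
  have hm0 : 0 ≤ m := by
    have : 0 ≤ m * nA F n := hm ▸ Nat.cast_nonneg _
    exact nonneg_of_mul_nonneg_left this hA
  have hY : 0 ≤ (∑ ℓ ∈ linesPt x, disag T x σ ℓ) / (nL F n * nB1 F n ^ 2) := by
    refine div_nonneg (Finset.sum_nonneg fun ℓ hℓ => ?_) (by positivity)
    exact Finset.sum_nonneg fun _ _ => Finset.sum_nonneg fun _ _ => by positivity
  have hd' : (1 : ℝ) ≤ (d : ℝ) ^ 3 := one_le_pow₀ (by exact_mod_cast hd)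
  have hmu : muX F n x (cubesVal F n T x σ) = m := by
    have h1 : ((cubesVal F n T x σ).ncard : ℝ) = m * nA F n := by
      rw [ncard_eq_card, ← hm, valF]
    have h2 : (cubesOn F n x).ncard = nA F n := by
      rw [ncard_eq_card, ← card_cubes_point x]
      exact congrArg _ (Finset.filter_congr fun C _ => Iff.rfl)
    rw [muX, h1, h2]
    field_simp
  have hen := (energy_bounds hn (valF_subset T x σ) m hm).1
  have hen' := fun (A : Finset (AS F n)) (hA : A ⊆ cubesPt x) f h => (energy_bounds hn hA f h).2
  have hns := fun h1 h2 => not_sharp hn T d ε x σ m hm0 hm h1 h2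
  rw [hmu] at hns
  generalize (∑ ℓ ∈ linesPt x, disag T x σ ℓ) / (nL F n * nB1 F n ^ 2) = Y at *
  generalize nPairs F n * ((Fintype.card F : ℝ) ^ n - 1) = M at *
  have hmq : 0 ≤ m / Fintype.card F := by positivity
  have hem : 0 ≤ ε / 5 * m := by positivity
  have hR : 0 ≤ 1000 * (d : ℝ) ^ 3 * (2 * Y + 2 * m / Fintype.card F) := by positivity
  split_ifs with hE
  · have hsub : polyF T g x σ ⊆ valF T x σ := fun C hC => mem_valF.2 (mem_polyF.1 hC).1
    set f : ℝ := (polyF T g x σ).card / nA F n with hf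
    have hff : ((polyF T g x σ).card : ℝ) = f * nA F n := by rw [hf]; field_simp
    have hfm : f ≤ m := by
      rw [hf, div_le_iff₀ hA, ← hm]
      exact_mod_cast Finset.card_le_card hsub
    have hfl : (1 - 2 * Real.sqrt (gam d)) * m ≤ f := by
      rw [hf, le_div_iff₀ hA, mul_assoc, ← hm]
      exact hg hE
    have hgam : gam d ≤ 1 / 1000 := by
      rw [gam]
      exact one_div_le_one_div_of_le (by norm_num) (by linarith)
    have h1 := mul_le_mul_of_nonneg_left (excellent_loss_aux hgam hm0 hq hfl hfm) hM
    have h2 := hen' _ (hsub.trans (valF_subset T x σ)) f hff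
    have h3 := mul_nonneg hM (add_nonneg hem hR)
    linarith
  · rw [mul_zero, sub_zero, zero_add]
    refine hen.trans (mul_le_mul_of_nonneg_left ?_ hM)
    rw [mul_div_assoc 2 m, mul_div_assoc 4 m]
    rw [mul_div_assoc 2 m] at hR
    -- `x, σ` not being excellent, either (ii) fails or the density is below `ε / 5`
    by_cases hi : ε / 5 ≤ m
    · have h := hns hi hE
      have h2 : m ^ 2 ≤ 1000 * (d : ℝ) ^ 3 * (2 * Y + 2 * m / Fintype.card F) := by
        rw [gam, one_div, inv_mul_le_iff₀ (by positivity)] at h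
        exact h
      rw [mul_div_assoc 2 m] at h2
      linarith
    · have : m ^ 2 ≤ ε / 5 * m := by nlinarith
      linarith

lemma sum_density (hn : 6 ≤ n) (T : AS F n → (Fin n → F) → F) (x : Fin n → F) :
    ∑ σ : F, ((valF T x σ).card : ℝ) / nA F n = 1 := by
  have hA := nA_pos (F := F) hn
  rw [← Finset.sum_div, div_eq_one_iff_eq hA.ne', ← card_cubes_point x,
    Finset.card_eq_sum_card_fiberwise (f := fun C => T C x) (t := Finset.univ)
      fun _ _ => Finset.mem_coe.2 (Finset.mem_univ _)]
  push_cast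
  refine Finset.sum_congr rfl fun σ _ => ?_
  norm_cast
  congr 1
  ext C
  simp only [mem_valF, Finset.mem_filter, Finset.mem_univ, true_and, and_assoc]

/-- Few accepting pairs are left unexplained at one of their common points. -/
lemma total_unexpl (hn : 6 ≤ n) {d : ℕ} (hd : 1 ≤ d) {T : AS F n → (Fin n → F) → F}
    (hT : DegTable F n d T)
    (hε : 10 ^ 7 * (d : ℝ) ^ 6 / (Fintype.card F : ℝ) ≤ epsT F n T)
    (g : (Fin n → F) → F → MvPolynomial (Fin n) F)
    (hg : ∀ (x : Fin n → F) (σ : F), Excellent F n T d (epsT F n T) x σ →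
      (1 - 2 * Real.sqrt (gam d)) * ((valF T x σ).card : ℝ) ≤ ((polyF T g x σ).card : ℝ)) :
    ∑ x : Fin n → F, ∑ y ∈ Finset.univ.filter (fun y => y ≠ x),
        (((thru (accPairs T) x y).filter fun p =>
          ¬ Expl T g (Excellent F n T d (epsT F n T)) x p).card : ℝ)
      ≤ 3 / 8 * (epsT F n T * ((Fintype.card F : ℝ) ^ n *
          (nPairs F n * ((Fintype.card F : ℝ) ^ n - 1)))) := by
  set ε := epsT F n T with hεdef
  have hq := q_gt_one (F := F)
  have hd1 : (1 : ℝ) ≤ d := by exact_mod_cast hd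
  have hε0 : 0 ≤ ε := le_trans (by positivity) hε
  have hM : 0 ≤ nPairs F n * ((Fintype.card F : ℝ) ^ n - 1) :=
    mul_nonneg (nPairs_pos hn).le (by linarith [one_le_pow₀ hq.le (n := n)])
  have hE := sum_energy_polyF hn T g (Excellent F n T d ε)
  have hY := sum_disag hn hT
  rw [← hεdef] at hE
  have hA := nA_pos (F := F) hn
  have step := Finset.sum_le_sum fun (x : Fin n → F) (_ : x ∈ Finset.univ) =>
    (sum_unexpl T g (Excellent F n T d ε) x).trans (Finset.sum_le_sum fun σ _ =>
      loss_le hn hd T g hε0 x σ (((valF T x σ).card : ℝ) / nA F n)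
        (by field_simp) (hg x σ))
  refine step.trans ?_
  have hmm : ∑ x : Fin n → F, ∑ σ : F, ((valF T x σ).card : ℝ) / nA F n
      = (Fintype.card F : ℝ) ^ n := by
    rw [Finset.sum_congr rfl fun x _ => sum_density hn T x, Finset.sum_const, nsmul_eq_mul,
      card_vectors, mul_one]
  have e : ∀ (x : Fin n → F) (σ : F),
      0.14 * (if Excellent F n T d ε x σ then energy x (polyF T g x σ) else 0)
        + nPairs F n * ((Fintype.card F : ℝ) ^ n - 1) * (ε / 5 * ((valF T x σ).card / nA F n)
          + 4 * ((valF T x σ).card / nA F n) / Fintype.card F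
          + 1000 * (d : ℝ) ^ 3 *
            (2 * ((∑ ℓ ∈ linesPt x, disag T x σ ℓ) / (nL F n * nB1 F n ^ 2))
              + 2 * ((valF T x σ).card / nA F n) / Fintype.card F))
      = 0.14 * (if Excellent F n T d ε x σ then energy x (polyF T g x σ) else 0)
        + nPairs F n * ((Fintype.card F : ℝ) ^ n - 1) *
          (ε / 5 + 4 / Fintype.card F + 2000 * (d : ℝ) ^ 3 / Fintype.card F)
            * ((valF T x σ).card / nA F n)
        + nPairs F n * ((Fintype.card F : ℝ) ^ n - 1) * (2000 * (d : ℝ) ^ 3) *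
            ((∑ ℓ ∈ linesPt x, disag T x σ ℓ) / (nL F n * nB1 F n ^ 2)) := by
    intro x σ
    ring
  simp_rw [e, Finset.sum_add_distrib, ← Finset.mul_sum]
  rw [hmm]
  generalize (∑ x : Fin n → F, ∑ σ : F,
    (∑ ℓ ∈ linesPt x, disag T x σ ℓ) / (nL F n * nB1 F n ^ 2)) = Y at *
  generalize (∑ x : Fin n → F, ∑ σ : F,
    if Excellent F n T d ε x σ then energy x (polyF T g x σ) else 0) = S at *
  generalize nPairs F n * ((Fintype.card F : ℝ) ^ n - 1) = M at *
  have hN : 0 ≤ (Fintype.card F : ℝ) ^ n := by positivity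
  generalize (Fintype.card F : ℝ) ^ n = N at *
  generalize (Fintype.card F : ℝ) = q at *
  -- every error term is at most `d⁴/q`, hence at most `10⁻⁷ ε`, up to constants such as `2000`
  have hd6 : (d : ℝ) ^ 4 ≤ (d : ℝ) ^ 6 := pow_le_pow_right₀ hd1 (by norm_num)
  have k4 : (d : ℝ) ^ 4 / q ≤ ε / 10 ^ 7 := by
    rw [le_div_iff₀ (by norm_num)]
    refine le_trans (le_of_eq ?_) ((div_le_div_of_nonneg_right
      (mul_le_mul_of_nonneg_left hd6 (by norm_num : (0 : ℝ) ≤ 10 ^ 7)) (by linarith)).trans hε)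
    ring
  have k3 : (d : ℝ) ^ 3 / q ≤ ε / 10 ^ 7 := le_trans (div_le_div_of_nonneg_right
    (pow_le_pow_right₀ hd1 (by norm_num)) (by linarith)) k4
  have k0 : 1 / q ≤ ε / 10 ^ 7 := le_trans (div_le_div_of_nonneg_right
    (one_le_pow₀ hd1) (by linarith)) k4
  have hMN : 0 ≤ M * N := mul_nonneg hM hN
  have h1 : M * (2000 * (d : ℝ) ^ 3) * Y ≤ M * (2000 * (d : ℝ) ^ 3) * (N * (d / q)) := by gcongr
  have h2 : M * (2000 * (d : ℝ) ^ 3) * (N * (d / q)) = M * N * (2000 * ((d : ℝ) ^ 4 / q)) := by ring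
  have h3 : M * (ε / 5 + 4 / q + 2000 * (d : ℝ) ^ 3 / q) * N
      = M * N * (ε / 5 + 4 * (1 / q) + 2000 * ((d : ℝ) ^ 3 / q)) := by ring
  have h4 : M * N * (ε / 5 + 4 * (1 / q) + 2000 * ((d : ℝ) ^ 3 / q)) +
      M * N * (2000 * ((d : ℝ) ^ 4 / q)) ≤ M * N * (0.235 * ε) := by
    rw [← mul_add]
    refine mul_le_mul_of_nonneg_left ?_ hMN
    linarith
  linarith

end Final

/-! ### Correlated partitions -/

/-- Given, for each excellent pair `(x, σ)`, a polynomial `g x σ` of degree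
at most `d` agreeing with `T` on at least a `1 − 2√γ` fraction of `𝒞_{x,σ}`, the expectation
over a uniform ordered pair of distinct points `(x, y)` of
`Σ_{σ,τ excellent} μ_{x,y}(ℱ_{x,σ} ∩ ℱ_{y,τ})²` is at least `ε/4 − 1/q` (stated with the sum
over pairs on the left and the expectation denominator `q^n(q^n − 1)` multiplied through). -/
theorem correlated_partitions {F : Type} [Field F] [Fintype F] {n d : ℕ}
    (hn : 6 ≤ n) (hd : 1 ≤ d)
    (hq : (11 * d : ℝ) < (Fintype.card F : ℝ) ^ ((1 : ℝ) / 9))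
    (T : AffineSubspace F (Fin n → F) → (Fin n → F) → F)
    (hT : DegTable F n d T)
    (hε : 10 ^ 7 * (d : ℝ) ^ 6 / (Fintype.card F : ℝ) ≤ epsT F n T)
    (g : (Fin n → F) → F → MvPolynomial (Fin n) F)
    (hg : ∀ (x : Fin n → F) (σ : F), Excellent F n T d (epsT F n T) x σ →
      (g x σ).totalDegree ≤ d ∧
      (1 - 2 * Real.sqrt (gam d)) * ((cubesVal F n T x σ).ncard : ℝ) ≤
        ((calF F n T g x σ).ncard : ℝ)) :
    (epsT F n T / 4 - 1 / (Fintype.card F : ℝ)) *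
        ((Fintype.card F : ℝ) ^ n * ((Fintype.card F : ℝ) ^ n - 1)) ≤
      ∑ᶠ x : Fin n → F, ∑ᶠ y ∈ {y : Fin n → F | y ≠ x},
        ∑ᶠ st ∈ {st : F × F | Excellent F n T d (epsT F n T) x st.1 ∧
            Excellent F n T d (epsT F n T) y st.2},
          (muXY F n x y (calF F n T g x st.1 ∩ calF F n T g y st.2)) ^ 2 := by
  classical
  have hp := nPairs_pos (F := F) hn
  have hun := total_unexpl hn hd hT hε g fun x σ h => by
    have := (hg x σ h).2
    rwa [ncard_eq_card, ncard_eq_card] at this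
  have hacc := sum_acc hn T
  set E := Excellent F n T d (epsT F n T) with hE
  set S : (Fin n → F) → (Fin n → F) → ℝ := fun x y =>
    ∑ s ∈ Finset.univ.filter (fun s : F × F => E x s.1 ∧ E y s.2),
      (muXY F n x y (calF F n T g x s.1 ∩ calF F n T g y s.2)) ^ 2 with hS
  set B : (Fin n → F) → (Fin n → F) → ℝ := fun x y =>
    (((thru (accPairs T) x y).filter fun p => ¬ Expl T g E x p).card : ℝ) with hB
  have hRHS : (∑ᶠ x : Fin n → F, ∑ᶠ y ∈ {y : Fin n → F | y ≠ x},
        ∑ᶠ st ∈ {st : F × F | E x st.1 ∧ E y st.2},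
          (muXY F n x y (calF F n T g x st.1 ∩ calF F n T g y st.2)) ^ 2)
      = ∑ x : Fin n → F, ∑ y ∈ Finset.univ.filter (fun y => y ≠ x), S x y := by
    rw [finsum_eq_sum_of_fintype]
    refine Finset.sum_congr rfl fun x _ => ?_
    rw [finsum_mem_eq_filter_sum]
    refine Finset.sum_congr (by ext y; simp) fun y _ => ?_
    rw [finsum_mem_eq_filter_sum]
    exact Finset.sum_congr (by ext s; simp) fun s _ => rfl
  rw [hRHS]
  -- an accepting pair is explained at both points, or unexplained at one of them
  have hpt : ∀ x y : Fin n → F, x ≠ y → ((thru (accPairs T) x y).card : ℝ)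
      ≤ nPairs F n * (S x y + 1 / (Fintype.card F : ℝ)) + B x y + B y x := by
    intro x y hxy
    have h1 := card_good hn T g E hxy
    have h2 : ((thru (accPairs T) x y).card : ℝ)
        ≤ ((thru (accPairs T) x y).filter fun p => Expl T g E x p ∧ Expl T g E y p).card
          + B x y + B y x := by
      simp only [hB]
      rw [thru_comm _ y x]
      norm_cast
      refine le_trans (Finset.card_le_card fun p hp => ?_) ((Finset.card_union_le _ _).trans
        (Nat.add_le_add_right (Finset.card_union_le _ _) _))
      simp only [Finset.mem_union, Finset.mem_filter]
      tauto
    linarith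
  have hswap : ∑ x : Fin n → F, ∑ y ∈ Finset.univ.filter (fun y => y ≠ x), B y x
      = ∑ x : Fin n → F, ∑ y ∈ Finset.univ.filter (fun y => y ≠ x), B x y :=
    Finset.sum_comm' fun x y => by simp [ne_comm]
  have htot := Finset.sum_le_sum fun (x : Fin n → F) (_ : x ∈ Finset.univ) =>
    Finset.sum_le_sum fun y (hy : y ∈ Finset.univ.filter (fun y => y ≠ x)) =>
      hpt x y (Ne.symm (Finset.mem_filter.1 hy).2)
  simp_rw [Finset.sum_add_distrib, ← Finset.mul_sum, Finset.sum_add_distrib] at htot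
  rw [hacc, hswap] at htot
  have hconst : ∑ x : Fin n → F, ∑ y ∈ Finset.univ.filter (fun y => y ≠ x),
      1 / (Fintype.card F : ℝ) = (Fintype.card F : ℝ) ^ n * ((Fintype.card F : ℝ) ^ n - 1) *
        (1 / (Fintype.card F : ℝ)) := by
    rw [Finset.sum_congr rfl fun x _ => by rw [Finset.sum_const, nsmul_eq_mul, card_ne],
      Finset.sum_const, nsmul_eq_mul, card_vectors, mul_assoc]
  rw [hconst] at htot
  refine le_of_mul_le_mul_left ?_ hp
  linarith
end

section
/- With a family (g_{x,σ}) as in the context, define for excellent pairs (x,σ), (y,τ) the indicator H_{x,σ}(y,τ) which is 1 if μ_{x,y}(ℱ_{x,σ} ∩ ℱ_{y,τ}) > 2·μ_x(ℱ_{x,σ}) and 0 otherwise. Then, for (x, y) a uniformly random ordered pair of distinct points of F_q^n, E_{x,y}[ Σ_{σ,τ ∈ F_q, (x,σ) and (y,τ) excellent} μ_{x,y}(ℱ_{x,σ} ∩ ℱ_{y,τ})² · (H_{x,σ}(y,τ) + H_{y,τ}(x,σ)) ] ≤ 400·log₂(5/ε)/q². -/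
/-!
The bumps are controlled by a second-moment argument for the incidence graph between points and
cubes. Fix `x`, and let `A` be a family of cubes through `x` with density `μ = μ_x(A)`. The cubes
through `x` are homogeneous under affine automorphisms fixing `x`: the number of them through
`y ≠ x` is a constant `a`, and the number through `y` and `z` is `a` or a constant `b ≤ a`
according to whether `x, y, z` are collinear (`ncard_cubesOn2_eq`, `ncard_cubes_three_eq`).
Such an incidence structure satisfies a variance bound (`variance_le`), which here says that
`f(y) = μ_{x,y}(A)` has mean `μ` and variance at most `μ (q - 1) / (q³ - 1) ≤ μ / q²`. Hence
`E[f² · 1(f > 2μ)] ≤ 4 E[(f - μ)²] ≤ 4 μ / q²` (`tail_le`).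

Take `A = ℱ_{x,σ}`. A cube in `ℱ_{x,σ} ∩ ℱ_{y,τ}` forces `τ = g_{x,σ}(y)`, so for given
`(x, σ)` and `y` at most one `τ` contributes, and only if `μ_{x,y}(ℱ_{x,σ}) > 2 μ_x(ℱ_{x,σ})`
(`sum_tau_le`). As the `ℱ_{x,σ}` are disjoint, their densities sum to at most `1`
(`sum_muX_le_one`), so each of the two indicators contributes at most `4 / q²` to the expectation.
The total `8 / q²` is below the claimed bound since `ε ≤ 1` gives `log₂ (5 / ε) ≥ 2`.
-/


open MvPolynomial

/-! ### Homogeneity of the set of cubes through a point -/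

/-- The general linear group acts transitively on linearly independent families indexed by `ι`. -/
lemma exists_linearEquiv_of_linearIndependent {F V ι : Type*} [Field F] [AddCommGroup V]
    [Module F V] [FiniteDimensional F V] {v w : ι → V} (hv : LinearIndependent F v)
    (hw : LinearIndependent F w) : ∃ L : V ≃ₗ[F] V, ∀ i, L (v i) = w i := by
  obtain ⟨L, hL⟩ := Submodule.exists_linearEquiv_restrict_eq
    ((Module.Basis.span hv).equiv (Module.Basis.span hw) (Equiv.refl ι))
  refine ⟨L, fun i => ?_⟩
  have h := hL (Module.Basis.span hv i)
  rw [Module.Basis.equiv_apply, Module.Basis.span_apply, Module.Basis.span_apply] at h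
  simpa using h.symm

instance instFiniteAffineSubspaceFin (F : Type) [Field F] [Fintype F] (n : ℕ) :
    Finite (AffineSubspace F (Fin n → F)) :=
  Finite.of_injective (fun C => (C : Set (Fin n → F))) SetLike.coe_injective

/-- An affine automorphism fixing `x` permutes the cubes, so the number of cubes through `x` and
the points `x + v i` depends only on the linear type of the family `v`. -/
lemma ncard_cubes_le {F : Type} [Field F] [Fintype F] {n : ℕ} {ι : Type*} (x : Fin n → F)
    {v w : ι → Fin n → F} (hv : LinearIndependent F v) (hw : LinearIndependent F w) :
    {C | IsCube F n C ∧ x ∈ C ∧ ∀ i, v i + x ∈ C}.ncard ≤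
      {C | IsCube F n C ∧ x ∈ C ∧ ∀ i, w i + x ∈ C}.ncard := by
  obtain ⟨L, hL⟩ := exists_linearEquiv_of_linearIndependent hv hw
  let e : (Fin n → F) ≃ᵃ[F] (Fin n → F) :=
    ((AffineEquiv.vaddConst F x).symm.trans L.toAffineEquiv).trans (AffineEquiv.vaddConst F x)
  have he : ∀ u, e (u + x) = L u + x := fun u => by simp [e]
  have hex : e x = x := by simpa using he 0
  refine Set.ncard_le_ncard_of_injOn (fun C => C.map (e : (Fin n → F) →ᵃ[F] (Fin n → F))) ?_ ?_
    (Set.toFinite _)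
  · rintro C ⟨⟨hne, hC⟩, hx, hi⟩
    refine ⟨⟨?_, ?_⟩, ?_, fun i => ?_⟩
    · simpa using hne
    · rw [AffineSubspace.map_direction, ← hC]
      exact LinearEquiv.finrank_map_eq e.linear C.direction
    · exact AffineSubspace.mem_map.2 ⟨x, hx, hex⟩
    · exact AffineSubspace.mem_map.2 ⟨v i + x, hi i, by simp [he, hL]⟩
  · intro C _ D _ h
    apply SetLike.coe_injective
    have := congrArg (fun E : AffineSubspace F (Fin n → F) => (E : Set (Fin n → F))) h
    simp only [AffineSubspace.coe_map] at this
    exact e.injective.image_injective this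

lemma ncard_cubes_eq {F : Type} [Field F] [Fintype F] {n : ℕ} {ι : Type*} (x : Fin n → F)
    {v w : ι → Fin n → F} (hv : LinearIndependent F v) (hw : LinearIndependent F w) :
    {C | IsCube F n C ∧ x ∈ C ∧ ∀ i, v i + x ∈ C}.ncard =
      {C | IsCube F n C ∧ x ∈ C ∧ ∀ i, w i + x ∈ C}.ncard :=
  le_antisymm (ncard_cubes_le x hv hw) (ncard_cubes_le x hw hv)

/-- The number of cubes through two distinct points `x`, `y` does not depend on `y`. -/
lemma ncard_cubesOn2_eq {F : Type} [Field F] [Fintype F] {n : ℕ} {x y y' : Fin n → F}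
    (hy : y ≠ x) (hy' : y' ≠ x) :
    (cubesOn2 F n x y).ncard = (cubesOn2 F n x y').ncard := by
  have h := ncard_cubes_eq (F := F) (ι := Fin 1) x (v := ![y - x]) (w := ![y' - x])
    (by simpa [linearIndependent_unique_iff] using sub_ne_zero.2 hy)
    (by simpa [linearIndependent_unique_iff] using sub_ne_zero.2 hy')
  simpa [cubesOn2] using h

/-- For `y, z ≠ x`: the points `y` and `z` lie on a common line through `x`.  The scalar is a
unit, so that the relation is symmetric and its classes are the punctured lines through `x`. -/
def Collin (F : Type) [Field F] [Fintype F] (n : ℕ) (x y z : Fin n → F) : Prop :=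
  ∃ t : Fˣ, z - x = t • (y - x)

lemma collin_symm {F : Type} [Field F] [Fintype F] {n : ℕ} {x y z : Fin n → F}
    (h : Collin F n x y z) : Collin F n x z y := by
  obtain ⟨t, ht⟩ := h
  exact ⟨t⁻¹, by rw [ht, inv_smul_smul]⟩

lemma linearIndependent_of_not_collin {F : Type} [Field F] [Fintype F] {n : ℕ}
    {x y z : Fin n → F} (hy : y ≠ x) (hz : z ≠ x) (h : ¬ Collin F n x y z) :
    LinearIndependent F ![y - x, z - x] := by
  rw [LinearIndependent.pair_iff' (sub_ne_zero.2 hy)]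
  intro a ha
  have ha0 : a ≠ 0 := by
    rintro rfl
    exact sub_ne_zero.2 hz (by simpa using ha.symm)
  exact h ⟨Units.mk0 a ha0, by rw [← ha]; rfl⟩

lemma ncard_cubes_three_eq {F : Type} [Field F] [Fintype F] {n : ℕ}
    {x y z y' z' : Fin n → F} (hy : y ≠ x) (hz : z ≠ x) (h : ¬ Collin F n x y z)
    (hy' : y' ≠ x) (hz' : z' ≠ x) (h' : ¬ Collin F n x y' z') :
    {C | IsCube F n C ∧ x ∈ C ∧ y ∈ C ∧ z ∈ C}.ncard =
      {C | IsCube F n C ∧ x ∈ C ∧ y' ∈ C ∧ z' ∈ C}.ncard := by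
  have := ncard_cubes_eq x (linearIndependent_of_not_collin hy hz h)
    (linearIndependent_of_not_collin hy' hz' h')
  simpa [Fin.forall_fin_two] using this

lemma mem_of_collin {F : Type} [Field F] [Fintype F] {n : ℕ} {x y z : Fin n → F}
    (h : Collin F n x y z) {C : AffineSubspace F (Fin n → F)} (hx : x ∈ C) (hy : y ∈ C) :
    z ∈ C := by
  obtain ⟨t, ht⟩ := h
  have hz : z = AffineMap.lineMap x y (t : F) := by
    rw [AffineMap.lineMap_apply, vsub_eq_sub, vadd_eq_add]
    exact sub_eq_iff_eq_add.1 ht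
  rw [hz]
  exact AffineMap.lineMap_mem _ hx hy

lemma ncard_collin {F : Type} [Field F] [Fintype F] {n : ℕ} {x y : Fin n → F} (hy : y ≠ x) :
    {z | z ≠ x ∧ Collin F n x y z}.ncard = Fintype.card F - 1 := by
  classical
  have h : {z | z ≠ x ∧ Collin F n x y z} = Set.range (fun t : Fˣ => t • (y - x) + x) := by
    ext z
    constructor
    · rintro ⟨-, t, ht⟩
      exact ⟨t, (sub_eq_iff_eq_add.1 ht).symm⟩
    · rintro ⟨t, rfl⟩
      refine ⟨?_, t, by simp⟩
      intro h0
      rw [add_eq_right, smul_eq_zero_iff_eq] at h0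
      exact sub_ne_zero.2 hy h0
  rw [h, ← Set.image_univ, Set.ncard_image_of_injective, Set.ncard_univ, Nat.card_eq_fintype_card,
    Fintype.card_units]
  intro s t hst
  have : (s : F) • (y - x) = (t : F) • (y - x) := add_right_cancel hst
  exact Units.ext (smul_left_injective F (sub_ne_zero.2 hy) this)

lemma ncard_cube_sdiff {F : Type} [Field F] [Fintype F] {n : ℕ} {x : Fin n → F}
    {C : AffineSubspace F (Fin n → F)} (hC : IsCube F n C) (hx : x ∈ C) :
    {y | y ≠ x ∧ y ∈ C}.ncard = Fintype.card F ^ 3 - 1 := by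
  classical
  have h : {y | y ≠ x ∧ y ∈ C} = (C : Set (Fin n → F)) \ {x} := by
    ext y
    simp [and_comm]
  have h2 : (C : Set (Fin n → F)).ncard = Fintype.card F ^ 3 := by
    have h3 : (C : Set (Fin n → F)) = (fun v => v + x) '' (C.direction : Set (Fin n → F)) := by
      ext y
      simp only [Set.mem_image, SetLike.mem_coe]
      constructor
      · intro hy
        exact ⟨y - x, AffineSubspace.vsub_mem_direction hy hx, sub_add_cancel _ _⟩
      · rintro ⟨v, hv, rfl⟩
        exact AffineSubspace.vadd_mem_of_mem_direction hv hx
    rw [h3, Set.ncard_image_of_injective _ (add_left_injective x), ← hC.2,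
      ← Module.card_eq_pow_finrank (K := F) (V := C.direction), ← Nat.card_eq_fintype_card]
    rfl
  rw [h, Set.ncard_sdiff_singleton_of_mem hx, h2]

/-! ### A second-moment bound for incidence structures -/

/-- Let `Y` be partitioned by `r` into classes of size `k`, and suppose that two points of `Y` lie
on `a` common blocks of `K` if they are equivalent and on `b ≤ a` otherwise.  Then the degrees of
the points into a family `A` of blocks have small variance.  Writing `φ` for the centred degree
function, `∑ φ²` is the sum over the blocks in `A` of the block sums of `φ`; by Cauchy–Schwarz
it is controlled by the second moment of the block sums over all of `K`, where the constant `b`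
contributes nothing because `∑ φ = 0`. -/
lemma variance_le {α β : Type*} (Y : Finset α) (K A : Finset β) (I : α → β → Prop)
    (r : α → α → Prop) [∀ y C, Decidable (I y C)] [∀ y z, Decidable (r y z)] (hA : A ⊆ K)
    (a b k m : ℝ) (hb : 0 ≤ b) (hba : b ≤ a) (hk : 0 ≤ k)
    (hr : ∀ y z, r y z → r z y)
    (hrk : ∀ y ∈ Y, ((Y.filter (r y)).card : ℝ) = k)
    (hN : ∀ y ∈ Y, ∀ z ∈ Y, ((K.filter fun C => I y C ∧ I z C).card : ℝ) =
      if r y z then a else b)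
    (hm : ∑ y ∈ Y, (((A.filter (I y)).card : ℝ) - m) = 0) :
    ∑ y ∈ Y, (((A.filter (I y)).card : ℝ) - m) ^ 2 ≤ A.card * (a * k) := by
  set φ : α → ℝ := fun y => ((A.filter (I y)).card : ℝ) - m with hφ
  set S : ℝ := ∑ y ∈ Y, φ y ^ 2 with hS
  let ψ : β → ℝ := fun C => ∑ y ∈ Y, if I y C then φ y else 0
  change S ≤ _
  have hφ0 : ∑ y ∈ Y, φ y = 0 := hm
  have hS0 : 0 ≤ S := Finset.sum_nonneg fun y _ => sq_nonneg _
  have h1 : S = ∑ C ∈ A, ψ C := by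
    have : S = ∑ y ∈ Y, φ y * ((A.filter (I y)).card : ℝ) := by
      have e : ∀ y ∈ Y, φ y * ((A.filter (I y)).card : ℝ) = φ y ^ 2 + m * φ y := by
        intro y _
        simp only [hφ]
        ring
      rw [Finset.sum_congr rfl e, Finset.sum_add_distrib, ← Finset.mul_sum, hφ0]
      simp [hS]
    rw [this, Finset.sum_comm]
    refine Finset.sum_congr rfl fun y _ => ?_
    rw [← Finset.sum_filter, Finset.sum_const, nsmul_eq_mul, mul_comm]
  have h2 : ∑ C ∈ K, ψ C ^ 2 = ∑ y ∈ Y, ∑ z ∈ Y, φ y * φ z * (if r y z then a else b) := by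
    have e : ∀ C ∈ K, ψ C ^ 2 =
        ∑ y ∈ Y, ∑ z ∈ Y, if I y C ∧ I z C then φ y * φ z else 0 := by
      intro C _
      rw [sq, Finset.sum_mul_sum]
      refine Finset.sum_congr rfl fun y _ => Finset.sum_congr rfl fun z _ => ?_
      by_cases hy : I y C <;> by_cases hz : I z C <;> simp [hy, hz]
    rw [Finset.sum_congr rfl e, Finset.sum_comm]
    refine Finset.sum_congr rfl fun y hy => ?_
    rw [Finset.sum_comm]
    refine Finset.sum_congr rfl fun z hz => ?_
    rw [← Finset.sum_filter, Finset.sum_const, nsmul_eq_mul, hN y hy z hz, mul_comm]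
  have hrow : ∑ y ∈ Y, ∑ z ∈ Y, (if r y z then φ y ^ 2 else 0) = k * S := by
    rw [hS, Finset.mul_sum]
    refine Finset.sum_congr rfl fun y hy => ?_
    rw [← Finset.sum_filter, Finset.sum_const, nsmul_eq_mul, hrk y hy]
  have hcol : ∑ y ∈ Y, ∑ z ∈ Y, (if r y z then φ z ^ 2 else 0) = k * S := by
    rw [← hrow, Finset.sum_comm]
    refine Finset.sum_congr rfl fun y _ => Finset.sum_congr rfl fun z _ => ?_
    simp only [show r z y ↔ r y z from ⟨hr _ _, hr _ _⟩]
  have h3 : ∑ y ∈ Y, ∑ z ∈ Y, φ y * φ z * (if r y z then a else b) ≤ (a - b) * (k * S) := by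
    have e : ∑ y ∈ Y, ∑ z ∈ Y, φ y * φ z * (if r y z then a else b) ≤
        ∑ y ∈ Y, ∑ z ∈ Y, (b * (φ y * φ z) + (a - b) / 2 *
          ((if r y z then φ y ^ 2 else 0) + (if r y z then φ z ^ 2 else 0))) := by
      refine Finset.sum_le_sum fun y _ => Finset.sum_le_sum fun z _ => ?_
      split_ifs
      · nlinarith [mul_nonneg (sub_nonneg.2 hba) (sq_nonneg (φ y - φ z))]
      · exact le_of_eq (by ring)
    refine e.trans (le_of_eq ?_)
    simp only [Finset.sum_add_distrib, ← Finset.mul_sum, hrow, hcol]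
    rw [← Finset.sum_mul, hφ0]
    ring
  have h4 : S ^ 2 ≤ A.card * ((a - b) * (k * S)) := by
    rw [h1]
    refine sq_sum_le_card_mul_sum_sq.trans ?_
    rw [← h1]
    refine mul_le_mul_of_nonneg_left ?_ (Nat.cast_nonneg _)
    rw [h2.symm] at h3
    exact (Finset.sum_le_sum_of_subset_of_nonneg hA fun C _ _ => sq_nonneg _).trans h3
  have h5 : (A.card : ℝ) * ((a - b) * (k * S)) ≤ A.card * (a * (k * S)) := by
    gcongr
    linarith
  rcases hS0.eq_or_lt with h | h
  · rw [← h]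
    exact mul_nonneg (Nat.cast_nonneg _) (mul_nonneg (hb.trans hba) hk)
  · refine le_of_mul_le_mul_right ?_ h
    nlinarith

/-! ### Degrees of the points into a family of cubes -/

lemma tail_arith {q a Y A K μ : ℝ} (hq : 1 < q) (ha : 0 < a) (hY : 0 ≤ Y) (hK : 0 < K)
    (hμ : 0 ≤ μ) (hA : A = μ * K) (hKa : K * (q ^ 3 - 1) = Y * a) :
    4 / a ^ 2 * (A * (a * (q - 1))) ≤ 4 * μ * (Y / q ^ 2) := by
  have hq0 : 0 < q - 1 := by linarith
  have hQ : 0 < q ^ 2 + q + 1 := by positivity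
  have hY' : Y = K * ((q - 1) * (q ^ 2 + q + 1)) / a := by
    rw [eq_div_iff ha.ne', ← hKa]
    ring
  have e : 4 / a ^ 2 * (A * (a * (q - 1))) = 4 * μ * (Y / (q ^ 2 + q + 1)) := by
    rw [hA, hY']
    field_simp
  rw [e]
  gcongr
  linarith

/-- For a family `A` of cubes through `x`, few points `y` see an `A`-density among the cubes
through `x` and `y` exceeding twice the density `μ_x(A)`.  This is Chebyshev's inequality for
`y ↦ μ_{x,y}(A)`, whose variance is at most `μ_x(A) (q - 1) / (q³ - 1)`; where the density `f`
exceeds `2 μ`, one has `f² ≤ 4 (f - μ)²`. -/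
lemma tail_le {F : Type} [Field F] [Fintype F] [DecidableEq F] {n : ℕ} (x : Fin n → F)
    (A : Set (AffineSubspace F (Fin n → F))) (hA : A ⊆ cubesOn F n x) :
    ∑ y ∈ Finset.univ.filter (fun y => y ≠ x),
      (if 2 * muX F n x A < muXY F n x y {C ∈ A | y ∈ C} then
        muXY F n x y {C ∈ A | y ∈ C} ^ 2 else 0) ≤
      4 * muX F n x A * (((Fintype.card F : ℝ) ^ n - 1) / (Fintype.card F : ℝ) ^ 2) := by
  classical
  let _ : Fintype (AffineSubspace F (Fin n → F)) := Fintype.ofFinite _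
  set q : ℝ := (Fintype.card F : ℝ) with hq
  have hq1 : 1 < q := by
    rw [hq]
    exact_mod_cast Fintype.one_lt_card
  have hqn : 1 ≤ q ^ n := one_le_pow₀ hq1.le
  set Y : Finset (Fin n → F) := Finset.univ.filter (fun y => y ≠ x) with hY
  set K : Finset (AffineSubspace F (Fin n → F)) := Finset.univ.filter (· ∈ cubesOn F n x) with hK
  set A' : Finset (AffineSubspace F (Fin n → F)) := Finset.univ.filter (· ∈ A) with hA'
  have hcard : ∀ {δ : Type} [Fintype δ] (s : Set δ), s.ncard = (Finset.univ.filter (· ∈ s)).card := by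
    intro δ _ s
    rw [← Set.ncard_coe_finset]
    congr
    ext
    simp
  have hAK : A' ⊆ K := fun C hC => by
    simp only [hA', hK, Finset.mem_filter, Finset.mem_univ, true_and] at hC ⊢
    exact hA hC
  have hmuX : muX F n x A = (A'.card : ℝ) / K.card := by
    rw [muX, hcard, hcard]
  have hrhs : 0 ≤ 4 * muX F n x A * ((q ^ n - 1) / q ^ 2) := by
    rw [hmuX]
    have : 0 ≤ q ^ n - 1 := by linarith
    positivity
  have hYcard : (Y.card : ℝ) = q ^ n - 1 := by
    have : Y = Finset.univ.erase x := by
      ext y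
      simp [hY]
    rw [this, Finset.card_erase_of_mem (Finset.mem_univ x), Finset.card_univ,
      Nat.cast_sub Fintype.card_pos]
    simp [hq]
  -- `a` and `b` count the cubes through `x` and one, respectively two non-collinear, further points
  obtain ⟨a, ha⟩ : ∃ a : ℕ, ∀ y ∈ Y, (cubesOn2 F n x y).ncard = a := by
    by_cases h : ∃ y, y ≠ x
    · obtain ⟨y, hy⟩ := h
      refine ⟨(cubesOn2 F n x y).ncard, fun y' hy' => ncard_cubesOn2_eq ?_ hy⟩
      simpa [hY] using hy'
    · refine ⟨0, fun y hy => absurd ⟨y, ?_⟩ h⟩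
      simpa [hY] using hy
  obtain ⟨b, hba, hb⟩ : ∃ b : ℕ, b ≤ a ∧ ∀ y ∈ Y, ∀ z ∈ Y, ¬ Collin F n x y z →
      {C | IsCube F n C ∧ x ∈ C ∧ y ∈ C ∧ z ∈ C}.ncard = b := by
    by_cases h : ∃ y ∈ Y, ∃ z ∈ Y, ¬ Collin F n x y z
    · obtain ⟨y, hy, z, hz, hyz⟩ := h
      refine ⟨{C | IsCube F n C ∧ x ∈ C ∧ y ∈ C ∧ z ∈ C}.ncard, ?_, fun y' hy' z' hz' h' => ?_⟩
      · rw [← ha y hy]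
        exact Set.ncard_le_ncard (fun C hC => ⟨hC.1, hC.2.1, hC.2.2.1⟩) (Set.toFinite _)
      · simp only [hY, Finset.mem_filter, Finset.mem_univ, true_and] at hy hz hy' hz'
        exact ncard_cubes_three_eq hy' hz' h' hy hz hyz
    · push Not at h
      exact ⟨0, Nat.zero_le _, fun y hy z hz hyz => absurd (h y hy z hz) hyz⟩
  have hmuXY : ∀ y ∈ Y, muXY F n x y {C ∈ A | y ∈ C} =
      ((A'.filter fun C => y ∈ C).card : ℝ) / a := by
    intro y hy
    rw [muXY, ha y hy, hcard, hA', Finset.filter_filter]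
    simp
  rcases Nat.eq_zero_or_pos a with ha0 | ha0
  · -- no cube passes through two points, and the convention `t / 0 = 0` makes the sum vanish
    refine le_trans (le_of_eq (Finset.sum_eq_zero fun y hy => ?_)) hrhs
    rw [hmuXY y hy, ha0]
    simp
  have hKs : ∀ C ∈ K, (Y.filter fun y => y ∈ C).card = Fintype.card F ^ 3 - 1 := by
    intro C hC
    simp only [hK, Finset.mem_filter, Finset.mem_univ, true_and] at hC
    rw [← ncard_cube_sdiff hC.1 hC.2, hcard, hY, Finset.filter_filter]
    simp
  have hYa : ∀ y ∈ Y, (K.filter fun C => y ∈ C).card = a := by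
    intro y hy
    rw [← ha y hy, hcard, hK, Finset.filter_filter]
    congr 1
    ext C
    rw [Finset.mem_filter, Finset.mem_filter]
    simp [cubesOn, cubesOn2, and_assoc]
  set s : ℝ := q ^ 3 - 1 with hs
  have hs_cast : ((Fintype.card F ^ 3 - 1 : ℕ) : ℝ) = s := by
    rw [Nat.cast_sub (Nat.one_le_pow _ _ Fintype.card_pos)]
    simp [hs, hq]
  have hdc : ∀ B ⊆ K, ∑ y ∈ Y, ((B.filter fun C => y ∈ C).card : ℝ) = B.card * s := by
    intro B hB
    have : ∑ y ∈ Y, (B.filter fun C => y ∈ C).card =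
        ∑ C ∈ B, (Y.filter fun y => y ∈ C).card :=
      Finset.sum_card_bipartiteAbove_eq_sum_card_bipartiteBelow (fun y C => y ∈ C)
    rw [Finset.sum_congr rfl fun C hC => hKs C (hB hC), Finset.sum_const, smul_eq_mul] at this
    have h := congrArg (Nat.cast (R := ℝ)) this
    rw [Nat.cast_sum, Nat.cast_mul, hs_cast] at h
    exact h
  have hKa : (K.card : ℝ) * s = Y.card * a := by
    rw [← hdc K subset_rfl, Finset.sum_congr rfl fun y hy => by rw [hYa y hy], Finset.sum_const,
      nsmul_eq_mul]
  rcases Y.eq_empty_or_nonempty with hY0 | hYne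
  · rw [hY0, Finset.sum_empty]
    exact hrhs
  have ha' : (0 : ℝ) < a := by exact_mod_cast ha0
  have hYpos : (0 : ℝ) < Y.card := by exact_mod_cast hYne.card_pos
  have hspos : 0 < s := by
    have : 1 < q ^ 3 := one_lt_pow₀ hq1 (by norm_num)
    linarith
  have hKpos : (0 : ℝ) < K.card := by
    have : 0 < (K.card : ℝ) * s := by rw [hKa]; positivity
    exact pos_of_mul_pos_left this hspos.le
  set μ : ℝ := muX F n x A with hμ
  have hvar := variance_le Y K A' (fun y C => y ∈ C) (Collin F n x) hAK a b (q - 1) (μ * a)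
    (Nat.cast_nonneg _) (by exact_mod_cast hba) (by linarith) (fun y z => collin_symm)
    (by
      intro y hy
      have hyx : y ≠ x := by simpa [hY] using hy
      have h := ncard_collin hyx
      rw [hcard] at h
      rw [hY, Finset.filter_filter]
      have h' := congrArg (Nat.cast (R := ℝ)) h
      rw [Nat.cast_sub Fintype.card_pos] at h'
      simpa using h')
    (by
      intro y hy z hz
      split_ifs with hyz
      · rw [← hYa y hy]
        congr 2
        refine Finset.filter_congr fun C hC => ⟨fun h => h.1, fun h => ⟨h, ?_⟩⟩
        simp only [hK, Finset.mem_filter, Finset.mem_univ, true_and] at hC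
        exact mem_of_collin hyz hC.2 h
      · rw [← hb y hy z hz hyz, hcard, hK, Finset.filter_filter]
        simp only [cubesOn, Set.mem_ofPred_eq, and_assoc])
    (by
      rw [Finset.sum_sub_distrib, hdc A' hAK, Finset.sum_const, nsmul_eq_mul, hmuX]
      field_simp
      linear_combination (A'.card : ℝ) * hKa)
  have hpt : ∀ y ∈ Y, (if 2 * μ < muXY F n x y {C ∈ A | y ∈ C} then
      muXY F n x y {C ∈ A | y ∈ C} ^ 2 else 0) ≤
      4 / (a : ℝ) ^ 2 * (((A'.filter fun C => y ∈ C).card : ℝ) - μ * a) ^ 2 := by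
    intro y hy
    split_ifs with h
    · rw [hmuXY y hy] at h ⊢
      set c : ℝ := ((A'.filter fun C => y ∈ C).card : ℝ)
      have e : 4 / (a : ℝ) ^ 2 * (c - μ * a) ^ 2 = (2 * (c / a - μ)) ^ 2 := by
        field_simp
        ring
      rw [e]
      refine pow_le_pow_left₀ (by positivity) ?_ 2
      linarith
    · positivity
  refine (Finset.sum_le_sum hpt).trans ?_
  rw [← Finset.mul_sum]
  refine (mul_le_mul_of_nonneg_left hvar (by positivity)).trans ?_
  have hμ0 : 0 ≤ μ := by
    rw [hmuX]
    exact div_nonneg (Nat.cast_nonneg _) hKpos.le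
  rw [← hYcard]
  exact tail_arith hq1 ha' hYpos.le hKpos hμ0 (hmuX.symm ▸ (div_mul_cancel₀ _ hKpos.ne').symm) hKa

/-! ### The expectation over pairs of points -/

/-- `μ_{x,y}(A)²` if `μ_{x,y}(A) > 2 μ_x(A)` and `0` otherwise, for `A = ℱ_{x,σ}`. -/
noncomputable def bump (F : Type) [Field F] [Fintype F] (n : ℕ)
    (T : AffineSubspace F (Fin n → F) → (Fin n → F) → F)
    (g : (Fin n → F) → F → MvPolynomial (Fin n) F) (x : Fin n → F) (σ : F) (y : Fin n → F) : ℝ :=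
  if 2 * muX F n x (calF F n T g x σ) < muXY F n x y {C ∈ calF F n T g x σ | y ∈ C} then
    muXY F n x y {C ∈ calF F n T g x σ | y ∈ C} ^ 2 else 0

lemma bump_nonneg {F : Type} [Field F] [Fintype F] {n : ℕ}
    (T : AffineSubspace F (Fin n → F) → (Fin n → F) → F)
    (g : (Fin n → F) → F → MvPolynomial (Fin n) F) (x : Fin n → F) (σ : F) (y : Fin n → F) :
    0 ≤ bump F n T g x σ y := by
  unfold bump
  split_ifs
  · exact sq_nonneg _
  · exact le_rfl

lemma muXY_nonneg {F : Type} [Field F] [Fintype F] {n : ℕ} (x y : Fin n → F)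
    (A : Set (AffineSubspace F (Fin n → F))) : 0 ≤ muXY F n x y A :=
  div_nonneg (Nat.cast_nonneg _) (Nat.cast_nonneg _)

lemma muXY_comm {F : Type} [Field F] [Fintype F] {n : ℕ} (x y : Fin n → F)
    (A : Set (AffineSubspace F (Fin n → F))) : muXY F n x y A = muXY F n y x A := by
  have : cubesOn2 F n x y = cubesOn2 F n y x := by
    ext C
    simp only [cubesOn2, Set.mem_ofPred_eq, and_comm (a := x ∈ C)]
  rw [muXY, muXY, this]

lemma muXY_mono {F : Type} [Field F] [Fintype F] {n : ℕ} (x y : Fin n → F)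
    {A B : Set (AffineSubspace F (Fin n → F))} (h : A ⊆ B) : muXY F n x y A ≤ muXY F n x y B :=
  div_le_div_of_nonneg_right (by exact_mod_cast Set.ncard_le_ncard h (Set.toFinite _))
    (Nat.cast_nonneg _)

/-- For fixed `(x, σ)` and `y`, the only `τ` for which `ℱ_{x,σ} ∩ ℱ_{y,τ}` can be nonempty is
`τ = g_{x,σ}(y)`, so the sum over `τ` has a single term. -/
lemma sum_tau_le {F : Type} [Field F] [Fintype F] {n : ℕ}
    (T : AffineSubspace F (Fin n → F) → (Fin n → F) → F)
    (g : (Fin n → F) → F → MvPolynomial (Fin n) F) (x : Fin n → F) (σ : F) (y : Fin n → F) :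
    ∑ τ : F, muXY F n x y (calF F n T g x σ ∩ calF F n T g y τ) ^ 2 *
      (if 2 * muX F n x (calF F n T g x σ) <
        muXY F n x y (calF F n T g x σ ∩ calF F n T g y τ) then (1 : ℝ) else 0) ≤
      bump F n T g x σ y := by
  rw [Finset.sum_eq_single (eval y (g x σ))]
  · have hsub : calF F n T g x σ ∩ calF F n T g y (eval y (g x σ)) ⊆
        {C ∈ calF F n T g x σ | y ∈ C} := fun C hC => ⟨hC.1, hC.2.1.2.1⟩
    have hle := muXY_mono x y hsub
    split_ifs with h
    · rw [mul_one, bump, if_pos (h.trans_le hle)]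
      exact pow_le_pow_left₀ (muXY_nonneg _ _ _) hle 2
    · rw [mul_zero]
      exact bump_nonneg T g x σ y
  · intro τ _ hτ
    have : calF F n T g x σ ∩ calF F n T g y τ = ∅ := by
      refine Set.eq_empty_of_forall_notMem fun C hC => hτ ?_
      rw [← hC.2.1.2.2]
      exact hC.1.2 y hC.2.1.2.1
    rw [this]
    simp [muXY]
  · intro h
    exact absurd (Finset.mem_univ _) h

/-- The families `ℱ_{x,σ}`, for varying `σ`, are disjoint. -/
lemma sum_muX_le_one {F : Type} [Field F] [Fintype F] {n : ℕ}
    (T : AffineSubspace F (Fin n → F) → (Fin n → F) → F)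
    (g : (Fin n → F) → F → MvPolynomial (Fin n) F) (x : Fin n → F) :
    ∑ σ : F, muX F n x (calF F n T g x σ) ≤ 1 := by
  classical
  let _ : Fintype (AffineSubspace F (Fin n → F)) := Fintype.ofFinite _
  simp only [muX]
  rw [← Finset.sum_div]
  refine div_le_one_of_le₀ ?_ (Nat.cast_nonneg _)
  have h : ∀ σ : F, (calF F n T g x σ).ncard ≤
      ((cubesOn F n x).toFinset.filter fun C => T C x = σ).card := by
    intro σ
    rw [← Set.ncard_coe_finset]
    refine Set.ncard_le_ncard (fun C hC => ?_) (Set.toFinite _)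
    simp only [Finset.coe_filter, Set.mem_toFinset, Set.mem_ofPred_eq]
    exact ⟨⟨hC.1.1, hC.1.2.1⟩, hC.1.2.2⟩
  have h2 : ∑ σ : F, (calF F n T g x σ).ncard ≤ (cubesOn F n x).ncard := by
    refine (Finset.sum_le_sum fun σ _ => h σ).trans ?_
    rw [Set.ncard_eq_toFinset_card',
      Finset.card_eq_sum_card_fiberwise (f := fun C => T C x) (t := Finset.univ) (by simp)]
  exact_mod_cast h2

lemma finsum_mem_eq_sum_ite {α : Type*} [Fintype α] (s : Set α) [DecidablePred (· ∈ s)]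
    (f : α → ℝ) : ∑ᶠ a ∈ s, f a = ∑ a, if a ∈ s then f a else 0 := by
  rw [finsum_mem_def, finsum_eq_sum_of_fintype]
  exact Finset.sum_congr rfl fun a _ => Set.indicator_apply _ _ _

lemma epsT_le_one {F : Type} [Field F] [Fintype F] {n : ℕ}
    (T : AffineSubspace F (Fin n → F) → (Fin n → F) → F) : epsT F n T ≤ 1 := by
  refine div_le_one_of_le₀ ?_ (Nat.cast_nonneg _)
  refine Nat.cast_le.2 (Set.ncard_le_ncard ?_ (Set.toFinite _))
  exact fun p hp => hp.1

/-- The total weight of the bumps, over all `x`, `y ≠ x` and `σ`. -/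
lemma sum_bump_le {F : Type} [Field F] [Fintype F] [DecidableEq F] {n : ℕ}
    (T : AffineSubspace F (Fin n → F) → (Fin n → F) → F)
    (g : (Fin n → F) → F → MvPolynomial (Fin n) F) :
    ∑ x : Fin n → F, ∑ y ∈ Finset.univ.filter (fun y => y ≠ x), ∑ σ : F, bump F n T g x σ y ≤
      4 * ((Fintype.card F : ℝ) ^ n * (((Fintype.card F : ℝ) ^ n - 1) /
        (Fintype.card F : ℝ) ^ 2)) := by
  set q : ℝ := (Fintype.card F : ℝ) with hq
  have hq1 : 1 ≤ q := by
    rw [hq]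
    exact_mod_cast Fintype.card_pos
  have hR : 0 ≤ (q ^ n - 1) / q ^ 2 :=
    div_nonneg (sub_nonneg.2 (one_le_pow₀ hq1)) (sq_nonneg _)
  have hx : ∀ x ∈ (Finset.univ : Finset (Fin n → F)),
      ∑ y ∈ Finset.univ.filter (fun y => y ≠ x), ∑ σ : F, bump F n T g x σ y ≤
        4 * ((q ^ n - 1) / q ^ 2) := by
    intro x _
    rw [Finset.sum_comm]
    refine (Finset.sum_le_sum fun σ _ =>
      tail_le x (calF F n T g x σ) fun C hC => ⟨hC.1.1, hC.1.2.1⟩).trans ?_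
    rw [← Finset.sum_mul, ← Finset.mul_sum]
    have := sum_muX_le_one T g x
    refine mul_le_mul_of_nonneg_right ?_ hR
    linarith
  refine (Finset.sum_le_sum hx).trans (le_of_eq ?_)
  rw [Finset.sum_const, Finset.card_univ, nsmul_eq_mul, Fintype.card_fun, Fintype.card_fin]
  push_cast
  ring

/-- With `H_{x,σ}(y,τ)` the indicator that
`μ_{x,y}(ℱ_{x,σ} ∩ ℱ_{y,τ}) > 2μ_x(ℱ_{x,σ})`, the expectation over a uniform ordered pair of
distinct points `(x, y)` of
`Σ_{σ,τ excellent} μ_{x,y}(ℱ_{x,σ} ∩ ℱ_{y,τ})² (H_{x,σ}(y,τ) + H_{y,τ}(x,σ))` is at most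
`400·log₂(5/ε)/q²` (stated with the sum over pairs on the left and the expectation denominator
`q^n(q^n − 1)` multiplied through). -/
theorem bumps_negligible {F : Type} [Field F] [Fintype F] {n d : ℕ}
    (hn : 6 ≤ n) (hd : 1 ≤ d)
    (hq : (11 * d : ℝ) < (Fintype.card F : ℝ) ^ ((1 : ℝ) / 9))
    (T : AffineSubspace F (Fin n → F) → (Fin n → F) → F)
    (hT : DegTable F n d T)
    (hε : 10 ^ 7 * (d : ℝ) ^ 6 / (Fintype.card F : ℝ) ≤ epsT F n T)
    (g : (Fin n → F) → F → MvPolynomial (Fin n) F)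
    (hg : ∀ (x : Fin n → F) (σ : F), Excellent F n T d (epsT F n T) x σ →
      (g x σ).totalDegree ≤ d ∧
      (1 - 2 * Real.sqrt (gam d)) * ((cubesVal F n T x σ).ncard : ℝ) ≤
        ((calF F n T g x σ).ncard : ℝ)) :
    ∑ᶠ x : Fin n → F, ∑ᶠ y ∈ {y : Fin n → F | y ≠ x},
        ∑ᶠ st ∈ {st : F × F | Excellent F n T d (epsT F n T) x st.1 ∧
            Excellent F n T d (epsT F n T) y st.2},
          (muXY F n x y (calF F n T g x st.1 ∩ calF F n T g y st.2)) ^ 2 *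
            ((if 2 * muX F n x (calF F n T g x st.1) <
                muXY F n x y (calF F n T g x st.1 ∩ calF F n T g y st.2) then (1 : ℝ) else 0) +
             (if 2 * muX F n y (calF F n T g y st.2) <
                muXY F n x y (calF F n T g x st.1 ∩ calF F n T g y st.2) then (1 : ℝ) else 0)) ≤
      400 * Real.logb 2 (5 / epsT F n T) / (Fintype.card F : ℝ) ^ 2 *
        ((Fintype.card F : ℝ) ^ n * ((Fintype.card F : ℝ) ^ n - 1)) := by
  classical
  have hq1 : (1 : ℝ) ≤ (Fintype.card F : ℝ) := by exact_mod_cast Fintype.card_pos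
  have hε0 : 0 < epsT F n T := by
    refine lt_of_lt_of_le ?_ hε
    have : (0 : ℝ) < d := by exact_mod_cast hd
    positivity
  have hlog : 2 ≤ Real.logb 2 (5 / epsT F n T) := by
    rw [Real.le_logb_iff_rpow_le (by norm_num) (by positivity), le_div_iff₀ hε0]
    have := epsT_le_one T
    norm_num
    linarith
  have hpt : ∀ x y : Fin n → F,
      ∑ᶠ st ∈ {st : F × F | Excellent F n T d (epsT F n T) x st.1 ∧
            Excellent F n T d (epsT F n T) y st.2},
          (muXY F n x y (calF F n T g x st.1 ∩ calF F n T g y st.2)) ^ 2 *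
            ((if 2 * muX F n x (calF F n T g x st.1) <
                muXY F n x y (calF F n T g x st.1 ∩ calF F n T g y st.2) then (1 : ℝ) else 0) +
             (if 2 * muX F n y (calF F n T g y st.2) <
                muXY F n x y (calF F n T g x st.1 ∩ calF F n T g y st.2) then (1 : ℝ) else 0)) ≤
        ∑ σ : F, bump F n T g x σ y + ∑ τ : F, bump F n T g y τ x := by
    intro x y
    rw [finsum_mem_eq_sum_ite]
    refine le_trans (Finset.sum_le_sum (g := fun st : F × F =>
      (muXY F n x y (calF F n T g x st.1 ∩ calF F n T g y st.2)) ^ 2 *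
            (if 2 * muX F n x (calF F n T g x st.1) <
                muXY F n x y (calF F n T g x st.1 ∩ calF F n T g y st.2) then (1 : ℝ) else 0) +
      (muXY F n y x (calF F n T g y st.2 ∩ calF F n T g x st.1)) ^ 2 *
             (if 2 * muX F n y (calF F n T g y st.2) <
                muXY F n y x (calF F n T g y st.2 ∩ calF F n T g x st.1) then (1 : ℝ) else 0))
      fun st _ => ?_) ?_
    · rw [muXY_comm y x, Set.inter_comm (calF F n T g y st.2), ← mul_add]
      split_ifs <;> first | exact le_rfl | positivity
    · rw [Finset.sum_add_distrib, Fintype.sum_prod_type, Fintype.sum_prod_type_right]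
      exact add_le_add (Finset.sum_le_sum fun σ _ => sum_tau_le T g x σ y)
        (Finset.sum_le_sum fun τ _ => sum_tau_le T g y τ x)
  have hB := sum_bump_le T g
  rw [finsum_eq_sum_of_fintype]
  have hx : ∀ x : Fin n → F, ∑ᶠ y ∈ {y : Fin n → F | y ≠ x},
        ∑ᶠ st ∈ {st : F × F | Excellent F n T d (epsT F n T) x st.1 ∧
            Excellent F n T d (epsT F n T) y st.2},
          (muXY F n x y (calF F n T g x st.1 ∩ calF F n T g y st.2)) ^ 2 *
            ((if 2 * muX F n x (calF F n T g x st.1) <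
                muXY F n x y (calF F n T g x st.1 ∩ calF F n T g y st.2) then (1 : ℝ) else 0) +
             (if 2 * muX F n y (calF F n T g y st.2) <
                muXY F n x y (calF F n T g x st.1 ∩ calF F n T g y st.2) then (1 : ℝ) else 0)) ≤
      ∑ y ∈ Finset.univ.filter (fun y => y ≠ x), ∑ σ : F, bump F n T g x σ y +
        ∑ y ∈ Finset.univ.filter (fun y => y ≠ x), ∑ τ : F, bump F n T g y τ x := by
    intro x
    rw [finsum_mem_eq_sum_ite, ← Finset.sum_filter, ← Finset.sum_add_distrib]
    exact Finset.sum_le_sum fun y _ => hpt x y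
  refine (Finset.sum_le_sum fun x _ => hx x).trans ?_
  have hswap : ∑ x : Fin n → F, ∑ y ∈ Finset.univ.filter (fun y => y ≠ x),
      ∑ τ : F, bump F n T g y τ x =
      ∑ x : Fin n → F, ∑ y ∈ Finset.univ.filter (fun y => y ≠ x),
        ∑ σ : F, bump F n T g x σ y := by
    simp only [Finset.sum_filter]
    rw [Finset.sum_comm]
    simp only [ne_comm]
  rw [Finset.sum_add_distrib, hswap]
  have hP : 0 ≤ (Fintype.card F : ℝ) ^ n * (((Fintype.card F : ℝ) ^ n - 1) /
      (Fintype.card F : ℝ) ^ 2) :=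
    mul_nonneg (by positivity) (div_nonneg (sub_nonneg.2 (one_le_pow₀ hq1)) (sq_nonneg _))
  have e : 400 * Real.logb 2 (5 / epsT F n T) / (Fintype.card F : ℝ) ^ 2 *
        ((Fintype.card F : ℝ) ^ n * ((Fintype.card F : ℝ) ^ n - 1)) =
      400 * Real.logb 2 (5 / epsT F n T) * ((Fintype.card F : ℝ) ^ n *
        (((Fintype.card F : ℝ) ^ n - 1) / (Fintype.card F : ℝ) ^ 2)) := by
    ring
  rw [e]
  -- the bumps contribute at most `8 / q²` in all, and `log₂ (5 / ε) ≥ 2` because `ε ≤ 1`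
  nlinarith [mul_le_mul_of_nonneg_right hlog hP]
end

section
/- Let x ∈ F_q^n with n ≥ 3, let ℱ_x be a subset of 𝒞_x with μ_x(ℱ_x) = η > 0, and let c > 1. Define Y_c = { y ∈ F_q^n, y ≠ x : μ_{x,y}(ℱ_x ∩ 𝒞_y) > c·η }. Then |Y_c|/q^n ≤ 4 / ((c − 1)²·η·q²). -/
/-!
Translating `x` to the origin turns the cubes through `x` into the `3`-dimensional subspaces `W` of
`V = F^n`. Write `N = q^n - 1`, `K = q^3 - 1`, let `D` be the number of these subspaces, `d` the
number containing a given nonzero vector, and let `Y` be the translate of `Y_c`. The argument is a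
second moment bound for `g(W) = |W ∩ Y|`.

* The general linear group is transitive on linearly independent `k`-tuples (`exists_equiv_map`),
  so `d` is well defined and `d N = D K` (`deg_mul`). Likewise the number of `W` containing two
  independent vectors is `d (q^3 - q) / (q^n - q) ≤ d K / N` (`codeg_mul`, `codeg_le`).
* A vector of `Y` has at most `q - 1` nonzero multiples, whence
  `∑ g² ≤ |Y| (q - 1) d + |Y|² d K / N`, that is, `∑ (g - m)² ≤ |Y| (q - 1) d` for the mean
  `m = |Y| d / D` (`second_moment`).
* By the definition of `Y_c`, the sum of `g - m` over the family is at least `(c - 1) η d |Y|`.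
  Cauchy-Schwarz on the family, which has `η D` members, then gives
  `(c - 1)² η |Y| (q² + q + 1) ≤ N` (`core`), stronger than required.
-/

open MvPolynomial

set_option linter.unusedSectionVars false

section Aux

open Finset

variable {F : Type*} [Field F] [Fintype F] {V : Type*} [AddCommGroup V] [Module F V] [Fintype V]

/-! ### Degrees and codegrees of vectors -/

/-- The general linear group acts transitively on linearly independent families. -/
lemma exists_equiv_map {k : ℕ} {v w : Fin k → V} (hv : LinearIndependent F v)
    (hw : LinearIndependent F w) : ∃ g : V ≃ₗ[F] V, ∀ i, g (v i) = w i := by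
  obtain ⟨g, hg⟩ := Submodule.exists_linearEquiv_restrict_eq
    (hv.linearCombinationEquiv.symm ≪≫ₗ hw.linearCombinationEquiv)
  refine ⟨g, fun i => ?_⟩
  have h := hg (hv.linearCombinationEquiv (Finsupp.single i 1))
  simpa using h.symm

variable (F V) in
open Classical in
/-- The `3`-dimensional linear subspaces of `V`. -/
noncomputable def spaces : Finset (Submodule F V) :=
  (Set.toFinite {W : Submodule F V | Module.finrank F W = 3}).toFinset

lemma mem_spaces {W : Submodule F V} : W ∈ spaces F V ↔ Module.finrank F W = 3 := by
  simp [spaces]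

variable (F) in
open Classical in
/-- The number of `3`-dimensional subspaces containing `y`. -/
noncomputable def deg (y : V) : ℕ := #{W ∈ spaces F V | y ∈ W}

variable (F) in
open Classical in
/-- The number of `3`-dimensional subspaces containing both `y` and `z`. -/
noncomputable def codeg (y z : V) : ℕ := #{W ∈ spaces F V | y ∈ W ∧ z ∈ W}

lemma codeg_le_deg (y z : V) : codeg F y z ≤ deg F y := by
  classical
  refine card_le_card fun W => ?_
  simp only [mem_filter]
  tauto

lemma map_mem_spaces (g : V ≃ₗ[F] V) {W : Submodule F V} (hW : W ∈ spaces F V) :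
    W.map (g : V →ₗ[F] V) ∈ spaces F V := by
  rw [mem_spaces] at *
  rw [← hW]
  exact LinearEquiv.finrank_map_eq g W

lemma codeg_map_le (g : V ≃ₗ[F] V) (y z : V) : codeg F y z ≤ codeg F (g y) (g z) := by
  classical
  refine card_le_card_of_injOn (fun W => W.map (g : V →ₗ[F] V)) (fun W hW => ?_)
    (Submodule.map_injective_of_injective g.injective).injOn
  simp only [coe_filter, Set.mem_ofPred_eq] at hW ⊢
  exact ⟨map_mem_spaces g hW.1, Submodule.mem_map_of_mem hW.2.1, Submodule.mem_map_of_mem hW.2.2⟩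

lemma codeg_map (g : V ≃ₗ[F] V) (y z : V) : codeg F (g y) (g z) = codeg F y z := by
  refine le_antisymm ?_ (codeg_map_le g y z)
  simpa using codeg_map_le g.symm (g y) (g z)

lemma deg_eq_codeg (y : V) : deg F y = codeg F y y := by
  classical
  exact congrArg card (filter_congr fun W _ => (and_self_iff (a := y ∈ W)).symm)

lemma deg_eq {y z : V} (hy : y ≠ 0) (hz : z ≠ 0) : deg F y = deg F z := by
  obtain ⟨g, hg⟩ := exists_equiv_map (F := F) (v := ![y]) (w := ![z])
    (by simpa using hy) (by simpa using hz)
  have : g y = z := by simpa using hg 0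
  rw [deg_eq_codeg, deg_eq_codeg, ← this, codeg_map]

lemma indep_of_notMem_span {y z : V} (hy : y ≠ 0) (hz : z ∉ Submodule.span F {y}) :
    LinearIndependent F ![y, z] := by
  rw [LinearIndependent.pair_iff' hy]
  intro a ha
  exact hz (Submodule.mem_span_singleton.2 ⟨a, ha⟩)

lemma codeg_eq {y z z' : V} (hy : y ≠ 0) (hz : z ∉ Submodule.span F {y})
    (hz' : z' ∉ Submodule.span F {y}) : codeg F y z = codeg F y z' := by
  obtain ⟨g, hg⟩ := exists_equiv_map (indep_of_notMem_span hy hz) (indep_of_notMem_span hy hz')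
  have h0 : g y = y := by simpa using hg 0
  have h1 : g z = z' := by simpa using hg 1
  rw [← codeg_map g, h0, h1]

/-! ### Double counting -/

/-- Counting the vectors of `W` outside a smaller subspace `U`. -/
lemma card_diff {U W : Submodule F V} (h : U ≤ W) [DecidablePred (· ∈ U)]
    [DecidablePred (· ∈ W)] :
    (#{z : V | z ∉ U ∧ z ∈ W} : ℝ) =
      (Fintype.card F : ℝ) ^ Module.finrank F W - (Fintype.card F : ℝ) ^ Module.finrank F U := by
  classical
  have key : ∀ X : Submodule F V, ∀ [DecidablePred (· ∈ X)],
      #{z : V | z ∈ X} = Fintype.card F ^ Module.finrank F X := by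
    intro X _
    rw [← Module.card_eq_pow_finrank (K := F) (V := X), Fintype.card_subtype]
  have e : #{z : V | z ∉ U ∧ z ∈ W} + #{z : V | z ∈ U} = #{z : V | z ∈ W} := by
    rw [← card_union_of_disjoint]
    · congr 1
      ext z
      have := @h z
      simp only [mem_union, mem_filter, mem_univ, true_and]
      tauto
    · rw [disjoint_filter]
      tauto
  rw [key, key] at e
  have e' : (#{z : V | z ∉ U ∧ z ∈ W} : ℝ) + (Fintype.card F : ℝ) ^ Module.finrank F U =
      (Fintype.card F : ℝ) ^ Module.finrank F W := by exact_mod_cast e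
  linarith

lemma deg_mul {y : V} (hy : y ≠ 0) :
    (deg F y : ℝ) * ((Fintype.card F : ℝ) ^ Module.finrank F V - 1) =
      #(spaces F V) * ((Fintype.card F : ℝ) ^ 3 - 1) := by
  classical
  have h := sum_card_bipartiteAbove_eq_sum_card_bipartiteBelow (fun (z : V) (W : Submodule F V) =>
    z ∈ W) (s := {z : V | z ∉ (⊥ : Submodule F V) ∧ z ∈ (⊤ : Submodule F V)}) (t := spaces F V)
  have h' := congrArg (Nat.cast : ℕ → ℝ) h
  push_cast at h'
  rw [sum_congr rfl (g := fun _ => (deg F y : ℝ)), sum_const, nsmul_eq_mul, card_diff bot_le,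
    sum_congr rfl (g := fun _ => (Fintype.card F : ℝ) ^ 3 - 1), sum_const, nsmul_eq_mul] at h'
  · simp only [finrank_top, finrank_bot, pow_zero] at h'
    linarith
  · intro W hW
    have := card_diff (F := F) (bot_le (a := W))
    rw [mem_spaces.1 hW, finrank_bot, pow_zero] at this
    rw [← this, bipartiteBelow, filter_filter]
    congr 2
    ext z
    simp
  · intro z hz
    simp only [mem_filter, Submodule.mem_bot, mem_univ, true_and] at hz
    rw [deg_eq (F := F) hy hz.1]
    rfl

lemma codeg_mul {y z : V} (hy : y ≠ 0) (hz : z ∉ Submodule.span F {y}) :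
    (codeg F y z : ℝ) * ((Fintype.card F : ℝ) ^ Module.finrank F V - Fintype.card F) =
      deg F y * ((Fintype.card F : ℝ) ^ 3 - Fintype.card F) := by
  classical
  have h := sum_card_bipartiteAbove_eq_sum_card_bipartiteBelow (fun (z : V) (W : Submodule F V) =>
    z ∈ W) (s := {z : V | z ∉ Submodule.span F {y} ∧ z ∈ (⊤ : Submodule F V)})
    (t := {W ∈ spaces F V | y ∈ W})
  have h' := congrArg (Nat.cast : ℕ → ℝ) h
  push_cast at h'
  rw [sum_congr rfl (g := fun _ => (codeg F y z : ℝ)), sum_const, nsmul_eq_mul, card_diff le_top,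
    sum_congr rfl (g := fun _ => (Fintype.card F : ℝ) ^ 3 - Fintype.card F), sum_const,
    nsmul_eq_mul] at h'
  · simp only [finrank_top, finrank_span_singleton hy, pow_one] at h'
    rw [deg]
    linarith
  · intro W hW
    rw [mem_filter] at hW
    have := card_diff (F := F) (U := Submodule.span F {y}) (W := W) (by simpa using hW.2)
    rw [mem_spaces.1 hW.1, finrank_span_singleton hy, pow_one] at this
    rw [← this, bipartiteBelow, filter_filter]
    congr 2
    ext z
    simp
  · intro z' hz'
    simp only [mem_filter, mem_univ, true_and] at hz'
    rw [codeg_eq (F := F) hy hz hz'.1, codeg, bipartiteAbove, filter_filter]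

lemma two_le_card : (2 : ℝ) ≤ Fintype.card F := by
  exact_mod_cast Fintype.one_lt_card (α := F)

/-- Containing two independent vectors is not positively correlated. -/
lemma codeg_le {y z : V} (hy : y ≠ 0)
    (hz : z ∉ Submodule.span F {y}) :
    (codeg F y z : ℝ) * ((Fintype.card F : ℝ) ^ Module.finrank F V - 1) ≤
      deg F y * ((Fintype.card F : ℝ) ^ 3 - 1) := by
  have h := codeg_mul hy hz
  have hq := two_le_card (F := F)
  have hc : (codeg F y z : ℝ) ≤ deg F y := by exact_mod_cast codeg_le_deg y z
  -- The two sides differ from those of `codeg_mul` by `codeg * (q - 1)` and `deg * (q - 1)`.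
  nlinarith

/-! ### The second moment bound -/

open Classical in
/-- The variance bound for `W ↦ |W ∩ Y|`. Any nonzero vector `y₀` serves to name the common
degree `d`, and the mean `m` is characterised by `m D = |Y| d`. -/
lemma second_moment (hn : 3 ≤ Module.finrank F V) {Y : Finset V} (hY : 0 ∉ Y) {y₀ : V}
    (hy₀ : y₀ ≠ 0) {m : ℝ} (hm : m * #(spaces F V) = #Y * deg F y₀) :
    ∑ W ∈ spaces F V, ((#{y ∈ Y | y ∈ W} : ℝ) - m) ^ 2 ≤
      #Y * ((Fintype.card F : ℝ) - 1) * deg F y₀ := by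
  have hq := two_le_card (F := F)
  set q : ℝ := (Fintype.card F : ℝ) with hqdef
  set d : ℝ := (deg F y₀ : ℝ) with hd
  set D : ℝ := (#(spaces F V) : ℝ) with hD
  set N : ℝ := q ^ Module.finrank F V - 1 with hN
  have hdN : d * N = D * (q ^ 3 - 1) := deg_mul hy₀
  have hNpos : 0 < N := by
    have : 1 < q ^ Module.finrank F V := one_lt_pow₀ (by linarith) (by omega)
    linarith
  have hY0 : ∀ y ∈ Y, y ≠ 0 := fun y hy h => hY (h ▸ hy)
  have first : ∑ W ∈ spaces F V, (#{y ∈ Y | y ∈ W} : ℝ) = #Y * d := by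
    have h := sum_card_bipartiteAbove_eq_sum_card_bipartiteBelow
      (fun (z : V) (W : Submodule F V) => z ∈ W) (s := Y) (t := spaces F V)
    have h' := congrArg (Nat.cast : ℕ → ℝ) h
    push_cast at h'
    rw [sum_congr rfl (g := fun _ => d), sum_const, nsmul_eq_mul] at h'
    · exact h'.symm
    · intro z hz
      rw [hd, deg_eq (F := F) hy₀ (hY0 z hz)]
      rfl
  have second : ∑ W ∈ spaces F V, (#{y ∈ Y | y ∈ W} : ℝ) ^ 2 =
      ∑ y ∈ Y, ∑ z ∈ Y, (codeg F y z : ℝ) := by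
    have e1 : ∀ W : Submodule F V, (#{y ∈ Y | y ∈ W} : ℝ) ^ 2 =
        ∑ y ∈ Y, ∑ z ∈ Y, if y ∈ W ∧ z ∈ W then (1 : ℝ) else 0 := by
      intro W
      rw [sq, ← sum_boole, sum_mul_sum]
      simp only [ite_and, ite_mul, one_mul, zero_mul]
    simp only [e1]
    rw [sum_comm]
    refine sum_congr rfl fun y _ => ?_
    rw [sum_comm]
    refine sum_congr rfl fun z _ => ?_
    rw [sum_boole, codeg]
  have inner : ∀ y ∈ Y, ∑ z ∈ Y, (codeg F y z : ℝ) ≤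
      (q - 1) * d + #Y * (d * (q ^ 3 - 1) / N) := by
    intro y hy
    have hy0 := hY0 y hy
    have hdy : (deg F y : ℝ) = d := by rw [hd, deg_eq (F := F) hy0 hy₀]
    have hpos : 0 ≤ d * (q ^ 3 - 1) / N := by
      have : 0 ≤ q ^ 3 - 1 := by nlinarith [one_le_pow₀ (n := 3) (by linarith : 1 ≤ q)]
      positivity
    rw [← sum_filter_add_sum_filter_not Y (fun z => z ∈ Submodule.span F {y})]
    refine add_le_add ?_ ?_
    · have hcard : (#{z ∈ Y | z ∈ Submodule.span F {y}} : ℝ) ≤ q - 1 := by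
        have h := card_diff (F := F) (bot_le (a := Submodule.span F {y}))
        rw [finrank_span_singleton hy0, finrank_bot, pow_zero, pow_one] at h
        rw [hqdef, ← h]
        norm_cast
        refine card_le_card fun z hz => ?_
        rw [mem_filter] at hz
        simpa using ⟨hY0 z hz.1, hz.2⟩
      calc _ ≤ ∑ z ∈ Y with z ∈ Submodule.span F {y}, d := by
            refine sum_le_sum fun z _ => ?_
            rw [← hdy]
            exact_mod_cast codeg_le_deg y z
        _ ≤ _ := by
            rw [sum_const, nsmul_eq_mul]
            exact mul_le_mul_of_nonneg_right hcard (Nat.cast_nonneg _)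
    · calc _ ≤ ∑ z ∈ Y with ¬ z ∈ Submodule.span F {y}, d * (q ^ 3 - 1) / N := by
            refine sum_le_sum fun z hz => ?_
            rw [le_div_iff₀ hNpos, ← hdy]
            exact codeg_le hy0 (mem_filter.1 hz).2
        _ ≤ _ := by
            rw [sum_const, nsmul_eq_mul]
            refine mul_le_mul_of_nonneg_right ?_ hpos
            exact_mod_cast card_filter_le _ _
  have outer := sum_le_sum inner
  rw [← second, sum_const, nsmul_eq_mul] at outer
  -- The off-diagonal contribution `|Y|² d K / N` equals `m² D`.
  have hmm : (#Y : ℝ) * (#Y * (d * (q ^ 3 - 1) / N)) = m ^ 2 * D := by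
    rw [← mul_div_assoc, ← mul_div_assoc, div_eq_iff hNpos.ne']
    linear_combination -(m * N) * hm - m * #Y * hdN - #Y * (q ^ 3 - 1) * hm
  have expand : ∑ W ∈ spaces F V, ((#{y ∈ Y | y ∈ W} : ℝ) - m) ^ 2 =
      ∑ W ∈ spaces F V, (#{y ∈ Y | y ∈ W} : ℝ) ^ 2 - m ^ 2 * D := by
    have : ∀ W : Submodule F V, ((#{y ∈ Y | y ∈ W} : ℝ) - m) ^ 2 =
        (#{y ∈ Y | y ∈ W} : ℝ) ^ 2 - 2 * m * #{y ∈ Y | y ∈ W} + m ^ 2 := fun W => by ring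
    simp only [this, sum_add_distrib, sum_sub_distrib, ← mul_sum, first, sum_const, nsmul_eq_mul]
    rw [← hD]
    linear_combination 2 * m * hm
  rw [expand]
  linarith

open Classical in
/-- The linear form of the statement: `Y` is a set of nonzero vectors each of which is covered by
the family `G`, of density `η`, with relative density at least `c η`. -/
lemma core (hn : 3 ≤ Module.finrank F V) {G : Finset (Submodule F V)} (hG : G ⊆ spaces F V)
    {Y : Finset V} (hY : 0 ∉ Y) {η c : ℝ} (hη : 0 < η) (hc : 1 < c)
    (hGη : (#G : ℝ) = η * #(spaces F V)) (hD : 0 < #(spaces F V))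
    (hYc : ∀ y ∈ Y, c * η * deg F y ≤ #{W ∈ G | y ∈ W}) :
    (#Y : ℝ) * ((c - 1) ^ 2 * η * (Fintype.card F : ℝ) ^ 2) ≤
      (Fintype.card F : ℝ) ^ Module.finrank F V := by
  have hq := two_le_card (F := F)
  rcases Y.eq_empty_or_nonempty with rfl | ⟨y₀, hy₀Y⟩
  · simp only [card_empty, Nat.cast_zero, zero_mul]
    positivity
  have hY0 : ∀ y ∈ Y, y ≠ 0 := fun y hy h => hY (h ▸ hy)
  have hy₀ := hY0 _ hy₀Y
  have hYpos : (0 : ℝ) < #Y := by exact_mod_cast card_pos.2 ⟨y₀, hy₀Y⟩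
  have hdN := deg_mul (F := F) hy₀
  have hvar := fun m hm => second_moment (F := F) hn hY hy₀ (m := m) hm
  set q : ℝ := (Fintype.card F : ℝ) with hqdef
  set D : ℝ := (#(spaces F V) : ℝ) with hDdef
  have hDpos : 0 < D := by rw [hDdef]; exact_mod_cast hD
  have hYc' : ∀ y ∈ Y, c * η * deg F y₀ ≤ (#{W ∈ G | y ∈ W} : ℝ) := fun y hy => by
    rw [deg_eq (F := F) hy₀ (hY0 y hy)]
    exact hYc y hy
  set d : ℝ := (deg F y₀ : ℝ) with hd
  set N : ℝ := q ^ Module.finrank F V - 1 with hN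
  have hNpos : 0 < N := by
    have : 1 < q ^ Module.finrank F V := one_lt_pow₀ (by linarith) (by omega)
    linarith
  have hK : 0 < q ^ 3 - 1 := by
    have : 1 < q ^ 3 := one_lt_pow₀ (by linarith) (by norm_num)
    linarith
  have hdpos : 0 < d := by
    have : 0 < d * N := by rw [hdN]; positivity
    exact pos_of_mul_pos_left this hNpos.le
  set m : ℝ := #Y * d / D with hm
  have hmD : m * D = #Y * d := by rw [hm]; field_simp
  have hvar := hvar m hmD
  have low : (c - 1) * η * d * #Y ≤ ∑ W ∈ G, ((#{y ∈ Y | y ∈ W} : ℝ) - m) := by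
    have h := sum_card_bipartiteAbove_eq_sum_card_bipartiteBelow
      (fun (z : V) (W : Submodule F V) => z ∈ W) (s := Y) (t := G)
    have h' := congrArg (Nat.cast : ℕ → ℝ) h
    push_cast at h'
    have h2 := sum_le_sum hYc'
    rw [sum_const, nsmul_eq_mul] at h2
    rw [sum_sub_distrib, sum_const, nsmul_eq_mul, hGη]
    change (∑ y ∈ Y, (#{W ∈ G | y ∈ W} : ℝ)) = ∑ W ∈ G, (#{y ∈ Y | y ∈ W} : ℝ) at h'
    rw [← h']
    nlinarith
  have cs := sq_sum_le_card_mul_sum_sq (s := G) (f := fun W => (#{y ∈ Y | y ∈ W} : ℝ) - m)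
  have sub : ∑ W ∈ G, ((#{y ∈ Y | y ∈ W} : ℝ) - m) ^ 2 ≤ #Y * (q - 1) * d :=
    (sum_le_sum_of_subset_of_nonneg hG fun _ _ _ => sq_nonneg _).trans hvar
  have main : ((c - 1) * η * d * #Y) ^ 2 ≤ η * D * (#Y * (q - 1) * d) := by
    refine (pow_le_pow_left₀ ?_ low 2).trans (cs.trans ?_)
    · have : 0 < c - 1 := by linarith
      positivity
    · rw [hGη]
      exact mul_le_mul_of_nonneg_left sub (by positivity)
  have main2 : (c - 1) ^ 2 * η * d * #Y ≤ D * (q - 1) := by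
    refine le_of_mul_le_mul_left ?_ (by positivity : 0 < η * d * #Y)
    linarith
  have main3 : (c - 1) ^ 2 * η * #Y * (q ^ 2 + q + 1) ≤ N := by
    refine le_of_mul_le_mul_left ?_ (by nlinarith : 0 < D * (q - 1))
    calc D * (q - 1) * ((c - 1) ^ 2 * η * #Y * (q ^ 2 + q + 1))
        = (c - 1) ^ 2 * η * #Y * (d * N) := by rw [hdN]; ring
      _ = (c - 1) ^ 2 * η * d * #Y * N := by ring
      _ ≤ _ := mul_le_mul_of_nonneg_right main2 hNpos.le
  have : 0 ≤ (c - 1) ^ 2 * η * #Y * (q + 1) := by positivity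
  linarith

end Aux

/-! ### From linear subspaces to cubes through a point -/

section Transfer

variable {F : Type} [Field F] [Fintype F] {n : ℕ}

lemma mk'_injective (x : Fin n → F) :
    Function.Injective (fun W : Submodule F (Fin n → F) => AffineSubspace.mk' x W) := by
  intro W W' h
  have := congrArg AffineSubspace.direction h
  simpa using this

lemma isCube_mk' (x : Fin n → F) (W : Submodule F (Fin n → F)) :
    IsCube F n (AffineSubspace.mk' x W) ↔ W ∈ spaces F (Fin n → F) := by
  rw [mem_spaces, IsCube, AffineSubspace.direction_mk']
  exact and_iff_right (AffineSubspace.mk'_nonempty x W)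

open Classical in
/-- Through `W ↦ x + W`, sets of cubes through `x` are counted by sets of `3`-dimensional linear
subspaces. -/
lemma ncard_eq (x : Fin n → F) {A : Set (AffineSubspace F (Fin n → F))}
    (hA : A ⊆ cubesOn F n x) :
    A.ncard = (Finset.filter (fun W => AffineSubspace.mk' x W ∈ A)
      (spaces F (Fin n → F))).card := by
  rw [← Set.ncard_coe_finset, ← Set.ncard_image_of_injective _ (mk'_injective x)]
  congr 1
  ext C
  simp only [Set.mem_image, Finset.coe_filter, Set.mem_ofPred_eq]
  constructor
  · intro hC
    have e := AffineSubspace.mk'_eq (hA hC).2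
    refine ⟨C.direction, ⟨?_, ?_⟩, e⟩
    · rw [← isCube_mk' x, e]
      exact (hA hC).1
    · rwa [e]
  · rintro ⟨W, ⟨-, hW⟩, rfl⟩
    exact hW

end Transfer

/-- For `ℱ_x ⊆ 𝒞_x` with `μ_x(ℱ_x) = η > 0` and `c > 1`, the set
`Y_c = {y ≠ x : μ_{x,y}(ℱ_x ∩ 𝒞_y) > cη}` has density at most `4/((c−1)²ηq²)` in `F_q^n`. -/
theorem bump_up {F : Type} [Field F] [Fintype F] {n : ℕ} (hn : 3 ≤ n)
    (x : Fin n → F) (Fx : Set (AffineSubspace F (Fin n → F))) (hFx : Fx ⊆ cubesOn F n x)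
    (η : ℝ) (hη : muX F n x Fx = η) (hηpos : 0 < η) (c : ℝ) (hc : 1 < c) :
    ({y : Fin n → F | y ≠ x ∧ c * η < muXY F n x y (Fx ∩ cubesOn F n y)}.ncard : ℝ) /
        (Fintype.card F : ℝ) ^ n ≤
      4 / ((c - 1) ^ 2 * η * (Fintype.card F : ℝ) ^ 2) := by
  classical
  set G : Finset (Submodule F (Fin n → F)) :=
    (spaces F (Fin n → F)).filter (fun W => AffineSubspace.mk' x W ∈ Fx) with hGdef
  have hD : (cubesOn F n x).ncard = (spaces F (Fin n → F)).card := by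
    rw [ncard_eq x subset_rfl, Finset.filter_true_of_mem]
    exact fun W hW => ⟨(isCube_mk' x W).2 hW, AffineSubspace.self_mem_mk' x W⟩
  have hd : ∀ y, (cubesOn2 F n x y).ncard = deg F (y - x) := by
    intro y
    rw [ncard_eq x (fun C hC => ⟨hC.1, hC.2.1⟩), deg]
    congr 1
    refine Finset.filter_congr fun W hW => ?_
    simp only [cubesOn2, Set.mem_ofPred_eq, isCube_mk', AffineSubspace.mem_mk', vsub_eq_sub]
    simp [hW]
  have hGy : ∀ y, (Fx ∩ cubesOn F n y).ncard = (G.filter (fun W => y - x ∈ W)).card := by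
    intro y
    rw [hGdef, Finset.filter_filter]
    refine (ncard_eq x (fun C hC => hFx hC.1)).trans ?_
    congr 1
    ext W
    simp only [Finset.mem_filter]
    refine and_congr_right fun hW => ?_
    simp only [cubesOn, Set.mem_inter_iff, Set.mem_ofPred_eq, isCube_mk', AffineSubspace.mem_mk',
      vsub_eq_sub]
    simp [hW]
  rw [muX, ncard_eq x hFx, hD, ← hGdef] at hη
  -- An empty set of cubes would make the junk quotient `η` vanish.
  have hDpos : 0 < (spaces F (Fin n → F)).card := by
    rw [Nat.pos_iff_ne_zero]
    intro h
    rw [h, Nat.cast_zero, div_zero] at hη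
    linarith
  have hDpos' : (0 : ℝ) < (spaces F (Fin n → F)).card := by exact_mod_cast hDpos
  set Yc : Set (Fin n → F) := {y | y ≠ x ∧ c * η < muXY F n x y (Fx ∩ cubesOn F n y)} with hYc
  set Y : Finset (Fin n → F) := Yc.toFinset.image (fun y => y - x) with hYdef
  have hcard : Yc.ncard = Y.card := by
    rw [hYdef, Finset.card_image_of_injective _ sub_left_injective, Set.ncard_eq_toFinset_card']
  have h := core (F := F) (V := Fin n → F) (by simpa using hn) (G := G) (Finset.filter_subset _ _)
    (Y := Y) (η := η) (c := c) (by
      rw [hYdef, Finset.mem_image]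
      rintro ⟨y, hy, h0⟩
      rw [Set.mem_toFinset] at hy
      exact hy.1 (sub_eq_zero.1 h0)) hηpos hc (by rw [← hη]; field_simp) hDpos (by
      intro z hz
      rw [hYdef, Finset.mem_image] at hz
      obtain ⟨y, hy, rfl⟩ := hz
      rw [Set.mem_toFinset] at hy
      have h2 := hy.2
      rw [muXY, hGy, hd] at h2
      rcases Nat.eq_zero_or_pos (deg F (y - x)) with h0 | h0
      · rw [h0, Nat.cast_zero, mul_zero]
        exact Nat.cast_nonneg _
      · rw [lt_div_iff₀ (by exact_mod_cast h0)] at h2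
        exact h2.le)
  rw [Module.finrank_fin_fun] at h
  have hq := two_le_card (F := F)
  have hc' : 0 < c - 1 := by linarith
  rw [hcard, div_le_div_iff₀ (by positivity) (by positivity)]
  have : (0 : ℝ) < (Fintype.card F : ℝ) ^ n := by positivity
  linarith
end
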